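/- arXiv:1202.4327 — 8 statements merged into one kernel-verified Lean document; each statement's English description precedes it below -/
import Mathlib

section
/- Let g(h) := ∫₀^∞ s^{-4/3} exp(-h³s - 2/(9s)) ds for h ≥ 0. Then: (a) g is twice differentiable on (0,∞) and satisfies the Airy-type equation g''(h) = 2h·g(h) for all h > 0; (b) g(0) = (9/2)^{1/3}·Γ(1/3); (c) g is bounded on [0,∞) and g(h) → 0 as h → ∞; and (d) g(h) = g(0)·u(h) for all h ≥ 0, where u is the normalized Airy function. -/
open Real MeasureTheory Set Filter Topology

noncomputable section

/-- `g h = ∫₀^∞ s^{-4/3} exp(-h³ s - 2/(9s)) ds` -/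
def g (h : ℝ) : ℝ :=
  ∫ s in Ioi (0:ℝ), s ^ (-(4:ℝ)/3) * Real.exp (-(h ^ 3 * s) - 2 / (9 * s))

/-- integrand -/
def kern (a c s : ℝ) : ℝ := s ^ a * Real.exp (-(c * s) - 2 / (9 * s))

def G (a c : ℝ) : ℝ := ∫ s in Ioi (0:ℝ), kern a c s

lemma g_eq (h : ℝ) : g h = G (-(4:ℝ)/3) (h^3) := rfl

lemma kern_meas (a c : ℝ) : Measurable (kern a c) := by
  unfold kern; fun_prop

lemma kern_nonneg (a c : ℝ) {s : ℝ} (hs : 0 < s) : 0 ≤ kern a c s := by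
  unfold kern; positivity

lemma kern_anti (a : ℝ) {c d s : ℝ} (hs : 0 < s) (hcd : c ≤ d) : kern a d s ≤ kern a c s := by
  unfold kern
  have : c * s ≤ d * s := by gcongr
  gcongr

lemma exp_int {a c : ℝ} (ha : -1 < a) (hc : 0 < c) :
    IntegrableOn (fun s : ℝ => s ^ a * Real.exp (-c * s)) (Ioi 0) := by
  simpa using integrableOn_rpow_mul_exp_neg_mul_rpow (p := 1) ha one_pos hc

lemma kern_le (a c : ℝ) {s : ℝ} (hs : 0 < s) : kern a c s ≤ s ^ a * Real.exp (-c * s) := by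
  unfold kern
  have : 0 ≤ 2 / (9 * s) := by positivity
  gcongr
  linarith

lemma kern_int {a c : ℝ} (ha : -1 < a) (hc : 0 < c) : IntegrableOn (kern a c) (Ioi 0) := by
  refine Integrable.mono' (exp_int ha hc) (kern_meas a c).aestronglyMeasurable ?_
  refine (ae_restrict_iff' measurableSet_Ioi).mpr (ae_of_all _ fun s hs => ?_)
  rw [Real.norm_of_nonneg (kern_nonneg a c hs)]
  exact kern_le a c hs

lemma kern_subst {x : ℝ} (hx : 0 < x) :
    (|(-1:ℝ)| * x ^ ((-1:ℝ) - 1)) • ((x ^ (-1:ℝ)) ^ ((1:ℝ)/3 - 1) *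
      Real.exp (-(2/9 * (x ^ (-1:ℝ))))) = kern (-(4:ℝ)/3) 0 x := by
  unfold kern
  rw [← Real.rpow_mul hx.le, smul_eq_mul, abs_neg, abs_one, one_mul, ← mul_assoc,
    ← Real.rpow_add hx, Real.rpow_neg_one]
  congr 2
  · norm_num
  · field_simp; ring

lemma kern0_int : IntegrableOn (kern (-(4:ℝ)/3) 0) (Ioi 0) := by
  have h1 : IntegrableOn (fun y : ℝ => y ^ ((1:ℝ)/3 - 1) * Real.exp (-(2/9 * y))) (Ioi 0) := by
    have := exp_int (a := (1:ℝ)/3 - 1) (c := 2/9) (by norm_num) (by norm_num)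
    simpa only [neg_mul] using this
  have h2 := (integrableOn_Ioi_comp_rpow_iff _ (p := (-1:ℝ)) (by norm_num)).mpr h1
  exact h2.congr_fun (fun x hx => kern_subst hx) measurableSet_Ioi

lemma G_zero : G (-(4:ℝ)/3) 0 = (9/2 : ℝ) ^ ((1:ℝ)/3) * Real.Gamma (1/3) := by
  have h := integral_comp_rpow_Ioi
    (fun y : ℝ => y ^ ((1:ℝ)/3 - 1) * Real.exp (-(2/9 * y))) (p := (-1:ℝ)) (by norm_num)
  rw [Real.integral_rpow_mul_exp_neg_mul_Ioi (by norm_num) (by norm_num)] at h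
  unfold G
  rw [← setIntegral_congr_fun measurableSet_Ioi (fun x hx => kern_subst hx), h]
  norm_num

lemma kern_int' {c : ℝ} (hc : 0 ≤ c) : IntegrableOn (kern (-(4:ℝ)/3) c) (Ioi 0) := by
  refine Integrable.mono' kern0_int (kern_meas _ c).aestronglyMeasurable ?_
  refine (ae_restrict_iff' measurableSet_Ioi).mpr (ae_of_all _ fun s hs => ?_)
  rw [Real.norm_of_nonneg (kern_nonneg _ c hs)]
  exact kern_anti _ hs hc

lemma kern_hasDerivAt (a c : ℝ) {s : ℝ} (hs : 0 < s) :
    HasDerivAt (fun c => kern a c s) (-kern (a+1) c s) c := by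
  unfold kern
  have h1 : HasDerivAt (fun c : ℝ => -(c * s) - 2 / (9 * s)) (-(1 * s)) c :=
    (((hasDerivAt_id c).mul_const s).neg).sub_const _
  refine (h1.exp.const_mul (s ^ a)).congr_deriv ?_
  rw [Real.rpow_add_one hs.ne']; ring

lemma G_hasDerivAt {a c : ℝ} (ha : -1 < a + 1) (hc : 0 < c)
    (hi : IntegrableOn (kern a c) (Ioi 0)) :
    HasDerivAt (G a) (-G (a+1) c) c := by
  have key := (hasDerivAt_integral_of_dominated_loc_of_deriv_le
    (μ := volume.restrict (Ioi (0:ℝ)))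
    (F := fun c s => kern a c s) (F' := fun c s => -kern (a+1) c s)
    (bound := kern (a+1) (c/2)) (x₀ := c) (Ioi_mem_nhds (half_lt_self hc))
    (Eventually.of_forall fun x => (kern_meas a x).aestronglyMeasurable) hi
    (kern_meas (a+1) c).neg.aestronglyMeasurable
    ((ae_restrict_iff' measurableSet_Ioi).mpr (ae_of_all _ fun s hs x hx => by
      rw [norm_neg, Real.norm_of_nonneg (kern_nonneg _ x hs)]
      exact kern_anti _ hs (le_of_lt hx)))
    (kern_int ha (half_pos hc))
    ((ae_restrict_iff' measurableSet_Ioi).mpr (ae_of_all _ fun s hs x hx =>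
      kern_hasDerivAt a x hs))).2
  rw [integral_neg] at key
  exact key

/-- integration by parts identity -/
lemma G_parts {c : ℝ} (hc : 0 < c) :
    (2/3) * G (-(1:ℝ)/3) c - c * G (2/3) c + (2/9) * G (-(4:ℝ)/3) c = 0 := by
  have i1 := kern_int (a := -(1:ℝ)/3) (by norm_num) hc
  have i2 := kern_int (a := (2:ℝ)/3) (by norm_num) hc
  have i3 := kern_int' hc.le
  have hd : ∀ s ∈ Ioi (0:ℝ), HasDerivAt (kern (2/3) c)
      ((2/3) * kern (-(1:ℝ)/3) c s - c * kern (2/3) c s + (2/9) * kern (-(4:ℝ)/3) c s) s := by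
    intro s hs
    have hs : 0 < s := hs
    have e1 : HasDerivAt (fun s : ℝ => s ^ ((2:ℝ)/3)) ((2/3) * s ^ ((2:ℝ)/3 - 1)) s :=
      Real.hasDerivAt_rpow_const (Or.inl hs.ne')
    have e2 : HasDerivAt (fun s : ℝ => -(c * s) - 2 / (9 * s)) (-c + 2 / (9 * s^2)) s := by
      have e3 : HasDerivAt (fun s : ℝ => -(c * s) - (2/9) * s⁻¹)
        (-(c * 1) - (2/9) * (-(s^2)⁻¹)) s :=
        (((hasDerivAt_id s).const_mul c).neg).sub ((hasDerivAt_inv hs.ne').const_mul (2/9))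
      convert e3 using 1
      · funext x; rw [← div_div]; ring
      · field_simp
        ring
    have e4 := e1.mul e2.exp
    unfold kern
    refine e4.congr_deriv ?_
    have p1 : s ^ (-(1:ℝ)/3) = s ^ (-(4:ℝ)/3) * s := by
      rw [← Real.rpow_add_one hs.ne']; norm_num
    have p2 : s ^ ((2:ℝ)/3) = s ^ (-(4:ℝ)/3) * s * s := by
      rw [← p1, ← Real.rpow_add_one hs.ne']; norm_num
    have p3 : s ^ ((2:ℝ)/3 - 1) = s ^ (-(4:ℝ)/3) * s := by
      rw [← p1]; norm_num
    rw [p1, p2, p3]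
    field_simp
    ring
  have hcont : ContinuousWithinAt (kern (2/3) c) (Ici 0) 0 := by
    have h0 : kern (2/3) c 0 = 0 := by
      unfold kern; rw [Real.zero_rpow (by norm_num)]; ring
    unfold ContinuousWithinAt
    rw [h0]
    have hb : Tendsto (fun s : ℝ => s ^ ((2:ℝ)/3)* Real.exp (-c * s)) (𝓝[Ici 0] 0) (𝓝 0) := by
      have : ContinuousAt (fun s : ℝ => s ^ ((2:ℝ)/3) * Real.exp (-c * s)) 0 := by
        refine ContinuousAt.mul ?_ (by fun_prop)
        exact Real.continuousAt_rpow_const _ _ (Or.inr (by norm_num))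
      have h := this.tendsto
      simp only [Real.zero_rpow (show (2:ℝ)/3 ≠ 0 by norm_num), zero_mul] at h
      exact h.mono_left nhdsWithin_le_nhds
    refine tendsto_of_tendsto_of_tendsto_of_le_of_le' tendsto_const_nhds hb ?_ ?_
    all_goals
      filter_upwards [self_mem_nhdsWithin] with s hs
      rcases eq_or_lt_of_le (show (0:ℝ) ≤ s from hs) with h | h
    · rw [← h, h0]
    · exact kern_nonneg _ _ h
    · rw [← h, h0]; positivity
    · exact kern_le _ _ h
  have hlim : Tendsto (kern (2/3) c) atTop (𝓝 0) := by
    refine tendsto_of_tendsto_of_tendsto_of_le_of_le' tendsto_const_nhds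
      (tendsto_rpow_mul_exp_neg_mul_atTop_nhds_zero (2/3) c hc) ?_ ?_
    all_goals filter_upwards [eventually_gt_atTop 0] with s hs
    · exact kern_nonneg _ _ hs
    · exact kern_le _ _ hs
  have h := integral_Ioi_of_hasDerivAt_of_tendsto hcont hd
    (((i1.const_mul _).sub (i2.const_mul _)).add (i3.const_mul _)) hlim
  have j1 : Integrable (fun s => (2/3) * kern (-(1:ℝ)/3) c s) (volume.restrict (Ioi 0)) :=
    i1.const_mul _
  have j2 : Integrable (fun s => c * kern (2/3) c s) (volume.restrict (Ioi 0)) :=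
    i2.const_mul _
  have j3 : Integrable (fun s => (2/9) * kern (-(4:ℝ)/3) c s) (volume.restrict (Ioi 0)) :=
    i3.const_mul _
  have j4 : Integrable (fun s => (2/3) * kern (-(1:ℝ)/3) c s - c * kern (2/3) c s)
    (volume.restrict (Ioi 0)) := j1.sub j2
  rw [integral_add j4 j3, integral_sub j1 j2, integral_const_mul, integral_const_mul,
    integral_const_mul] at h
  have h0 : kern (2/3) c 0 = 0 := by
    unfold kern; rw [Real.zero_rpow (by norm_num)]; ring
  rw [h0, sub_zero] at h
  exact h

lemma g_hasDerivAt {h : ℝ} (hh : 0 < h) :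
    HasDerivAt g (-(3 * h^2) * G (-(1:ℝ)/3) (h^3)) h := by
  have hc : 0 < h^3 := by positivity
  have h1 := G_hasDerivAt (a := -(4:ℝ)/3) (by norm_num) hc (kern_int' hc.le)
  rw [show -(4:ℝ)/3 + 1 = -(1:ℝ)/3 by norm_num] at h1
  have h2 : HasDerivAt (fun x : ℝ => x^3) (3 * h^2) h := by simpa using hasDerivAt_pow 3 h
  have h3 := HasDerivAt.comp (h := fun x : ℝ => x^3) h h1 h2
  refine h3.congr_deriv ?_
  ring

lemma dg_hasDerivAt {h : ℝ} (hh : 0 < h) : HasDerivAt (deriv g) (2 * h * g h) h := by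
  have hc : 0 < h^3 := by positivity
  have h1 := G_hasDerivAt (a := -(1:ℝ)/3) (by norm_num) hc (kern_int (by norm_num) hc)
  rw [show -(1:ℝ)/3 + 1 = (2:ℝ)/3 by norm_num] at h1
  have h2 : HasDerivAt (fun x : ℝ => x^3) (3 * h^2) h := by simpa using hasDerivAt_pow 3 h
  have h3 := HasDerivAt.comp (h := fun x : ℝ => x^3) h h1 h2
  have h4 : HasDerivAt (fun x : ℝ => -(3 * x^2)) (-(3 * (2 * h))) h := by
    refine (((hasDerivAt_pow 2 h).const_mul 3).neg).congr_deriv ?_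
    norm_num
  have h5 := h4.mul h3
  have h6 : deriv g =ᶠ[𝓝 h] (fun x : ℝ => -(3 * x^2)) * (G (-(1:ℝ)/3) ∘ fun x => x^3) := by
    filter_upwards [Ioi_mem_nhds hh] with x hx
    exact (g_hasDerivAt hx).deriv
  refine (h5.congr_of_eventuallyEq h6).congr_deriv ?_
  have h7 := G_parts hc
  rw [g_eq]
  simp only [Function.comp]
  linear_combination (-9 * h) * h7

lemma g_bound_ae {h : ℝ} (hh : 0 ≤ h) : ∀ᵐ s ∂(volume.restrict (Ioi (0:ℝ))),
    ‖kern (-(4:ℝ)/3) (h^3) s‖ ≤ kern (-(4:ℝ)/3) 0 s := by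
  refine (ae_restrict_iff' measurableSet_Ioi).mpr (ae_of_all _ fun s hs => ?_)
  rw [Real.norm_of_nonneg (kern_nonneg _ _ hs)]
  exact kern_anti _ hs (by positivity)

lemma g_contOn : ContinuousOn g (Ici 0) := by
  refine continuousOn_of_dominated (F := fun h s => kern (-(4:ℝ)/3) (h^3) s)
    (bound := kern (-(4:ℝ)/3) 0)
    (fun x _ => (kern_meas _ _).aestronglyMeasurable) (fun x hx => g_bound_ae hx) kern0_int ?_
  refine ae_of_all _ fun s => ?_
  unfold kern
  fun_prop

lemma g_abs_le {h : ℝ} (hh : 0 ≤ h) : |g h| ≤ G (-(4:ℝ)/3) 0 :=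
  norm_integral_le_of_norm_le kern0_int (g_bound_ae hh)

lemma g_lim : Tendsto g atTop (𝓝 0) := by
  have := tendsto_integral_filter_of_dominated_convergence (l := atTop)
    (μ := volume.restrict (Ioi (0:ℝ)))
    (F := fun (h:ℝ) s => kern (-(4:ℝ)/3) (h^3) s) (f := fun _ => (0:ℝ))
    (kern (-(4:ℝ)/3) 0) (Eventually.of_forall fun x => (kern_meas _ _).aestronglyMeasurable)
    (by filter_upwards [eventually_ge_atTop 0] with h hh using g_bound_ae hh) kern0_int
    ((ae_restrict_iff' measurableSet_Ioi).mpr (ae_of_all _ fun s hs => by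
      have hs : 0 < s := hs
      unfold kern
      rw [← mul_zero (s ^ (-(4:ℝ)/3))]
      refine Tendsto.const_mul _ (Real.tendsto_exp_atBot.comp ?_)
      refine tendsto_atBot_add_const_right _ _ (tendsto_neg_atTop_atBot.comp ?_)
      exact (tendsto_pow_atTop (by norm_num)).atTop_mul_const hs))
  rw [integral_zero] at this
  exact this

lemma zero_of_airy {w w' : ℝ → ℝ} (hc : ContinuousOn w (Ici 0)) (h0 : w 0 = 0)
    (hl : Tendsto w atTop (𝓝 0)) (h1 : ∀ h, 0 < h → HasDerivAt w (w' h) h)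
    (h2 : ∀ h, 0 < h → HasDerivAt w' (2 * h * w h) h) {h : ℝ} (hh : 0 ≤ h) : w h = 0 := by
  have hconv : ConvexOn ℝ (Ici (0:ℝ)) (fun x => w x ^ 2) := by
    refine convexOn_of_hasDerivWithinAt2_nonneg (convex_Ici 0) (hc.pow 2)
      (f' := fun x => 2 * (w x * w' x))
      (f'' := fun x => 2 * (w' x * w' x + w x * (2 * x * w x))) ?_ ?_ ?_
    all_goals
      intro x hx
      rw [interior_Ici] at hx
      have hx : 0 < x := hx
    · have := (h1 x hx).pow 2
      refine HasDerivAt.hasDerivWithinAt (this.congr_deriv ?_)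
      norm_num; ring
    · exact (((h1 x hx).mul (h2 x hx)).const_mul 2).hasDerivWithinAt
    · have e : 2 * (w' x * w' x + w x * (2 * x * w x)) = 2 * (w' x)^2 + 4 * x * (w x)^2 := by ring
      rw [e]; positivity
  have hle : ∀ t, h ≤ t → w h ^ 2 ≤ w t ^ 2 := by
    intro t ht
    have := hconv.le_max_of_mem_Icc (x := 0) (y := t) (z := h) (mem_Ici.mpr le_rfl)
      (mem_Ici.mpr (hh.trans ht)) ⟨hh, ht⟩
    rw [h0] at this
    simpa [sq_nonneg] using this
  have hl2 : Tendsto (fun t => w t ^ 2) atTop (𝓝 0) := by simpa using hl.pow 2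
  have := ge_of_tendsto hl2 ((eventually_ge_atTop h).mono hle)
  exact pow_eq_zero_iff (two_ne_zero) |>.mp (le_antisymm this (sq_nonneg _))

/-- `g` satisfies the Airy-type ODE on `(0,∞)`, `g 0 = (9/2)^{1/3} Γ(1/3)`,
`g` is bounded on `[0,∞)` with `g → 0` at `∞`, and `g = g 0 • u` on `[0,∞)`,
where `u` is the normalized Airy function. -/
theorem stmt0
    (u : ℝ → ℝ) (hu_smooth : ContDiff ℝ 2 u)
    (hu_ode : ∀ h : ℝ, deriv (deriv u) h = 2 * h * u h)
    (hu_zero : u 0 = 1)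
    (hu'_zero : deriv u 0 = -((6:ℝ) ^ ((1:ℝ)/3) * Real.Gamma (2/3) / Real.Gamma (1/3)))
    (hu_pos : ∀ h : ℝ, 0 ≤ h → 0 < u h)
    (hu_anti : StrictAntiOn u (Ici 0))
    (hu_lim : Tendsto u atTop (𝓝 0)) :
    ((∀ h : ℝ, 0 < h → DifferentiableAt ℝ g h) ∧
     (∀ h : ℝ, 0 < h → DifferentiableAt ℝ (deriv g) h) ∧
     (∀ h : ℝ, 0 < h → deriv (deriv g) h = 2 * h * g h)) ∧
    g 0 = (9/2 : ℝ) ^ ((1:ℝ)/3) * Real.Gamma (1/3) ∧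
    ((∃ M : ℝ, ∀ h : ℝ, 0 ≤ h → |g h| ≤ M) ∧ Tendsto g atTop (𝓝 0)) ∧
    (∀ h : ℝ, 0 ≤ h → g h = g 0 * u h) := by
  have hg0 : g 0 = G (-(4:ℝ)/3) 0 := by rw [g_eq]; norm_num
  refine ⟨⟨fun h hh => (g_hasDerivAt hh).differentiableAt,
    fun h hh => (dg_hasDerivAt hh).differentiableAt, fun h hh => (dg_hasDerivAt hh).deriv⟩,
    hg0.trans G_zero, ⟨⟨_, fun h hh => g_abs_le hh⟩, g_lim⟩, fun h hh => ?_⟩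
  have hu1 : ∀ x, HasDerivAt u (deriv u x) x := fun x =>
    ((hu_smooth.differentiable (by norm_num)) x).hasDerivAt
  have hdu : Differentiable ℝ (deriv u) := by
    have : ContDiff ℝ 1 (deriv u) := by
      have h2 : ContDiff ℝ (1 + 1) u := by
        rw [one_add_one_eq_two]; exact hu_smooth
      exact (contDiff_succ_iff_deriv.mp h2).2.2
    exact this.differentiable (by norm_num)
  have hu2 : ∀ x, HasDerivAt (deriv u) (2 * x * u x) x := fun x => by
    rw [← hu_ode]; exact (hdu x).hasDerivAt
  have := zero_of_airy (w := fun x => g x - g 0 * u x)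
    (w' := fun x => deriv g x - g 0 * deriv u x)
    (g_contOn.sub (continuous_const.mul hu_smooth.continuous).continuousOn)
    (by simp [hu_zero]) (by simpa using g_lim.sub (hu_lim.const_mul (g 0)))
    (fun x hx => (g_hasDerivAt hx).differentiableAt.hasDerivAt.sub ((hu1 x).const_mul _))
    (fun x hx => ((dg_hasDerivAt hx).sub ((hu2 x).const_mul _)).congr_deriv (by ring)) hh
  linarith
end
end

section
/- If f : [0,∞) → ℝ is continuous, twice continuously differentiable on (0,∞), bounded, satisfies f''(h) = 2h·f(h) for all h > 0, and f(0) = 1, then f(h) = u(h) for all h ≥ 0, where u is the normalized Airy function. In other words, u restricted to [0,∞) is the unique bounded solution of the boundary value problem f'' = 2h·f, f(0) = 1. -/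
open Real MeasureTheory Set Filter Topology

noncomputable section

/-- the normalized Airy function `u` (restricted to `[0,∞)`) is the unique
bounded solution of the boundary value problem `f'' = 2h·f`, `f 0 = 1`. -/
theorem stmt1
    (u : ℝ → ℝ) (hu_smooth : ContDiff ℝ 2 u)
    (hu_ode : ∀ h : ℝ, deriv (deriv u) h = 2 * h * u h)
    (hu_zero : u 0 = 1)
    (hu'_zero : deriv u 0 = -((6:ℝ) ^ ((1:ℝ)/3) * Real.Gamma (2/3) / Real.Gamma (1/3)))
    (hu_pos : ∀ h : ℝ, 0 ≤ h → 0 < u h)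
    (hu_anti : StrictAntiOn u (Ici 0))
    (hu_lim : Tendsto u atTop (𝓝 0))
    (f : ℝ → ℝ)
    (hf_cont : ContinuousOn f (Ici 0))
    (hf_C2 : ContDiffOn ℝ 2 f (Ioi 0))
    (hf_bdd : ∃ M : ℝ, ∀ h : ℝ, 0 ≤ h → |f h| ≤ M)
    (hf_ode : ∀ h : ℝ, 0 < h → deriv (deriv f) h = 2 * h * f h)
    (hf_zero : f 0 = 1) :
    ∀ h : ℝ, 0 ≤ h → f h = u h := by
  obtain ⟨M, hM⟩ := hf_bdd
  -- first and second derivatives of `f` and `u` on the open half line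
  have hf1 : ∀ x : ℝ, 0 < x → HasDerivAt f (deriv f x) x := fun x hx =>
    ((hf_C2.differentiableOn (by norm_num)).differentiableAt (Ioi_mem_nhds hx)).hasDerivAt
  have hf2 : ∀ x : ℝ, 0 < x → HasDerivAt (deriv f) (2 * x * f x) x := fun x hx => by
    have h1 : ContDiffOn ℝ 1 (deriv f) (Ioi 0) :=
      hf_C2.deriv_of_isOpen isOpen_Ioi (by norm_num)
    have h2 := ((h1.differentiableOn (by norm_num)).differentiableAt
      (Ioi_mem_nhds hx)).hasDerivAt
    rwa [hf_ode x hx] at h2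
  have hu1 : ∀ x : ℝ, HasDerivAt u (deriv u x) x := fun x =>
    ((hu_smooth.differentiable (by norm_num)) x).hasDerivAt
  have hu2 : ∀ x : ℝ, HasDerivAt (deriv u) (2 * x * u x) x := fun x => by
    have h1 : ContDiffOn ℝ 1 (deriv u) univ :=
      hu_smooth.contDiffOn.deriv_of_isOpen isOpen_univ (by norm_num)
    have h2 := ((h1.differentiableOn (by norm_num)).differentiableAt
      (univ_mem : univ ∈ 𝓝 x)).hasDerivAt
    rwa [hu_ode x] at h2
  -- the square of the difference is convex
  have hconv : ConvexOn ℝ (Ici (0:ℝ)) (fun x => (f x - u x) ^ 2) := by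
    refine convexOn_of_hasDerivWithinAt2_nonneg (convex_Ici 0)
      (f' := fun x => 2 * (f x - u x) * (deriv f x - deriv u x))
      (f'' := fun x => 2 * (deriv f x - deriv u x) * (deriv f x - deriv u x)
        + 2 * (f x - u x) * (2 * x * f x - 2 * x * u x)) ?_ ?_ ?_ ?_
    · exact (hf_cont.sub hu_smooth.continuous.continuousOn).pow 2
    · intro x hx
      rw [interior_Ici] at hx
      have h := ((hf1 x hx).sub (hu1 x)).pow 2
      refine HasDerivAt.hasDerivWithinAt ?_
      refine h.congr_deriv ?_
      simp
    · intro x hx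
      rw [interior_Ici] at hx
      have h := (((hf1 x hx).sub (hu1 x)).const_mul 2).mul ((hf2 x hx).sub (hu2 x))
      exact h.hasDerivWithinAt
    · intro x hx
      rw [interior_Ici] at hx
      have hx' : (0:ℝ) < x := hx
      have e : 2 * (deriv f x - deriv u x) * (deriv f x - deriv u x)
        + 2 * (f x - u x) * (2 * x * f x - 2 * x * u x)
        = 2 * (deriv f x - deriv u x) ^ 2 + 4 * x * (f x - u x) ^ 2 := by ring
      show 0 ≤ 2 * (deriv f x - deriv u x) * (deriv f x - deriv u x)
        + 2 * (f x - u x) * (2 * x * f x - 2 * x * u x)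
      rw [e]
      positivity
  -- it is bounded
  have hbdd : ∀ x : ℝ, 0 ≤ x → (f x - u x) ^ 2 ≤ (M + 1) ^ 2 := by
    intro x hx
    have h1 := abs_le.1 (hM x hx)
    have h2 := hu_pos x hx
    have h3 : u x ≤ 1 := hu_zero ▸ hu_anti.antitoneOn self_mem_Ici hx hx
    exact sq_le_sq' (by linarith) (by linarith)
  intro h hh
  have key : ∀ n : ℕ, (f h - u h) ^ 2 ≤ (M + 1) ^ 2 * (1 / ((n:ℝ) + 1)) := by
    intro n
    have hn : (0:ℝ) < (n:ℝ) + 1 := by positivity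
    have hy : ((n:ℝ) + 1) * h ∈ Ici (0:ℝ) := mem_Ici.2 (by positivity)
    have ha : 0 ≤ 1 - 1 / ((n:ℝ) + 1) := by
      rw [sub_nonneg, div_le_one hn]
      linarith [(Nat.cast_nonneg n : (0:ℝ) ≤ n)]
    have hb0 : 0 ≤ 1 / ((n:ℝ) + 1) := by positivity
    have h00 : (0:ℝ) ∈ Ici (0:ℝ) := self_mem_Ici
    have hc := hconv.2 h00 hy ha hb0 (by ring)
    have e : (1 / ((n:ℝ) + 1)) * (((n:ℝ) + 1) * h) = h := by field_simp
    simp only [smul_eq_mul, mul_zero, zero_add, e, hf_zero, hu_zero, sub_self] at hc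
    have hb := hbdd (((n:ℝ) + 1) * h) (by positivity)
    have hp : 0 ≤ 1 / ((n:ℝ) + 1) := by positivity
    have := mul_le_mul_of_nonneg_left hb hp
    nlinarith
  have hlim : Tendsto (fun n : ℕ => (M + 1) ^ 2 * (1 / ((n:ℝ) + 1))) atTop (𝓝 ((M + 1) ^ 2 * 0)) :=
    tendsto_one_div_add_atTop_nhds_zero_nat.const_mul _
  have hle := ge_of_tendsto' hlim key
  rw [mul_zero] at hle
  have h0 : (f h - u h) ^ 2 = 0 := le_antisymm hle (sq_nonneg _)
  have := pow_eq_zero_iff (two_ne_zero) |>.1 h0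
  linarith
end
end

section
/- Let u be the normalized Airy function. If ν : [0,∞) → ℝ is twice continuously differentiable, satisfies (u(h)²·(u(h)^{-2}·ν(h))')' = -4·u(h)² for all h > 0, is Lebesgue integrable on [0,∞), and ∫₀^∞ ν(h) dh = 1, then ν(h) = -2·u(h)·u'(h) for all h ≥ 0. (Thus the density of the height H(θ₁) of the true self-repelling motion at an independent exponential time, which satisfies these conditions, equals -2uu' = -(u²)'.) -/
open Real MeasureTheory Set Filter Topology

noncomputable section

/-- the unique integrable solution of `(u²·(u⁻²·ν)')' = -4u²` on `[0,∞)`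
with total integral `1` is `ν = -2·u·u' = -(u²)'`, where `u` is the normalized Airy
function.  (This is the density of the height `H(θ₁)` of the TSRM at an independent
exponential time.) -/
theorem stmt5
    (u : ℝ → ℝ) (hu_smooth : ContDiff ℝ 2 u)
    (hu_ode : ∀ h : ℝ, deriv (deriv u) h = 2 * h * u h)
    (hu_zero : u 0 = 1)
    (hu'_zero : deriv u 0 = -((6:ℝ) ^ ((1:ℝ)/3) * Real.Gamma (2/3) / Real.Gamma (1/3)))
    (hu_pos : ∀ h : ℝ, 0 ≤ h → 0 < u h)
    (hu_anti : StrictAntiOn u (Ici 0))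
    (hu_lim : Tendsto u atTop (𝓝 0))
    (ν : ℝ → ℝ)
    (hν1 : ∀ h : ℝ, 0 ≤ h → DifferentiableAt ℝ ν h)
    (hν2 : ∀ h : ℝ, 0 ≤ h → DifferentiableAt ℝ (deriv ν) h)
    (hν2c : ContinuousOn (deriv (deriv ν)) (Ici 0))
    (hν_ode : ∀ h : ℝ, 0 < h →
      deriv (fun y => (u y) ^ 2 * deriv (fun x => ν x / (u x) ^ 2) y) h = -4 * (u h) ^ 2)
    (hν_int : IntegrableOn ν (Ici 0))
    (hν_one : (∫ h in Ici (0:ℝ), ν h) = 1) :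
    ∀ h : ℝ, 0 ≤ h → ν h = -2 * u h * deriv u h := by
  have hu1 : ∀ h, HasDerivAt u (deriv u h) h := fun h =>
    (hu_smooth.differentiable (by norm_num) h).hasDerivAt
  have hv1 : ∀ h, HasDerivAt (deriv u) (2 * h * u h) h := by
    intro h
    have hd : Differentiable ℝ (deriv u) := by
      have : ContDiff ℝ (1 + 1) u := by
        have e : (1 + 1 : WithTop ℕ∞) = 2 := by norm_num
        rw [e]; exact hu_smooth
      exact ((contDiff_succ_iff_deriv.1 this).2.2).differentiable (by norm_num)
    rw [← hu_ode h]
    exact (hd h).hasDerivAt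
  generalize hvdef : deriv u = v at *
  have hv_nonpos : ∀ h, 0 < h → v h ≤ 0 := by
    intro h hh
    have h1 : derivWithin u (Ici 0) h ≤ 0 := hu_anti.antitoneOn.derivWithin_nonpos
    rw [derivWithin_of_mem_nhds (Ici_mem_nhds hh), hvdef] at h1
    exact h1
  have hr : ∀ h, 0 < h → -v h ≤ (2 * h + 3) * u h := by
    intro h hh
    obtain ⟨η, hη, e1⟩ := exists_hasDerivAt_eq_slope u v (show h < h + 1 by linarith)
      (fun x _ => (hu1 x).continuousAt.continuousWithinAt) (fun x _ => hu1 x)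
    obtain ⟨ξ, hξ, e2⟩ := exists_hasDerivAt_eq_slope v (fun x => 2 * x * u x) hη.1
      (fun x _ => (hv1 x).continuousAt.continuousWithinAt) (fun x _ => hv1 x)
    have p1 := hu_pos (h + 1) (by linarith)
    have p2 := hu_pos h hh.le
    have p3 := hu_pos ξ (by linarith [hξ.1])
    have l1 : u ξ ≤ u h := (hu_anti (mem_Ici.2 hh.le)
      (mem_Ici.2 (by linarith [hξ.1])) hξ.1).le
    have hη1 := hη.1
    have hη2 := hη.2
    have hξ1 := hξ.1
    have hξ2 := hξ.2
    have e1' : v η = u (h + 1) - u h := by rw [e1]; simp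
    have e2' : v η - v h = 2 * ξ * u ξ * (η - h) := by
      have : η - h ≠ 0 := by linarith
      rw [e2]; field_simp
    have b1 : 2 * ξ * u ξ ≤ 2 * (h + 1) * u h := by
      apply mul_le_mul _ l1 p3.le (by linarith)
      linarith
    have b2 : 2 * ξ * u ξ * (η - h) ≤ 2 * (h + 1) * u h * 1 := by
      apply mul_le_mul b1 (by linarith) (by linarith)
      have : 0 < h + 1 := by linarith
      positivity
    nlinarith
  -- the auxiliary quotient
  set q : ℝ → ℝ := fun x => ν x / (u x) ^ 2 with hq
  have hqd : ∀ h, 0 ≤ h → HasDerivAt q (deriv q h) h := by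
    intro h hh
    have := (hu_pos h hh).ne'
    exact ((hν1 h hh).div ((hu1 h).differentiableAt.pow 2) (pow_ne_zero 2 this)).hasDerivAt
  set F : ℝ → ℝ := fun y => (u y) ^ 2 * deriv q y + 2 * (2 * y * u y ^ 2 - v y ^ 2) with hF
  have hFd : ∀ h, 0 < h → HasDerivAt F 0 h := by
    intro h hh
    have hp := hu_pos h hh.le
    have hne : deriv (fun y => (u y) ^ 2 * deriv q y) h ≠ 0 := by
      rw [hν_ode h hh]; have := pow_pos hp 2; linarith
    have h1 := (differentiableAt_of_deriv_ne_zero hne).hasDerivAt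
    rw [hν_ode h hh] at h1
    have h2 := h1.add ((((((hasDerivAt_id h).const_mul 2).mul ((hu1 h).pow 2)).sub
      ((hv1 h).pow 2))).const_mul 2)
    refine h2.congr_deriv ?_
    simp
    ring
  obtain ⟨C, hC⟩ : ∃ C, ∀ h, 0 < h → F h = C := by
    refine ⟨F 1, fun h hh => ?_⟩
    exact (convex_Ioi (0:ℝ)).is_const_of_fderivWithin_eq_zero (𝕜 := ℝ)
      (fun x hx => (hFd x hx).differentiableAt.differentiableWithinAt)
      (fun x hx => by
        rw [fderivWithin_of_isOpen isOpen_Ioi hx]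
        ext; simp [(hFd x hx).deriv]) hh (by simp)
  set g : ℝ → ℝ := fun x => q x + 2 * (v x / u x) with hg
  have hgc : ContinuousOn g (Ici 0) := by
    intro h hh
    have := (hu_pos h hh).ne'
    exact ((hqd h hh).continuousAt.add (((hv1 h).continuousAt.div
      (hu1 h).continuousAt this).const_mul 2)).continuousWithinAt
  have hgd : ∀ h, 0 < h → HasDerivAt g (C / u h ^ 2) h := by
    intro h hh
    have hp := (hu_pos h hh.le).ne'
    have := (hqd h hh.le).add (((hv1 h).div (hu1 h) hp).const_mul 2)
    refine this.congr_deriv ?_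
    rw [← hC h hh, hF]
    field_simp
  have hfg : ∀ h, 0 ≤ h → ν h + 2 * (u h * v h) = u h ^ 2 * g h := by
    intro h hh
    have hp := (hu_pos h hh).ne'
    simp only [hg, hq]
    field_simp
  -- integrability of the derivative of the square
  have hw : ∀ h, HasDerivAt (fun x => u x ^ 2) (2 * (u h * v h)) h := by
    intro h
    refine ((hu1 h).pow 2).congr_deriv ?_
    simp; ring
  have hwlim : Tendsto (fun x => u x ^ 2) atTop (𝓝 0) := by
    simpa using hu_lim.pow 2
  have hwn : ∀ h ∈ Ioi (0:ℝ), 2 * (u h * v h) ≤ 0 := by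
    intro h hh
    have := mul_nonpos_of_nonneg_of_nonpos (hu_pos h (le_of_lt hh)).le (hv_nonpos h hh)
    linarith
  have hwi : IntegrableOn (fun h => 2 * (u h * v h)) (Ioi 0) :=
    integrableOn_Ioi_deriv_of_nonpos' (fun x _ => hw x) hwn hwlim
  have hwI : ∫ h in Ioi (0:ℝ), 2 * (u h * v h) = -1 := by
    rw [integral_Ioi_of_hasDerivAt_of_nonpos' (fun x _ => hw x) hwn hwlim, hu_zero]
    norm_num
  rw [integrableOn_Ici_iff_integrableOn_Ioi] at hν_int
  rw [integral_Ici_eq_integral_Ioi] at hν_one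
  have hfi : IntegrableOn (fun h => ν h + 2 * (u h * v h)) (Ioi 0) := hν_int.add hwi
  have hfI : ∫ h in Ioi (0:ℝ), (ν h + 2 * (u h * v h)) = 0 := by
    rw [integral_add hν_int hwi, hν_one, hwI]; norm_num
  have hC0 : C = 0 := by
    by_contra hCne
    set ψ : ℝ → ℝ := fun x => C⁻¹ * g x - 1 / 20 * (u x ^ 2 * x)⁻¹ with hψ
    have hψd : ∀ h, 0 < h → HasDerivAt ψ
        (1 / u h ^ 2 + 1 / 20 * ((2 * (u h * v h) * h + u h ^ 2) / (u h ^ 2 * h) ^ 2)) h := by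
      intro h hh
      have hp := (hu_pos h hh.le).ne'
      have h1 := ((hgd h hh).const_mul C⁻¹).sub
        ((((hw h).mul (hasDerivAt_id h)).inv (by simp; exact ⟨hp, hh.ne'⟩)).const_mul (1/20))
      refine h1.congr_deriv ?_
      simp
      field_simp
      ring
    have hψl : ∀ h, 1 < h → 1 / 2 ≤ deriv ψ h := by
      intro h hh
      have h0 : 0 < h := by linarith
      rw [(hψd h h0).deriv]
      have hp := hu_pos h h0.le
      have hle : u h ≤ 1 := by
        rw [← hu_zero]
        exact (hu_anti (mem_Ici.2 le_rfl) (mem_Ici.2 h0.le) h0).le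
      have hrh := hr h h0
      have hv5 : -(5 * h * u h) ≤ v h := by nlinarith
      have k1 : -(1 / 2) * (1 / u h ^ 2) ≤
          1 / 20 * ((2 * (u h * v h) * h + u h ^ 2) / (u h ^ 2 * h) ^ 2) := by
        have e : -(1 / 2) * (1 / u h ^ 2) =
            1 / 20 * ((-(10 * h ^ 2 * u h ^ 2)) / (u h ^ 2 * h) ^ 2) := by
          field_simp; norm_num
        rw [e]
        gcongr
        have := mul_le_mul_of_nonneg_left hv5 (mul_pos hp h0).le
        nlinarith [sq_nonneg (u h)]
      have k2 : 1 ≤ 1 / u h ^ 2 := by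
        rw [le_div_iff₀ (by positivity)]
        nlinarith
      linarith
    have hψg : ∀ h, 1 ≤ h → 1 / 2 * (h - 1) ≤ ψ h - ψ 1 := by
      intro h hh
      refine (convex_Ici (1:ℝ)).mul_sub_le_image_sub_of_le_deriv
        (fun x hx => (hψd x (by linarith [mem_Ici.1 hx])).continuousAt.continuousWithinAt)
        (fun x hx => ?_) (fun x hx => ?_) 1 (by simp) h hh hh
      · rw [interior_Ici] at hx
        exact (hψd x (by linarith [mem_Ioi.1 hx])).differentiableAt.differentiableWithinAt
      · rw [interior_Ici] at hx
        exact hψl x hx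
    set A : ℝ := 1 + 2 * |ψ 1| with hA
    have hA1 : 1 ≤ A := by have := abs_nonneg (ψ 1); linarith
    have hbig : ∀ h ∈ Ioi A, h⁻¹ ≤ 20 * (C⁻¹ * (ν h + 2 * (u h * v h))) := by
      intro h hh
      have hh' : A < h := hh
      have h0 : 0 < h := by linarith
      have hp := hu_pos h h0.le
      have h1 := hψg h (by linarith)
      have h2 := neg_abs_le (ψ 1)
      have h3 : 0 ≤ ψ h := by linarith
      have h4 := mul_nonneg (pow_pos hp 2).le h3
      rw [hfg h h0.le]
      have h5 : u h ^ 2 * ψ h = C⁻¹ * (u h ^ 2 * g h) - 1 / 20 * h⁻¹ := by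
        simp only [hψ]
        field_simp
      linarith
    have hfA : IntegrableOn (fun h => 20 * (C⁻¹ * (ν h + 2 * (u h * v h)))) (Ioi A) :=
      ((hfi.mono_set (Ioi_subset_Ioi (by linarith))).const_mul C⁻¹).const_mul 20
    apply not_integrableOn_Ioi_inv (a := A)
    refine Integrable.mono' hfA (by fun_prop) ?_
    refine (ae_restrict_iff' measurableSet_Ioi).2 (ae_of_all _ fun h hh => ?_)
    have hh' : A < h := hh
    rw [Real.norm_of_nonneg (by have : 0 < h := by linarith
                                positivity)]
    exact hbig h hh
  have hgconst : ∀ h, 0 ≤ h → g h = g 0 := by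
    intro h hh
    rcases hh.eq_or_lt with rfl | hlt
    · rfl
    obtain ⟨ξ, hξ, e⟩ := exists_hasDerivAt_eq_slope g (fun x => C / u x ^ 2) hlt
      (hgc.mono Icc_subset_Ici_self) (fun x hx => hgd x hx.1)
    rw [hC0, zero_div, eq_comm, div_eq_zero_iff] at e
    rcases e with e | e <;> linarith
  have hz : g 0 = 0 := by
    by_contra hne
    have e1 : ∫ h in Ioi (0:ℝ), (ν h + 2 * (u h * v h)) = ∫ h in Ioi (0:ℝ), g 0 * u h ^ 2 := by
      refine setIntegral_congr_fun measurableSet_Ioi fun h hh => ?_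
      have hh' : (0:ℝ) ≤ h := le_of_lt hh
      simp only [hfg h hh', hgconst h hh']
      ring
    have hi : IntegrableOn (fun h => u h ^ 2) (Ioi 0) := by
      have : IntegrableOn (fun h => (g 0)⁻¹ * (ν h + 2 * (u h * v h))) (Ioi 0) :=
        hfi.const_mul _
      refine this.congr_fun (fun h hh => ?_) measurableSet_Ioi
      have hh' : (0:ℝ) ≤ h := le_of_lt hh
      simp only [hfg h hh', hgconst h hh']
      field_simp
    rw [hfI, integral_const_mul] at e1
    have hpos : 0 < ∫ h in Ioi (0:ℝ), u h ^ 2 := by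
      rw [setIntegral_pos_iff_support_of_nonneg_ae (ae_of_all _ fun h => sq_nonneg _) hi]
      have : Function.support (fun h => u h ^ 2) ∩ Ioi 0 = Ioi 0 := by
        apply inter_eq_right.2
        intro h hh
        exact (pow_pos (hu_pos h (le_of_lt hh)) 2).ne'
      rw [this]; simp
    have := mul_ne_zero hne hpos.ne'
    exact this e1.symm
  intro h hh
  have := hfg h hh
  rw [hgconst h hh, hz] at this
  linarith
end
end

section
/- Let u be the normalized Airy function and let ν₂(h) := (2·6^{1/3}·√π/Γ(1/3)²)·e^{-8h³/9}·U(1/6, 2/3; 8h³/9) for h ≥ 0. Then for every h ≥ 0: ∫₀^∞ e^{-t}·t^{-1/3}·ν₂(t^{-1/3}·h) dt = -2·u(h)·u'(h). (This identity expresses that ν₂ is the density of the height H(1) of the true self-repelling motion at time 1, whose mixture over an exponential time has density -(u²)'.) -/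
open Real MeasureTheory Set Filter Topology

noncomputable section

/-- Confluent hypergeometric function of the second kind (Tricomi function),
via its integral representation. -/
def tricomiU (a b z : ℝ) : ℝ :=
  (1 / Real.Gamma a) * ∫ s in Ioi (0:ℝ), Real.exp (-z * s) * s ^ (a - 1) * (1 + s) ^ (b - a - 1)

/-- The density of the height `H(1)` of the TSRM at time `1`. -/
def nu2 (h : ℝ) : ℝ :=
  (2 * (6:ℝ) ^ ((1:ℝ)/3) * Real.sqrt π / (Real.Gamma (1/3)) ^ 2) *
    Real.exp (-8 * h ^ 3 / 9) * tricomiU (1/6) (2/3) (8 * h ^ 3 / 9)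

/-- Bessel-type integral. -/
def bes (a x : ℝ) : ℝ := ∫ t in Ioi (0:ℝ), Real.exp (-t - x / t) * t ^ a

theorem gam_int {a : ℝ} (ha : -1 < a) :
    IntegrableOn (fun t : ℝ => Real.exp (-t) * t ^ a) (Ioi 0) := by
  have h := Real.GammaIntegral_convergent (s := a + 1) (by linarith)
  simpa using h

theorem bes_int0 {a x : ℝ} (ha : -1 < a) (hx : 0 ≤ x) :
    IntegrableOn (fun t : ℝ => Real.exp (-t - x / t) * t ^ a) (Ioi 0) := by
  refine Integrable.mono' (gam_int ha) (by fun_prop) ?_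
  refine (ae_restrict_iff' measurableSet_Ioi).2 (ae_of_all _ fun t ht => ?_)
  have ht : 0 < t := ht
  rw [Real.norm_of_nonneg (by positivity)]
  gcongr
  have : 0 ≤ x / t := by positivity
  linarith

theorem exp_bd {y : ℝ} (hy : 0 < y) : Real.exp (-y) ≤ 1 / y := by
  rw [Real.exp_neg, ← one_div]
  apply one_div_le_one_div_of_le hy
  linarith [Real.add_one_le_exp y]

theorem bes_int {a x : ℝ} (ha : -2 < a) (hx : 0 < x) :
    IntegrableOn (fun t : ℝ => Real.exp (-t - x / t) * t ^ a) (Ioi 0) := by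
  refine Integrable.mono' ((gam_int (a := a + 1) (by linarith)).const_mul (1 / x)) (by fun_prop) ?_
  refine (ae_restrict_iff' measurableSet_Ioi).2 (ae_of_all _ fun t ht => ?_)
  have ht : 0 < t := ht
  rw [Real.norm_of_nonneg (by positivity), sub_eq_add_neg, Real.exp_add, Real.rpow_add_one ht.ne']
  have h1 : Real.exp (-(x / t)) ≤ t / x := by
    have := exp_bd (y := x / t) (by positivity)
    simpa using this
  calc Real.exp (-t) * Real.exp (-(x / t)) * t ^ a ≤ Real.exp (-t) * (t / x) * t ^ a := by gcongr
    _ = _ := by field_simp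

theorem bes_deriv {a x : ℝ} (ha : -1 < a) (hx : 0 < x) :
    HasDerivAt (bes a) (-bes (a - 1) x) x := by
  have key := (hasDerivAt_integral_of_dominated_loc_of_deriv_le
    (μ := volume.restrict (Ioi (0:ℝ)))
    (F := fun x t : ℝ => Real.exp (-t - x / t) * t ^ a)
    (F' := fun x t : ℝ => -(Real.exp (-t - x / t) * t ^ (a - 1)))
    (bound := fun t : ℝ => Real.exp (-t - (x / 2) / t) * t ^ (a - 1))
    (x₀ := x) (s := Ioi (x / 2)) (Ioi_mem_nhds (by linarith))
    (Eventually.of_forall fun y => by fun_prop)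
    (bes_int0 ha hx.le) (by fun_prop) ?_ (bes_int (by linarith) (by linarith)) ?_).2
  · rw [integral_neg] at key
    exact key
  · refine (ae_restrict_iff' measurableSet_Ioi).2 (ae_of_all _ fun t ht y hy => ?_)
    have ht : 0 < t := ht
    have hy : x / 2 < y := hy
    rw [norm_neg, Real.norm_of_nonneg (by positivity)]
    gcongr
  · refine (ae_restrict_iff' measurableSet_Ioi).2 (ae_of_all _ fun t ht y hy => ?_)
    have ht : 0 < t := ht
    have h1 : HasDerivAt (fun y : ℝ => -t - y / t) (-(1 / t)) y := by
      simpa using ((hasDerivAt_id y).div_const t).const_sub (-t)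
    have h2 := (h1.exp).mul_const (t ^ a)
    refine h2.congr_deriv ?_
    rw [Real.rpow_sub_one ht.ne']
    field_simp

theorem bes_cont {a : ℝ} (ha : -1 < a) : ContinuousOn (bes a) (Ici 0) := by
  intro x hx
  refine continuousWithinAt_of_dominated (bound := fun t : ℝ => Real.exp (-t) * t ^ a)
    (Eventually.of_forall fun y => by fun_prop) ?_ (gam_int ha) ?_
  · filter_upwards [self_mem_nhdsWithin] with y hy
    refine (ae_restrict_iff' measurableSet_Ioi).2 (ae_of_all _ fun t ht => ?_)
    have ht : 0 < t := ht
    have hy : 0 ≤ y := hy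
    rw [Real.norm_of_nonneg (by positivity)]
    gcongr
    have : 0 ≤ y / t := by positivity
    linarith
  · refine ae_of_all _ fun t => ?_
    apply Continuous.continuousWithinAt
    fun_prop

theorem bes_zero {a : ℝ} (ha : -1 < a) : bes a 0 = Real.Gamma (a + 1) := by
  rw [Real.Gamma_eq_integral (by linarith)]
  simp [bes]

theorem image_inv {x : ℝ} (hx : 0 < x) : (fun t : ℝ => x / t) '' Ioi 0 = Ioi 0 := by
  ext y
  constructor
  · rintro ⟨t, ht, rfl⟩
    have ht : 0 < t := ht
    exact div_pos hx ht
  · intro hy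
    have hy : 0 < y := hy
    exact ⟨x / y, div_pos hx hy, by field_simp⟩

theorem bes_inv {x : ℝ} (a : ℝ) (hx : 0 < x) : bes a x = x ^ (a + 1) * bes (-a - 2) x := by
  have h := integral_image_eq_integral_abs_deriv_smul (s := Ioi (0:ℝ)) (f := fun t : ℝ => x / t)
    (f' := fun t => -(x / t ^ 2)) measurableSet_Ioi
    (fun t ht => by
      have ht : t ≠ 0 := ne_of_gt ht
      have := ((hasDerivAt_inv ht).const_mul x).hasDerivWithinAt (s := Ioi 0)
      refine this.congr_deriv ?_
      field_simp)
    (fun t ht s hs hts => by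
      have ht : 0 < t := ht
      have hs : 0 < s := hs
      simp only at hts
      field_simp at hts
      exact hts.symm)
    (fun t : ℝ => Real.exp (-t - x / t) * t ^ a)
  rw [image_inv hx] at h
  unfold bes
  rw [h, ← integral_const_mul]
  refine setIntegral_congr_fun measurableSet_Ioi fun t ht => ?_
  have ht : 0 < t := ht
  simp only [smul_eq_mul]
  rw [abs_neg, abs_of_nonneg (by positivity), Real.div_rpow hx.le ht.le, Real.rpow_add_one hx.ne']
  have e1 : -(x / t) - x / (x / t) = -t - x / t := by field_simp; ring
  have e2 : t ^ (-a - 2) = (t ^ a)⁻¹ * (t ^ 2)⁻¹ := by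
    rw [Real.rpow_sub ht, Real.rpow_neg ht.le]
    norm_cast
  rw [e1, e2]
  field_simp

/-- The cube root of 2/9. -/
def kap : ℝ := (2 / 9 : ℝ) ^ ((1:ℝ) / 3)

theorem kap_pos : 0 < kap := by unfold kap; positivity

theorem kap_cube : kap ^ 3 = 2 / 9 := by
  unfold kap
  rw [← Real.rpow_natCast, ← Real.rpow_mul (by norm_num)]
  norm_num

theorem six_root : (6:ℝ) ^ ((1:ℝ) / 3) = 3 * kap := by
  have h : (6:ℝ) = (3 * kap) ^ 3 := by rw [mul_pow, kap_cube]; norm_num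
  have hk := kap_pos
  rw [h, ← Real.rpow_natCast, ← Real.rpow_mul (by positivity)]
  norm_num

theorem cube_rpow {h : ℝ} (hh : 0 < h) (a b : ℝ) (hab : 3 * a = b) : (h ^ 3) ^ a = h ^ b := by
  rw [← Real.rpow_natCast, ← Real.rpow_mul hh.le, ← hab]
  norm_num

theorem arg_eq (h : ℝ) : 2 / 9 * h ^ 3 = (kap * h) ^ 3 := by rw [mul_pow, kap_cube]

theorem A_deriv {h : ℝ} (hh : 0 < h) :
    HasDerivAt (fun h => bes (-2 / 3) (2 / 9 * h ^ 3)) (-(3 * kap) * bes (-1 / 3) (2 / 9 * h ^ 3)) h := by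
  have hk := kap_pos
  have h1 : HasDerivAt (fun h : ℝ => 2 / 9 * h ^ 3) (2 / 9 * (3 * h ^ 2)) h := by
    simpa using (hasDerivAt_pow 3 h).const_mul (2 / 9 : ℝ)
  have h2 := (bes_deriv (a := -2 / 3) (x := 2 / 9 * h ^ 3) (by norm_num) (by positivity)).comp h h1
  refine h2.congr_deriv ?_
  rw [bes_inv (-2 / 3 - 1) (by positivity)]
  have e : (2 / 9 * h ^ 3) ^ ((-2 / 3 - 1 + 1 : ℝ)) = ((kap * h) ^ 2)⁻¹ := by
    rw [arg_eq, cube_rpow (by positivity) _ (-2) (by norm_num), Real.rpow_neg (by positivity)]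
    norm_cast
  rw [e, show (-(-2 / 3 - 1) - 2 : ℝ) = -1 / 3 by norm_num]
  have := kap_cube
  rw [← this]
  field_simp

theorem B_deriv {h : ℝ} (hh : 0 < h) :
    HasDerivAt (fun h => bes (-1 / 3) (2 / 9 * h ^ 3))
      (-(3 * kap ^ 2 * h) * bes (-2 / 3) (2 / 9 * h ^ 3)) h := by
  have hk := kap_pos
  have h1 : HasDerivAt (fun h : ℝ => 2 / 9 * h ^ 3) (2 / 9 * (3 * h ^ 2)) h := by
    simpa using (hasDerivAt_pow 3 h).const_mul (2 / 9 : ℝ)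
  have h2 := (bes_deriv (a := -1 / 3) (x := 2 / 9 * h ^ 3) (by norm_num) (by positivity)).comp h h1
  refine h2.congr_deriv ?_
  rw [bes_inv (-1 / 3 - 1) (by positivity)]
  have e : (2 / 9 * h ^ 3) ^ ((-1 / 3 - 1 + 1 : ℝ)) = (kap * h)⁻¹ := by
    rw [arg_eq, cube_rpow (by positivity) _ (-1) (by norm_num), Real.rpow_neg (by positivity)]
    norm_num
  rw [e, show (-(-1 / 3 - 1) - 2 : ℝ) = -2 / 3 by norm_num]
  have := kap_cube
  rw [← this]
  field_simp

theorem A_cont (a : ℝ) (ha : -1 < a) :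
    ContinuousOn (fun h : ℝ => bes a (2 / 9 * h ^ 3)) (Ici 0) := by
  refine (bes_cont ha).comp (by fun_prop) fun h hh => ?_
  have hh : 0 ≤ h := hh
  show 0 ≤ 2 / 9 * h ^ 3
  positivity

theorem const_of_deriv {f : ℝ → ℝ} (hc : ContinuousOn f (Ici 0))
    (hd : ∀ x, 0 < x → HasDerivAt f 0 x) {x : ℝ} (hx : 0 ≤ x) : f x = f 0 := by
  rcases hx.eq_or_lt with rfl | hx
  · rfl
  obtain ⟨c, -, h⟩ := exists_hasDerivAt_eq_slope f (fun _ => 0) hx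
    (hc.mono Icc_subset_Ici_self) fun y hy => hd y hy.1
  have := (eq_div_iff (by linarith)).1 h
  linarith

theorem airy_id (u : ℝ → ℝ) (hu_smooth : ContDiff ℝ 2 u)
    (hu_ode : ∀ h : ℝ, deriv (deriv u) h = 2 * h * u h)
    (hu_zero : u 0 = 1)
    (hu'_zero : deriv u 0 = -((6:ℝ) ^ ((1:ℝ)/3) * Real.Gamma (2/3) / Real.Gamma (1/3)))
    (hu_pos : ∀ h : ℝ, 0 ≤ h → 0 < u h) {h : ℝ} (hh : 0 < h) :
    bes (-2 / 3) (2 / 9 * h ^ 3) = Real.Gamma (1 / 3) * u h ∧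
    3 * kap * bes (-1 / 3) (2 / 9 * h ^ 3) = -(Real.Gamma (1 / 3) * deriv u h) := by
  have hu1 : ∀ x, HasDerivAt u (deriv u x) x := fun x =>
    (hu_smooth.differentiable (by norm_num) x).hasDerivAt
  have hcd : ContDiff ℝ 1 (deriv u) := by
    have : ContDiff ℝ (1 + 1) u := by simpa [one_add_one_eq_two] using hu_smooth
    exact (contDiff_succ_iff_deriv.1 this).2.2
  have hu2 : ∀ x, HasDerivAt (deriv u) (2 * x * u x) x := fun x => by
    rw [← hu_ode]
    exact (hcd.differentiable (by norm_num) x).hasDerivAt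
  have hA0 : bes (-2 / 3) (2 / 9 * 0 ^ 3) = Real.Gamma (1 / 3) := by
    rw [show (2 / 9 * 0 ^ 3 : ℝ) = 0 by norm_num, bes_zero (by norm_num)]; norm_num
  have hB0 : bes (-1 / 3) (2 / 9 * 0 ^ 3) = Real.Gamma (2 / 3) := by
    rw [show (2 / 9 * 0 ^ 3 : ℝ) = 0 by norm_num, bes_zero (by norm_num)]; norm_num
  have hG : 0 < Real.Gamma (1 / 3) := Real.Gamma_pos_of_pos (by norm_num)
  have hAc := A_cont (-2 / 3) (by norm_num)
  have hBc := A_cont (-1 / 3) (by norm_num)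
  have huc : ContinuousOn u (Ici 0) := hu_smooth.continuous.continuousOn
  have hW : ∀ x, 0 ≤ x → deriv u x * bes (-2 / 3) (2 / 9 * x ^ 3)
      + u x * (3 * kap * bes (-1 / 3) (2 / 9 * x ^ 3)) = 0 := by
    intro x hx
    have := const_of_deriv (f := fun x => deriv u x * bes (-2 / 3) (2 / 9 * x ^ 3)
      + u x * (3 * kap * bes (-1 / 3) (2 / 9 * x ^ 3)))
      ((hcd.continuous.continuousOn.mul hAc).add (huc.mul (continuousOn_const.mul hBc)))
      (fun y hy => by
        have := ((hu2 y).mul (A_deriv hy)).add ((hu1 y).mul ((B_deriv hy).const_mul (3 * kap)))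
        refine this.congr_deriv ?_
        linear_combination (-9) * y * u y * bes (-2 / 3) (2 / 9 * y ^ 3) * kap_cube) hx
    beta_reduce at this
    rw [this, hA0, hB0, hu_zero, hu'_zero, six_root]
    field_simp
    ring
  have hq : ∀ x, 0 ≤ x → bes (-2 / 3) (2 / 9 * x ^ 3) / u x = Real.Gamma (1 / 3) := by
    intro x hx
    have := const_of_deriv (f := fun x => bes (-2 / 3) (2 / 9 * x ^ 3) / u x)
      (hAc.div huc fun y hy => (hu_pos y hy).ne')
      (fun y hy => by
        have := (A_deriv hy).div (hu1 y) (hu_pos y hy.le).ne'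
        refine this.congr_deriv ?_
        have h3 := hW y hy.le
        rw [div_eq_zero_iff]
        left
        linarith) hx
    beta_reduce at this
    rw [this, hA0, hu_zero, div_one]
  have h1 := hq h hh.le
  have hup := hu_pos h hh.le
  rw [div_eq_iff hup.ne'] at h1
  refine ⟨h1, ?_⟩
  have h2 := hW h hh.le
  rw [h1] at h2
  apply mul_left_cancel₀ hup.ne'
  linarith

theorem lscale {c : ℝ} (hc : 0 < c) (f : ℝ → ENNReal) :
    ∫⁻ x in Ioi (0:ℝ), f x = ENNReal.ofReal c * ∫⁻ x in Ioi (0:ℝ), f (c * x) := by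
  have h := lintegral_image_eq_lintegral_abs_deriv_mul (s := Ioi (0:ℝ)) (f := fun x => c * x)
    (f' := fun _ => c) measurableSet_Ioi
    (fun x _ => by simpa using ((hasDerivAt_id x).const_mul c).hasDerivWithinAt)
    (fun x _ y _ hxy => mul_left_cancel₀ hc.ne' hxy) f
  have hi : (fun x => c * x) '' Ioi 0 = Ioi 0 := by
    ext y
    constructor
    · rintro ⟨t, ht, rfl⟩
      exact mul_pos hc ht
    · intro hy
      exact ⟨y / c, div_pos hy hc, by field_simp⟩
  rw [hi, lintegral_const_mul' _ _ (by simp), abs_of_pos hc] at h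
  exact h

theorem lgam {a c : ℝ} (ha : 0 < a) (hc : 0 < c) :
    ∫⁻ t in Ioi (0:ℝ), ENNReal.ofReal (Real.exp (-(c * t)) * t ^ (a - 1)) =
      ENNReal.ofReal (c ^ (-a) * Real.Gamma a) := by
  have h1 := Real.integral_rpow_mul_exp_neg_mul_Ioi ha hc
  have h2 : IntegrableOn (fun t : ℝ => t ^ (a - 1) * Real.exp (-(c * t))) (Ioi 0) := by
    have := integrableOn_rpow_mul_exp_neg_mul_rpow (p := 1) (s := a - 1) (b := c)
      (by linarith) one_pos hc
    simpa using this
  rw [one_div, Real.inv_rpow hc.le, ← Real.rpow_neg hc.le] at h1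
  rw [← h1, ofReal_integral_eq_lintegral_ofReal h2]
  · simp only [mul_comm]
  · refine (ae_restrict_iff' measurableSet_Ioi).2 (ae_of_all _ fun t ht => ?_)
    have ht : 0 < t := ht
    show 0 ≤ _
    positivity

theorem kummer0 {z : ℝ} (hz : 0 ≤ z) :
    ENNReal.ofReal (Real.sqrt π) * ∫⁻ s in Ioi (0:ℝ),
      ENNReal.ofReal (Real.exp (-z * s) * s ^ ((1:ℝ)/6 - 1) * (1 + s) ^ ((2:ℝ)/3 - 1/6 - 1)) =
    ENNReal.ofReal (Real.Gamma (1/6)) * ∫⁻ r in Ioi (0:ℝ),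
      ENNReal.ofReal (Real.exp (-r) * r ^ ((1:ℝ)/2 - 1) * (z + r) ^ (-(1:ℝ)/6)) := by
  have hG : 0 < Real.Gamma (1/6) := Real.Gamma_pos_of_pos (by norm_num)
  have hsw := lintegral_lintegral_swap (μ := volume.restrict (Ioi (0:ℝ)))
    (ν := volume.restrict (Ioi (0:ℝ)))
    (f := fun s r : ℝ => ENNReal.ofReal (Real.exp (-(z + r) * s - r) * s ^ ((1:ℝ)/6 - 1)
      * r ^ ((1:ℝ)/2 - 1))) (by fun_prop)
  rw [← lintegral_const_mul' _ _ (by simp), ← lintegral_const_mul' _ _ (by simp)]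
  refine Eq.trans ?_ (hsw.trans ?_)
  · refine setLIntegral_congr_fun measurableSet_Ioi fun s hs => ?_
    have hs : 0 < s := hs
    have e := lgam (a := 1/2) (c := 1 + s) (by norm_num) (by linarith)
    have e2 : ∀ r, ENNReal.ofReal (Real.exp (-(z + r) * s - r) * s ^ ((1:ℝ)/6 - 1)
      * r ^ ((1:ℝ)/2 - 1)) = ENNReal.ofReal (Real.exp (-z * s) * s ^ ((1:ℝ)/6 - 1)) *
        ENNReal.ofReal (Real.exp (-((1 + s) * r)) * r ^ ((1:ℝ)/2 - 1)) := fun r => by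
      rw [← ENNReal.ofReal_mul (by positivity)]
      congr 1
      rw [show -(z + r) * s - r = -z * s + -((1 + s) * r) by ring, Real.exp_add]
      ring
    simp only [e2]
    rw [lintegral_const_mul' _ _ (by simp), e, ← ENNReal.ofReal_mul (by positivity),
      ← ENNReal.ofReal_mul (by positivity), Real.Gamma_one_half_eq]
    congr 1
    norm_num
    ring
  · refine setLIntegral_congr_fun measurableSet_Ioi fun r hr => ?_
    have hr : 0 < r := hr
    have e := lgam (a := 1/6) (c := z + r) (by norm_num) (by linarith)
    have e2 : ∀ s, ENNReal.ofReal (Real.exp (-(z + r) * s - r) * s ^ ((1:ℝ)/6 - 1)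
      * r ^ ((1:ℝ)/2 - 1)) = ENNReal.ofReal (Real.exp (-r) * r ^ ((1:ℝ)/2 - 1)) *
        ENNReal.ofReal (Real.exp (-((z + r) * s)) * s ^ ((1:ℝ)/6 - 1)) := fun s => by
      rw [← ENNReal.ofReal_mul (by positivity)]
      congr 1
      rw [show -(z + r) * s - r = -r + -((z + r) * s) by ring, Real.exp_add]
      ring
    simp only [e2]
    rw [lintegral_const_mul' _ _ (by simp), e, ← ENNReal.ofReal_mul (by positivity),
      ← ENNReal.ofReal_mul (by positivity), show (-(1:ℝ) / 6) = -(1/6) by norm_num]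
    congr 1
    ring

theorem kummer1 {z : ℝ} (hz : 0 < z) :
    ∫⁻ r in Ioi (0:ℝ),
      ENNReal.ofReal (Real.exp (-r) * r ^ ((1:ℝ)/2 - 1) * (z + r) ^ (-(1:ℝ)/6)) =
    ENNReal.ofReal (z ^ ((1:ℝ)/3)) * ∫⁻ s in Ioi (0:ℝ),
      ENNReal.ofReal (Real.exp (-z * s) * s ^ (-(1:ℝ)/2) * (1 + s) ^ (-(1:ℝ)/6)) := by
  rw [lscale hz, ← lintegral_const_mul' _ _ (by simp), ← lintegral_const_mul' _ _ (by simp)]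
  refine setLIntegral_congr_fun measurableSet_Ioi fun s hs => ?_
  have hs : 0 < s := hs
  beta_reduce
  rw [← ENNReal.ofReal_mul (by positivity), ← ENNReal.ofReal_mul (by positivity)]
  congr 1
  rw [show z + z * s = z * (1 + s) by ring, Real.mul_rpow hz.le hs.le,
    Real.mul_rpow hz.le (by positivity : 0 ≤ 1 + s), show ((1:ℝ)/2 - 1) = -(1:ℝ)/2 by norm_num]
  have : z ^ ((1:ℝ)/3) = z * z ^ (-(1:ℝ)/2) * z ^ (-(1:ℝ)/6) := by
    nth_rw 2 [← Real.rpow_one z]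
    rw [← Real.rpow_add hz, ← Real.rpow_add hz]
    norm_num
  rw [this, show -(z * s) = -z * s by ring]
  ring

theorem tricomi_eq {z : ℝ} (hz : 0 ≤ z) :
    tricomiU (1/6) (2/3) z = (Real.sqrt π)⁻¹ * (∫⁻ r in Ioi (0:ℝ),
      ENNReal.ofReal (Real.exp (-r) * r ^ ((1:ℝ)/2 - 1) * (z + r) ^ (-(1:ℝ)/6))).toReal := by
  have hG : 0 < Real.Gamma (1/6) := Real.Gamma_pos_of_pos (by norm_num)
  have hp : 0 < Real.sqrt π := Real.sqrt_pos.2 Real.pi_pos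
  have h := congrArg ENNReal.toReal (kummer0 hz)
  rw [ENNReal.toReal_mul, ENNReal.toReal_mul, ENNReal.toReal_ofReal hp.le,
    ENNReal.toReal_ofReal hG.le] at h
  unfold tricomiU
  rw [integral_eq_lintegral_of_nonneg_ae _ (by fun_prop)]
  · rw [one_div_mul_eq_div, inv_mul_eq_div, div_eq_div_iff hG.ne' hp.ne']
    rw [mul_comm, h, mul_comm]
  · refine (ae_restrict_iff' measurableSet_Ioi).2 (ae_of_all _ fun t ht => ?_)
    have ht : 0 < t := ht
    show 0 ≤ _
    positivity

/-- The inner integral. -/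
def innerS (y : ℝ) : ENNReal := ∫⁻ s in Ioi (0:ℝ),
  ENNReal.ofReal (Real.exp (-(4 * y * (1 + s))) * s ^ (-(1:ℝ)/2) * (1 + s) ^ (-(1:ℝ)/6))

theorem nu2_eq {x : ℝ} (hx : 0 < x) :
    nu2 x = (ENNReal.ofReal (2 * (3 * kap) / (Real.Gamma (1/3)) ^ 2 * kap * x) *
      (ENNReal.ofReal ((4:ℝ) ^ ((1:ℝ)/3)) * innerS (2 / 9 * x ^ 3))).toReal := by
  have hk := kap_pos
  have hp : 0 < Real.sqrt π := Real.sqrt_pos.2 Real.pi_pos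
  have hz : 0 < 8 * x ^ 3 / 9 := by positivity
  have e1 : innerS (2 / 9 * x ^ 3) = ENNReal.ofReal (Real.exp (-8 * x ^ 3 / 9)) *
      ∫⁻ s in Ioi (0:ℝ), ENNReal.ofReal (Real.exp (-(8 * x ^ 3 / 9) * s) * s ^ (-(1:ℝ)/2)
        * (1 + s) ^ (-(1:ℝ)/6)) := by
    unfold innerS
    rw [← lintegral_const_mul' _ _ (by simp)]
    refine setLIntegral_congr_fun measurableSet_Ioi fun s hs => ?_
    have hs : 0 < s := hs
    beta_reduce
    rw [← ENNReal.ofReal_mul (by positivity)]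
    congr 1
    rw [show -(4 * (2 / 9 * x ^ 3) * (1 + s)) = -8 * x ^ 3 / 9 + -(8 * x ^ 3 / 9) * s by ring,
      Real.exp_add]
    ring
  have e2 : (8 * x ^ 3 / 9) ^ ((1:ℝ)/3) = (4:ℝ) ^ ((1:ℝ)/3) * (kap * x) := by
    rw [show 8 * x ^ 3 / 9 = 4 * (2 / 9 * x ^ 3) by ring, arg_eq,
      Real.mul_rpow (by norm_num) (by positivity),
      cube_rpow (by positivity) _ 1 (by norm_num), Real.rpow_one]
  unfold nu2
  rw [tricomi_eq hz.le, kummer1 hz, e1]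
  simp only [ENNReal.toReal_mul]
  rw [ENNReal.toReal_ofReal (by positivity), ENNReal.toReal_ofReal (by positivity),
    ENNReal.toReal_ofReal (by positivity), ENNReal.toReal_ofReal (by positivity), e2, six_root]
  field_simp

theorem nu2_zero : nu2 0 = 2 * (6:ℝ) ^ ((1:ℝ)/3) / Real.Gamma (1/3) := by
  have hp : 0 < Real.sqrt π := Real.sqrt_pos.2 Real.pi_pos
  have hG : 0 < Real.Gamma (1/3) := Real.Gamma_pos_of_pos (by norm_num)
  have e : ∫⁻ r in Ioi (0:ℝ),
      ENNReal.ofReal (Real.exp (-r) * r ^ ((1:ℝ)/2 - 1) * (0 + r) ^ (-(1:ℝ)/6)) =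
      ENNReal.ofReal (Real.Gamma (1/3)) := by
    have h := lgam (a := 1/3) (c := 1) (by norm_num) one_pos
    rw [Real.one_rpow, one_mul] at h
    rw [← h]
    refine setLIntegral_congr_fun measurableSet_Ioi fun s hs => ?_
    have hs : 0 < s := hs
    beta_reduce
    rw [zero_add, mul_assoc, ← Real.rpow_add hs, one_mul]
    norm_num
  unfold nu2
  rw [show 8 * (0:ℝ) ^ 3 / 9 = 0 by norm_num, show -8 * (0:ℝ) ^ 3 / 9 = 0 by norm_num,
    tricomi_eq le_rfl, e, ENNReal.toReal_ofReal hG.le, Real.exp_zero]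
  field_simp

theorem split_lem (g : ℝ → ENNReal) (hg : Measurable g) :
    ∫⁻ r in Ioi (0:ℝ), g r = ∫⁻ r in Ioi (1:ℝ), (g r + ENNReal.ofReal (1 / r ^ 2) * g (1 / r)) := by
  have hi : (fun t : ℝ => 1 / t) '' Ici 1 = Ioc 0 1 := by
    ext y
    constructor
    · rintro ⟨t, ht, rfl⟩
      have ht : 1 ≤ t := ht
      have h0 : 0 < t := by linarith
      exact ⟨by positivity, (div_le_one h0).2 ht⟩
    · rintro ⟨h0, h1⟩
      exact ⟨1 / y, (one_le_div h0).2 h1, by field_simp⟩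
  have h := lintegral_image_eq_lintegral_abs_deriv_mul (s := Ici (1:ℝ)) (f := fun t : ℝ => 1 / t)
    (f' := fun t => -(1 / t ^ 2)) measurableSet_Ici
    (fun t ht => by
      have ht : 1 ≤ t := ht
      have ht : t ≠ 0 := by linarith
      have := ((hasDerivAt_inv ht).const_mul 1).hasDerivWithinAt (s := Ici 1)
      refine this.congr_deriv ?_
      field_simp)
    (fun t ht s hs hts => by
      have ht : 1 ≤ t := ht
      have hs : 1 ≤ s := hs
      simpa using hts)
    g
  rw [hi, setLIntegral_congr (Ioi_ae_eq_Ici (a := (1:ℝ))).symm] at h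
  rw [← Ioc_union_Ioi_eq_Ioi (zero_le_one (α := ℝ)),
    lintegral_union measurableSet_Ioi (Ioc_disjoint_Ioi le_rfl), h, add_comm,
    ← lintegral_add_left hg]
  refine setLIntegral_congr_fun measurableSet_Ioi fun s hs => ?_
  beta_reduce
  rw [abs_neg, abs_of_nonneg (by positivity)]

theorem innerS_eq (y : ℝ) :
    ∫⁻ r in Ioi (0:ℝ), ENNReal.ofReal (Real.exp (-(y * ((1 + r) ^ 2 / r))) * r ^ (-(4:ℝ)/3)
      * (1 + r) ^ (-(1:ℝ)/3)) = ENNReal.ofReal ((4:ℝ) ^ ((1:ℝ)/3)) * innerS y := by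
  rw [split_lem _ (by fun_prop)]
  have hd : ∀ r ∈ Ioi (1:ℝ), HasDerivWithinAt (fun r : ℝ => (r - 1) ^ 2 / (4 * r))
      ((r - 1) * (r + 1) / (4 * r ^ 2)) (Ioi 1) r := by
    intro r hr
    have hr : 1 < r := hr
    have h1 : HasDerivAt (fun r : ℝ => (r - 1) ^ 2) (2 * (r - 1)) r := by
      refine (((hasDerivAt_id r).sub_const 1).pow 2).congr_deriv ?_
      simp
    have h2 : HasDerivAt (fun r : ℝ => 4 * r) 4 r := by
      simpa using (hasDerivAt_id r).const_mul (4:ℝ)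
    refine (h1.div h2 (by positivity)).hasDerivWithinAt.congr_deriv ?_
    field_simp
    ring
  have hinj : InjOn (fun r : ℝ => (r - 1) ^ 2 / (4 * r)) (Ioi 1) := by
    intro a ha b hb hab
    have ha : 1 < a := ha
    have hb : 1 < b := hb
    simp only at hab
    rw [div_eq_div_iff (by positivity) (by positivity)] at hab
    have h3 : (a - b) * (a * b - 1) = 0 := by linarith
    rcases mul_eq_zero.1 h3 with h | h
    · linarith
    · nlinarith
  have him : (fun r : ℝ => (r - 1) ^ 2 / (4 * r)) '' Ioi 1 = Ioi 0 := by
    ext s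
    constructor
    · rintro ⟨r, hr, rfl⟩
      have hr : 1 < r := hr
      have : 0 < r - 1 := by linarith
      exact (by positivity : 0 < (r - 1) ^ 2 / (4 * r))
    · intro hs
      have hs : 0 < s := hs
      have hq : 0 < Real.sqrt (s * (s + 1)) := Real.sqrt_pos.2 (by positivity)
      have hq2 : Real.sqrt (s * (s + 1)) ^ 2 = s * (s + 1) := Real.sq_sqrt (by positivity)
      refine ⟨1 + 2 * s + 2 * Real.sqrt (s * (s + 1)), ?_, ?_⟩
      · rw [mem_Ioi]
        linarith
      · beta_reduce
        rw [div_eq_iff (by positivity)]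
        nlinarith
  unfold innerS
  rw [← him, lintegral_image_eq_lintegral_abs_deriv_mul measurableSet_Ioi hd hinj,
    ← lintegral_const_mul' _ _ (by simp)]
  refine setLIntegral_congr_fun measurableSet_Ioi fun r hr => ?_
  have hr : 1 < r := hr
  have h0 : 0 < r := by linarith
  have h1 : 0 < r - 1 := by linarith
  beta_reduce
  have es : 1 + (r - 1) ^ 2 / (4 * r) = (1 + r) ^ 2 / (4 * r) := by field_simp; ring
  rw [es, abs_of_nonneg (by positivity), ← ENNReal.ofReal_mul (by positivity),
    ← ENNReal.ofReal_mul (by positivity), ← ENNReal.ofReal_add (by positivity) (by positivity),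
    ← ENNReal.ofReal_mul (by positivity)]
  congr 1
  rw [show (1 + 1 / r) ^ 2 / (1 / r) = (1 + r) ^ 2 / r by field_simp; ring,
    show 4 * y * ((1 + r) ^ 2 / (4 * r)) = y * ((1 + r) ^ 2 / r) by field_simp]
  have e1 : (1 / r) ^ (-(4:ℝ)/3) = r ^ (-(4:ℝ)/3) * (r ^ 2 * r ^ ((2:ℝ)/3)) := by
    rw [one_div, Real.inv_rpow h0.le, ← Real.rpow_neg h0.le, ← Real.rpow_natCast r 2,
      ← Real.rpow_add h0, ← Real.rpow_add h0]
    norm_num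
  have e2 : (1 + 1 / r) ^ (-(1:ℝ)/3) = (1 + r) ^ (-(1:ℝ)/3) * r ^ ((1:ℝ)/3) := by
    rw [show 1 + 1 / r = (1 + r) / r by field_simp; ring, Real.div_rpow (by positivity) h0.le,
      div_eq_mul_inv, ← Real.rpow_neg h0.le]
    norm_num
  have e3 : r ^ ((2:ℝ)/3) * r ^ ((1:ℝ)/3) = r := by
    rw [← Real.rpow_add h0]; norm_num
  have e4 : ((r - 1) ^ 2 / (4 * r)) ^ (-(1:ℝ)/2) = (r - 1)⁻¹ * 2 * r ^ ((1:ℝ)/2) := by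
    rw [Real.div_rpow (by positivity) (by positivity), Real.mul_rpow (by norm_num) h0.le,
      ← Real.rpow_natCast, ← Real.rpow_mul h1.le, show (4:ℝ) = 2 ^ (2:ℝ) by norm_num,
      ← Real.rpow_mul (by norm_num), div_eq_mul_inv, mul_inv, ← Real.rpow_neg h0.le,
      ← Real.rpow_neg (by norm_num)]
    norm_num [Real.rpow_neg_one]
    ring
  have e5 : ((1 + r) ^ 2 / (4 * r)) ^ (-(1:ℝ)/6) =
      (1 + r) ^ (-(1:ℝ)/3) * (4:ℝ) ^ ((1:ℝ)/6) * r ^ ((1:ℝ)/6) := by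
    rw [Real.div_rpow (by positivity) (by positivity), Real.mul_rpow (by norm_num) h0.le,
      ← Real.rpow_natCast, ← Real.rpow_mul (by positivity), div_eq_mul_inv, mul_inv,
      ← Real.rpow_neg h0.le, ← Real.rpow_neg (by norm_num)]
    norm_num
    ring
  have e6 : (4:ℝ) ^ ((1:ℝ)/3) * (4:ℝ) ^ ((1:ℝ)/6) = 2 := by
    rw [← Real.rpow_add (by norm_num), show (4:ℝ) = 2 ^ (2:ℝ) by norm_num,
      ← Real.rpow_mul (by norm_num)]
    norm_num
  have e7 : r ^ ((1:ℝ)/2) * r ^ ((1:ℝ)/6) = r ^ (-(4:ℝ)/3) * r ^ 2 := by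
    rw [← Real.rpow_natCast r 2, ← Real.rpow_add h0, ← Real.rpow_add h0]
    norm_num
  rw [e1, e2, e4, e5]
  generalize Real.exp (-(y * ((1 + r) ^ 2 / r))) = E
  generalize (1 + r) ^ (-(1:ℝ)/3) = Q
  calc _ = E * Q * r ^ (-(4:ℝ)/3) * (1 + r ^ ((2:ℝ)/3) * r ^ ((1:ℝ)/3)) := by field_simp
    _ = E * Q * (r ^ (-(4:ℝ)/3) * r ^ 2) * ((4:ℝ) ^ ((1:ℝ)/3) * (4:ℝ) ^ ((1:ℝ)/6)) *
        (1 + r) / (2 * r ^ 2) := by rw [e3, e6]; field_simp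
    _ = _ := by rw [← e7]; field_simp; ring

/-- Bessel-type integral as a lower integral. -/
def lbes (a x : ℝ) : ENNReal :=
  ∫⁻ t in Ioi (0:ℝ), ENNReal.ofReal (Real.exp (-t - x / t) * t ^ a)

theorem lbes_eq {a x : ℝ} (ha : -2 < a) (hx : 0 < x) : lbes a x = ENNReal.ofReal (bes a x) := by
  unfold lbes bes
  rw [ofReal_integral_eq_lintegral_ofReal (bes_int ha hx)]
  refine (ae_restrict_iff' measurableSet_Ioi).2 (ae_of_all _ fun t ht => ?_)
  have ht : 0 < t := ht
  show 0 ≤ _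
  positivity

theorem prod_eq {X : ℝ} (hX : 0 < X) :
    lbes (-1 / 3) X * lbes (-4 / 3) X = ∫⁻ T in Ioi (0:ℝ),
      ENNReal.ofReal (Real.exp (-T) * T ^ (-(2:ℝ)/3)) *
        (ENNReal.ofReal ((4:ℝ) ^ ((1:ℝ)/3)) * innerS (X / T)) := by
  have hfin : lbes (-4 / 3) X ≠ ⊤ := by rw [lbes_eq (by norm_num) hX]; simp
  calc lbes (-1 / 3) X * lbes (-4 / 3) X
      = ∫⁻ t in Ioi (0:ℝ), ∫⁻ r in Ioi (0:ℝ), ENNReal.ofReal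
          (Real.exp (-(t * (1 + r)) - X * (1 + 1 / r) / t) * t ^ (-(2:ℝ)/3) * r ^ (-(4:ℝ)/3)) := by
        rw [mul_comm]
        nth_rw 2 [lbes]
        rw [← lintegral_const_mul' _ _ hfin]
        refine setLIntegral_congr_fun measurableSet_Ioi fun t ht => ?_
        have ht : 0 < t := ht
        beta_reduce
        rw [mul_comm, lbes, lscale ht, ← lintegral_const_mul' _ _ (by simp),
          ← lintegral_const_mul' _ _ (by simp)]
        refine setLIntegral_congr_fun measurableSet_Ioi fun r hr => ?_
        have hr : 0 < r := hr
        beta_reduce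
        rw [← ENNReal.ofReal_mul (by positivity), ← ENNReal.ofReal_mul (by positivity)]
        congr 1
        have e : -(t * (1 + r)) - X * (1 + 1 / r) / t
            = (-t - X / t) + (-(t * r) - X / (t * r)) := by field_simp; ring
        have e2 : t ^ (-(2:ℝ)/3) = t ^ (-1/3 : ℝ) * t * t ^ (-4/3 : ℝ) := by
          nth_rw 3 [← Real.rpow_one t]
          rw [← Real.rpow_add ht, ← Real.rpow_add ht]
          norm_num
        rw [e, Real.exp_add, e2, Real.mul_rpow ht.le hr.le]
        ring
    _ = ∫⁻ r in Ioi (0:ℝ), ∫⁻ t in Ioi (0:ℝ), ENNReal.ofReal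
          (Real.exp (-(t * (1 + r)) - X * (1 + 1 / r) / t) * t ^ (-(2:ℝ)/3) * r ^ (-(4:ℝ)/3)) :=
        lintegral_lintegral_swap (by fun_prop)
    _ = ∫⁻ r in Ioi (0:ℝ), ∫⁻ T in Ioi (0:ℝ), ENNReal.ofReal (Real.exp (-T) * T ^ (-(2:ℝ)/3) *
          (Real.exp (-(X / T * ((1 + r) ^ 2 / r))) * r ^ (-(4:ℝ)/3) * (1 + r) ^ (-(1:ℝ)/3))) := by
        refine setLIntegral_congr_fun measurableSet_Ioi fun r hr => ?_
        have hr : 0 < r := hr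
        beta_reduce
        rw [lscale (c := 1 / (1 + r)) (by positivity), ← lintegral_const_mul' _ _ (by simp)]
        refine setLIntegral_congr_fun measurableSet_Ioi fun t ht => ?_
        have ht : 0 < t := ht
        beta_reduce
        rw [← ENNReal.ofReal_mul (by positivity)]
        congr 1
        have e : -(1 / (1 + r) * t * (1 + r)) - X * (1 + 1 / r) / (1 / (1 + r) * t)
            = -t + -(X / t * ((1 + r) ^ 2 / r)) := by field_simp; ring
        have e2 : (1 + r) ^ (-(1:ℝ)/3) = (1 / (1 + r)) * (1 / (1 + r)) ^ (-(2:ℝ)/3) := by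
          have hq : 0 < 1 + r := by positivity
          rw [one_div, Real.inv_rpow hq.le, ← Real.rpow_neg hq.le, ← Real.rpow_neg_one,
            ← Real.rpow_add hq]
          norm_num
        rw [e, Real.exp_add, e2, Real.mul_rpow (by positivity) ht.le]
        ring
    _ = ∫⁻ T in Ioi (0:ℝ), ∫⁻ r in Ioi (0:ℝ), ENNReal.ofReal (Real.exp (-T) * T ^ (-(2:ℝ)/3) *
          (Real.exp (-(X / T * ((1 + r) ^ 2 / r))) * r ^ (-(4:ℝ)/3) * (1 + r) ^ (-(1:ℝ)/3))) :=
        lintegral_lintegral_swap (by fun_prop)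
    _ = _ := by
        refine setLIntegral_congr_fun measurableSet_Ioi fun t ht => ?_
        have ht : 0 < t := ht
        beta_reduce
        rw [← innerS_eq, ← lintegral_const_mul' _ _ (by simp)]
        refine setLIntegral_congr_fun measurableSet_Ioi fun r hr => ?_
        beta_reduce
        rw [← ENNReal.ofReal_mul (by positivity)]

theorem innerS_meas : Measurable innerS := by
  unfold innerS
  refine Measurable.lintegral_prod_right' (f := fun p : ℝ × ℝ => ENNReal.ofReal
    (Real.exp (-(4 * p.1 * (1 + p.2))) * p.2 ^ (-(1:ℝ)/2) * (1 + p.2) ^ (-(1:ℝ)/6))) ?_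
  fun_prop

theorem main_pos {h : ℝ} (hh : 0 < h) :
    (∫ t in Ioi (0:ℝ), Real.exp (-t) * t ^ (-(1:ℝ)/3) * nu2 (t ^ (-(1:ℝ)/3) * h)) =
      2 * (3 * kap) / (Real.Gamma (1/3)) ^ 2 * bes (-1 / 3) (2 / 9 * h ^ 3) *
        bes (-2 / 3) (2 / 9 * h ^ 3) := by
  have hk := kap_pos
  have hX : 0 < 2 / 9 * h ^ 3 := by positivity
  have hnn : ∀ a, 0 ≤ bes a (2 / 9 * h ^ 3) := fun a =>
    setIntegral_nonneg measurableSet_Ioi fun t ht => by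
      have ht : 0 < t := ht
      positivity
  set c : ℝ := 2 * (3 * kap) / (Real.Gamma (1/3)) ^ 2 * kap * h with hc
  have hc0 : 0 ≤ c := by positivity
  have hP := prod_eq hX
  set G : ℝ → ENNReal := fun T => ENNReal.ofReal (Real.exp (-T) * T ^ (-(2:ℝ)/3)) *
        (ENNReal.ofReal ((4:ℝ) ^ ((1:ℝ)/3)) * innerS (2 / 9 * h ^ 3 / T)) with hG
  have hGm : Measurable G := by
    have : Measurable fun T : ℝ => innerS (2 / 9 * h ^ 3 / T) := innerS_meas.comp (by fun_prop)
    fun_prop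
  rw [lbes_eq (by norm_num) hX, lbes_eq (by norm_num) hX] at hP
  have e : ∀ t ∈ Ioi (0:ℝ), Real.exp (-t) * t ^ (-(1:ℝ)/3) * nu2 (t ^ (-(1:ℝ)/3) * h)
      = c * (G t).toReal := by
    intro t ht
    have ht : 0 < t := ht
    rw [nu2_eq (by positivity), hG]
    simp only [ENNReal.toReal_mul]
    rw [ENNReal.toReal_ofReal (by positivity), ENNReal.toReal_ofReal (by positivity),
      ENNReal.toReal_ofReal (by positivity)]
    have e1 : 2 / 9 * (t ^ (-(1:ℝ)/3) * h) ^ 3 = 2 / 9 * h ^ 3 / t := by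
      rw [mul_pow, ← Real.rpow_natCast (t ^ (-(1:ℝ)/3)) 3, ← Real.rpow_mul ht.le]
      norm_num [Real.rpow_neg_one]
      field_simp
    have e2 : t ^ (-(2:ℝ)/3) = t ^ (-(1:ℝ)/3) * t ^ (-(1:ℝ)/3) := by
      rw [← Real.rpow_add ht]; norm_num
    rw [e1, e2, hc]
    ring
  rw [setIntegral_congr_fun measurableSet_Ioi e, integral_const_mul, integral_toReal, ← hP,
    ENNReal.toReal_mul, ENNReal.toReal_ofReal (hnn _), ENNReal.toReal_ofReal (hnn _),
    bes_inv (-2 / 3) hX, arg_eq, cube_rpow (by positivity) _ 1 (by norm_num), hc]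
  · norm_num
    ring
  · exact hGm.aemeasurable
  · refine ae_lt_top hGm ?_
    rw [← hP]
    exact ENNReal.mul_ne_top (by simp) (by simp)

/-- the exponential-time mixture of `ν₂` equals `-2·u·u' = -(u²)'`,
where `u` is the normalized Airy function. -/
theorem stmt6
    (u : ℝ → ℝ) (hu_smooth : ContDiff ℝ 2 u)
    (hu_ode : ∀ h : ℝ, deriv (deriv u) h = 2 * h * u h)
    (hu_zero : u 0 = 1)
    (hu'_zero : deriv u 0 = -((6:ℝ) ^ ((1:ℝ)/3) * Real.Gamma (2/3) / Real.Gamma (1/3)))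
    (hu_pos : ∀ h : ℝ, 0 ≤ h → 0 < u h)
    (hu_anti : StrictAntiOn u (Ici 0))
    (hu_lim : Tendsto u atTop (𝓝 0)) :
    ∀ h : ℝ, 0 ≤ h →
      (∫ t in Ioi (0:ℝ), Real.exp (-t) * t ^ (-(1:ℝ)/3) * nu2 (t ^ (-(1:ℝ)/3) * h)) =
        -2 * u h * deriv u h := by
  intro h hh
  have hG : 0 < Real.Gamma (1/3) := Real.Gamma_pos_of_pos (by norm_num)
  rcases hh.eq_or_lt with rfl | hh
  · simp only [mul_zero]
    rw [nu2_zero, integral_mul_const, hu_zero, hu'_zero,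
      Real.Gamma_eq_integral (s := 2/3) (by norm_num)]
    norm_num
    ring
  · obtain ⟨h1, h2⟩ := airy_id u hu_smooth hu_ode hu_zero hu'_zero hu_pos hh
    rw [main_pos hh, h1]
    calc _ = 2 * (3 * kap * bes (-1 / 3) (2 / 9 * h ^ 3)) * u h / Real.Gamma (1/3) := by
          field_simp
      _ = _ := by rw [h2]; field_simp
end
end

section
/- For every s > 0: ∫₀ˢ (t(s-t))^{-4/3}·exp(-2s/(9·t·(s-t))) dt = 2·4^{1/3}·s^{-5/3}·e^{-8/(9s)}·∫₀^∞ (1+z)^{-1/6}·z^{-1/2}·e^{-8z/(9s)} dz. Equivalently, the additive convolution on [0,∞) of the function f(t) := t^{-4/3}·e^{-2/(9t)} with itself satisfies (f*f)(s) = 2·4^{1/3}·√π·s^{-5/3}·e^{-8/(9s)}·U(1/2, 4/3; 8/(9s)). -/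
open Real MeasureTheory Set Filter Topology

noncomputable section

lemma half_symm (g : ℝ → ℝ) (s : ℝ) (hs : 0 < s) (hg : ∀ t, g (s - t) = g t) :
    ∫ t in (0:ℝ)..s, g t = 2 * ∫ t in (s/2)..s, g t := by
  have e : ∫ t in (0:ℝ)..(s/2), g t = ∫ t in (s/2)..s, g t := by
    have h := intervalIntegral.integral_comp_sub_left (a := 0) (b := s/2) g s
    simp only [hg] at h
    rw [h]; congr 1 <;> ring
  by_cases hi : IntervalIntegrable g volume (s/2) s
  · have hi2 : IntervalIntegrable g volume 0 (s/2) := by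
      have h := hi.comp_sub_left s
      simp only [hg] at h
      have h2 := h.symm
      convert h2 using 1 <;> ring
    rw [← intervalIntegral.integral_add_adjacent_intervals hi2 hi, e]; ring
  · have hn : ¬ IntervalIntegrable g volume 0 s := by
      intro h
      apply hi
      apply h.mono_set
      rw [uIcc_of_le (by linarith), uIcc_of_le hs.le]
      exact Icc_subset_Icc (by linarith) le_rfl
    rw [intervalIntegral.integral_undef hi, intervalIntegral.integral_undef hn]; ring

lemma image_phi (s : ℝ) (hs : 0 < s) :
    (fun z : ℝ => s/2 * (1 + √(z/(1+z)))) '' Ioi 0 = Ioo (s/2) s := by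
  ext t
  constructor
  · rintro ⟨z, hz, rfl⟩
    have hz : 0 < z := hz
    have h0 : 0 < √(z/(1+z)) := Real.sqrt_pos.2 (by positivity)
    have h1 : √(z/(1+z)) < 1 := by
      rw [Real.sqrt_lt' one_pos, div_lt_iff₀ (by positivity)]; linarith
    constructor <;> dsimp only <;> nlinarith
  · rintro ⟨h1, h2⟩
    have hx0 : 0 < 2*t/s - 1 := by
      rw [sub_pos, lt_div_iff₀ hs]; linarith
    have hx1 : 2*t/s - 1 < 1 := by
      rw [sub_lt_iff_lt_add, div_lt_iff₀ hs]; linarith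
    have ht : t = s/2 * (1 + (2*t/s - 1)) := by field_simp; ring
    generalize 2*t/s - 1 = x at hx0 hx1 ht
    have hx : 0 < 1 - x^2 := by nlinarith
    refine ⟨x^2/(1-x^2), div_pos (by positivity) hx, ?_⟩
    have : x^2/(1-x^2)/(1+x^2/(1-x^2)) = x^2 := by field_simp; ring
    dsimp only
    rw [this, Real.sqrt_sq hx0.le, ht]

lemma inj_phi (s : ℝ) (hs : 0 < s) :
    InjOn (fun z : ℝ => s/2 * (1 + √(z/(1+z)))) (Ioi 0) := by
  intro a ha b hb h
  have ha : 0 < a := ha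
  have hb : 0 < b := hb
  have h1 := mul_left_cancel₀ (by positivity) h
  have h2 := add_left_cancel h1
  rw [Real.sqrt_inj (by positivity) (by positivity), div_eq_div_iff (by positivity) (by positivity)] at h2
  linarith

lemma deriv_phi (s z : ℝ) (hz : 0 < z) :
    HasDerivAt (fun z : ℝ => s/2 * (1 + √(z/(1+z))))
      (s/2 * ((1/(1+z)^2) / (2 * √(z/(1+z))))) z := by
  have h1 : HasDerivAt (fun z : ℝ => z/(1+z)) (1/(1+z)^2) z := by
    have := (hasDerivAt_id z).div ((hasDerivAt_id z).const_add 1) (by simp; positivity)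
    have e : (1/(1+z)^2 : ℝ) = (1 * (1 + id z) - id z * 1) / (1 + id z)^2 := by simp
    rw [e]
    exact this
  exact ((h1.sqrt (by positivity)).const_add 1).const_mul _

lemma first_part (s : ℝ) (hs : 0 < s) :
    (∫ t in (0:ℝ)..s, (t * (s - t)) ^ (-(4:ℝ)/3) * Real.exp (-(2 * s) / (9 * t * (s - t)))) =
        2 * (4:ℝ) ^ ((1:ℝ)/3) * s ^ (-(5:ℝ)/3) * Real.exp (-8 / (9 * s)) *
          ∫ z in Ioi (0:ℝ), (1 + z) ^ (-(1:ℝ)/6) * z ^ (-(1:ℝ)/2) * Real.exp (-8 * z / (9 * s)) := by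
  rw [half_symm _ s hs (by
    intro t
    rw [show (s - t) * (s - (s - t)) = t * (s - t) by ring,
      show 9 * (s - t) * (s - (s - t)) = 9 * t * (s - t) by ring])]
  rw [intervalIntegral.integral_of_le (by linarith), integral_Ioc_eq_integral_Ioo,
    ← image_phi s hs,
    integral_image_eq_integral_abs_deriv_smul measurableSet_Ioi
      (fun z hz => (deriv_phi s z hz).hasDerivWithinAt) (inj_phi s hs),
    ← integral_const_mul, ← integral_const_mul]
  apply setIntegral_congr_fun measurableSet_Ioi
  intro z hz
  have hz : 0 < z := hz
  have hw : 0 < 1 + z := by linarith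
  dsimp only
  have hq : √(z/(1+z)) ^ 2 = z/(1+z) := Real.sq_sqrt (by positivity)
  have hu : s/2 * (1 + √(z/(1+z))) * (s - s/2 * (1 + √(z/(1+z)))) = s^2/4/(1+z) := by
    have : s/2 * (1 + √(z/(1+z))) * (s - s/2 * (1 + √(z/(1+z)))) =
      s^2/4 * (1 - √(z/(1+z))^2) := by ring
    rw [this, hq]; field_simp; ring
  rw [mul_assoc 9, hu, abs_of_nonneg (by positivity), smul_eq_mul]
  have hexp : -(2 * s) / (9 * (s^2/4/(1+z))) = -8/(9*s) + -8*z/(9*s) := by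
    field_simp; ring
  rw [hexp, Real.exp_add]
  have hpow : (s^2/4/(1+z)) ^ (-(4:ℝ)/3) = s ^ (-(8:ℝ)/3) * (4 * 4 ^ ((1:ℝ)/3)) * (1+z)^((4:ℝ)/3) := by
    rw [Real.div_rpow (by positivity) hw.le, Real.div_rpow (by positivity) (by norm_num),
      ← Real.rpow_natCast, ← Real.rpow_mul hs.le, neg_div, Real.rpow_neg hw.le,
      Real.rpow_neg (by norm_num : (0:ℝ) ≤ 4), div_inv_eq_mul, div_inv_eq_mul,
      show (4:ℝ)/3 = 1 + 1/3 by norm_num, Real.rpow_add (by norm_num : (0:ℝ) < 4), Real.rpow_one]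
    norm_num
  have hsq : √(z/(1+z)) = z ^ ((1:ℝ)/2) / (1+z)^((1:ℝ)/2) := by
    rw [Real.sqrt_eq_rpow, Real.div_rpow hz.le hw.le]
  have hs5 : s ^ (-(5:ℝ)/3) = s ^ (-(8:ℝ)/3) * s := by
    rw [← Real.rpow_add_one hs.ne']; norm_num
  have hz2 : z ^ (-(1:ℝ)/2) = (z ^ ((1:ℝ)/2))⁻¹ := by
    rw [← Real.rpow_neg hz.le]; norm_num
  have hw6 : (1+z)^((4:ℝ)/3) * (1+z)^((1:ℝ)/2) = (1+z)^(-(1:ℝ)/6) * (1+z)^2 := by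
    rw [← Real.rpow_natCast (1+z) 2, ← Real.rpow_add hw, ← Real.rpow_add hw]; norm_num
  have hw6' : (1+z)^(-(1:ℝ)/6) = (1+z)^((4:ℝ)/3) * (1+z)^((1:ℝ)/2) / (1+z)^2 := by
    rw [hw6]; field_simp
  rw [hpow, hsq, hs5, hz2, hw6']
  have : z ^ ((1:ℝ)/2) ≠ 0 := by positivity
  generalize z ^ ((1:ℝ)/2) = A at *
  generalize (1+z) ^ ((4:ℝ)/3) = B at *
  have : (1+z) ^ ((1:ℝ)/2) ≠ 0 := by positivity
  generalize (1+z) ^ ((1:ℝ)/2) = C at *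
  generalize (4:ℝ) ^ ((1:ℝ)/3) = D
  generalize s ^ (-(8:ℝ)/3) = E
  field_simp
  try ring

/-- the self-convolution of `f(t) = t^{-4/3}·e^{-2/(9t)}` equals
`2·4^{1/3}·√π·s^{-5/3}·e^{-8/(9s)}·U(1/2,4/3;8/(9s))`. -/
theorem stmt7 :
    ∀ s : ℝ, 0 < s →
      ((∫ t in (0:ℝ)..s, (t * (s - t)) ^ (-(4:ℝ)/3) * Real.exp (-(2 * s) / (9 * t * (s - t)))) =
        2 * (4:ℝ) ^ ((1:ℝ)/3) * s ^ (-(5:ℝ)/3) * Real.exp (-8 / (9 * s)) *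
          ∫ z in Ioi (0:ℝ), (1 + z) ^ (-(1:ℝ)/6) * z ^ (-(1:ℝ)/2) * Real.exp (-8 * z / (9 * s))) ∧
      ((∫ t in (0:ℝ)..s, (t ^ (-(4:ℝ)/3) * Real.exp (-2 / (9 * t))) *
          ((s - t) ^ (-(4:ℝ)/3) * Real.exp (-2 / (9 * (s - t))))) =
        2 * (4:ℝ) ^ ((1:ℝ)/3) * Real.sqrt π * s ^ (-(5:ℝ)/3) * Real.exp (-8 / (9 * s)) *
          tricomiU (1/2) (4/3) (8 / (9 * s))) := by
  intro s hs
  refine ⟨first_part s hs, ?_⟩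
  have h1 : (∫ t in (0:ℝ)..s, (t ^ (-(4:ℝ)/3) * Real.exp (-2 / (9 * t))) *
          ((s - t) ^ (-(4:ℝ)/3) * Real.exp (-2 / (9 * (s - t))))) =
      ∫ t in (0:ℝ)..s, (t * (s - t)) ^ (-(4:ℝ)/3) * Real.exp (-(2 * s) / (9 * t * (s - t))) := by
    rw [intervalIntegral.integral_of_le hs.le, intervalIntegral.integral_of_le hs.le,
      integral_Ioc_eq_integral_Ioo, integral_Ioc_eq_integral_Ioo]
    apply setIntegral_congr_fun measurableSet_Ioo
    rintro t ⟨h0, h1⟩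
    have h2 : 0 < s - t := by linarith
    have he : -(2 * s) / (9 * t * (s - t)) = -2 / (9 * t) + -2 / (9 * (s - t)) := by
      field_simp; ring
    dsimp only
    rw [Real.mul_rpow h0.le h2.le, he, Real.exp_add]
    ring
  rw [h1, first_part s hs, tricomiU, Real.Gamma_one_half_eq]
  have h2 : (∫ z in Ioi (0:ℝ), (1 + z) ^ (-(1:ℝ)/6) * z ^ (-(1:ℝ)/2) * Real.exp (-8 * z / (9 * s)))
      = ∫ x in Ioi (0:ℝ), Real.exp (-(8 / (9 * s)) * x) * x ^ ((1:ℝ)/2 - 1) * (1 + x) ^ ((4:ℝ)/3 - 1/2 - 1) := by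
    congr 1
    ext z
    rw [show (1:ℝ)/2 - 1 = -1/2 by norm_num, show (4:ℝ)/3 - 1/2 - 1 = -1/6 by norm_num,
      show -(8 / (9 * s)) * z = -8 * z / (9 * s) by ring]
    ring
  rw [h2]
  have : √π ≠ 0 := by positivity
  field_simp
end
end

section
/- Kummer's identity for Tricomi functions in integral form: for all real a > 0, b < 1 and z > 0, (1/Γ(a))·∫₀^∞ e^{-zs}·s^{a-1}·(1+s)^{b-a-1} ds = z^{1-b}·(1/Γ(1+a-b))·∫₀^∞ e^{-zs}·s^{a-b}·(1+s)^{-a} ds; that is, U(a,b;z) = z^{1-b}·U(1+a-b, 2-b; z). -/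
open Real MeasureTheory Set Filter Topology

noncomputable section

lemma gamma_integrable {p r : ℝ} (hp : 0 < p) (hr : 0 < r) :
    IntegrableOn (fun t : ℝ => t ^ (p - 1) * Real.exp (-(r * t))) (Ioi 0) := by
  by_contra h
  have h1 := Real.integral_rpow_mul_exp_neg_mul_Ioi hp hr
  rw [integral_undef h] at h1
  have h2 : 0 < (1 / r) ^ p * Real.Gamma p :=
    mul_pos (Real.rpow_pos_of_pos (by positivity) _) (Real.Gamma_pos_of_pos hp)
  linarith

lemma kummer_swap {a c z : ℝ} (ha : 0 < a) (hc : 0 < c) (hz : 0 < z) :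
    Real.Gamma c * (∫ s in Ioi (0:ℝ), Real.exp (-z * s) * s ^ (a - 1) * (1 + s) ^ (-c)) =
      Real.Gamma a * ∫ t in Ioi (0:ℝ), t ^ (c - 1) * Real.exp (-t) * (z + t) ^ (-a) := by
  let F : ℝ → ℝ → ℝ := fun s t =>
    (s ^ (a - 1) * Real.exp (-(z * s))) * (t ^ (c - 1) * Real.exp (-(1 * t))) * Real.exp (-(s * t))
  have hG := (gamma_integrable ha hz).mul_prod (gamma_integrable hc one_pos)
  have hF : Integrable (Function.uncurry F)
      ((volume.restrict (Ioi (0:ℝ))).prod (volume.restrict (Ioi (0:ℝ)))) := by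
    refine hG.mono ?_ ?_
    · exact hG.aestronglyMeasurable.mul (by
        have : Continuous (fun p : ℝ × ℝ => Real.exp (-(p.1 * p.2))) := by fun_prop
        exact this.aestronglyMeasurable)
    · rw [Measure.prod_restrict]
      refine (ae_restrict_iff' (measurableSet_Ioi.prod measurableSet_Ioi)).2
        (Eventually.of_forall ?_)
      rintro ⟨s, t⟩ ⟨hs, ht⟩
      simp only [mem_Ioi] at hs ht
      simp only [Function.uncurry, F]
      rw [norm_mul]
      refine mul_le_of_le_one_right (norm_nonneg _) ?_
      rw [Real.norm_eq_abs, Real.abs_exp, Real.exp_le_one_iff]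
      have := mul_pos hs ht
      linarith
  have hswap := integral_integral_swap hF
  have h1 : ∀ s ∈ Ioi (0:ℝ), ∫ t in Ioi (0:ℝ), F s t =
      Real.Gamma c * (Real.exp (-z * s) * s ^ (a - 1) * (1 + s) ^ (-c)) := by
    intro s hs
    have hs' : (0:ℝ) < 1 + s := by have : (0:ℝ) < s := hs; linarith
    have h := Real.integral_rpow_mul_exp_neg_mul_Ioi hc hs'
    have : ∀ t, F s t = (s ^ (a - 1) * Real.exp (-(z * s))) *
        (t ^ (c - 1) * Real.exp (-((1 + s) * t))) := by
      intro t
      have : Real.exp (-((1 + s) * t)) = Real.exp (-(1 * t)) * Real.exp (-(s * t)) := by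
        rw [← Real.exp_add]; ring_nf
      simp only [F, this]; ring
    simp_rw [this]
    rw [integral_const_mul, h, one_div, Real.inv_rpow hs'.le, ← Real.rpow_neg hs'.le,
      neg_mul]
    ring
  have h2 : ∀ t ∈ Ioi (0:ℝ), ∫ s in Ioi (0:ℝ), F s t =
      Real.Gamma a * (t ^ (c - 1) * Real.exp (-t) * (z + t) ^ (-a)) := by
    intro t ht
    have ht' : (0:ℝ) < z + t := by have : (0:ℝ) < t := ht; linarith
    have h := Real.integral_rpow_mul_exp_neg_mul_Ioi ha ht'
    have : ∀ s, F s t = (t ^ (c - 1) * Real.exp (-t)) *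
        (s ^ (a - 1) * Real.exp (-((z + t) * s))) := by
      intro s
      have : Real.exp (-((z + t) * s)) = Real.exp (-(z * s)) * Real.exp (-(s * t)) := by
        rw [← Real.exp_add]; ring_nf
      simp only [F, this, one_mul]; ring
    simp_rw [this]
    rw [integral_const_mul, h, one_div, Real.inv_rpow ht'.le, ← Real.rpow_neg ht'.le]
    ring
  rw [setIntegral_congr_fun measurableSet_Ioi h1, setIntegral_congr_fun measurableSet_Ioi h2,
    integral_const_mul, integral_const_mul] at hswap
  exact hswap

lemma kummer_scale {a c z : ℝ} (hz : 0 < z) :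
    (∫ t in Ioi (0:ℝ), t ^ (c - 1) * Real.exp (-t) * (z + t) ^ (-a)) =
      z ^ (c - a) * ∫ s in Ioi (0:ℝ), Real.exp (-z * s) * s ^ (c - 1) * (1 + s) ^ (-a) := by
  have h := integral_comp_mul_left_Ioi
    (fun t : ℝ => t ^ (c - 1) * Real.exp (-t) * (z + t) ^ (-a)) 0 hz
  rw [mul_zero, smul_eq_mul] at h
  have h1 : ∀ s ∈ Ioi (0:ℝ), (z * s) ^ (c - 1) * Real.exp (-(z * s)) * (z + z * s) ^ (-a) =
      z ^ (c - 1 - a) * (Real.exp (-z * s) * s ^ (c - 1) * (1 + s) ^ (-a)) := by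
    intro s hs
    have hs0 : (0:ℝ) < s := hs
    have e : z + z * s = z * (1 + s) := by ring
    rw [e, Real.mul_rpow hz.le hs0.le, Real.mul_rpow hz.le (by linarith),
      sub_eq_add_neg (c - 1) a, Real.rpow_add hz, neg_mul]
    ring
  rw [setIntegral_congr_fun measurableSet_Ioi h1, integral_const_mul] at h
  have e : z ^ (c - a) = z * z ^ (c - 1 - a) := by
    rw [show c - a = 1 + (c - 1 - a) by ring, Real.rpow_add hz, Real.rpow_one]
  rw [e, mul_assoc, h, mul_inv_cancel_left₀ (ne_of_gt hz)]

/-- Kummer's identity `U(a,b;z) = z^{1-b}·U(1+a-b,2-b;z)` for `a > 0`,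
`b < 1`, `z > 0`, in integral form. -/
theorem stmt8 (a b z : ℝ) (ha : 0 < a) (hb : b < 1) (hz : 0 < z) :
    ((1 / Real.Gamma a) *
        (∫ s in Ioi (0:ℝ), Real.exp (-z * s) * s ^ (a - 1) * (1 + s) ^ (b - a - 1)) =
      z ^ (1 - b) * ((1 / Real.Gamma (1 + a - b)) *
        ∫ s in Ioi (0:ℝ), Real.exp (-z * s) * s ^ (a - b) * (1 + s) ^ (-a))) ∧
    tricomiU a b z = z ^ (1 - b) * tricomiU (1 + a - b) (2 - b) z := by
  have hc : 0 < 1 + a - b := by linarith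
  have key : ((1 / Real.Gamma a) *
        (∫ s in Ioi (0:ℝ), Real.exp (-z * s) * s ^ (a - 1) * (1 + s) ^ (b - a - 1)) =
      z ^ (1 - b) * ((1 / Real.Gamma (1 + a - b)) *
        ∫ s in Ioi (0:ℝ), Real.exp (-z * s) * s ^ (a - b) * (1 + s) ^ (-a))) := by
    have h := kummer_swap ha hc hz
    rw [kummer_scale hz, show -(1 + a - b) = b - a - 1 by ring,
      show 1 + a - b - a = 1 - b by ring, show 1 + a - b - 1 = a - b by ring] at h
    have g1 := (Real.Gamma_pos_of_pos ha).ne'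
    have g2 := (Real.Gamma_pos_of_pos hc).ne'
    generalize (∫ s in Ioi (0:ℝ), Real.exp (-z * s) * s ^ (a - 1) * (1 + s) ^ (b - a - 1)) = I at *
    generalize (∫ s in Ioi (0:ℝ), Real.exp (-z * s) * s ^ (a - b) * (1 + s) ^ (-a)) = J at *
    field_simp
    linarith
  refine ⟨key, ?_⟩
  unfold tricomiU
  rw [key, show 1 + a - b - 1 = a - b by ring, show 2 - b - (1 + a - b) - 1 = -a by ring]
end
end

section
/- Let u be the normalized Airy function. For every λ > 0, the integral ∫₀^∞ u(λ+χ)·u(χ) dχ converges and equals (u'(0)·u(λ) - u'(λ))/(2λ). -/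
open Real MeasureTheory Set Filter Topology

noncomputable section

/-- for the normalized Airy function `u` and every `λ > 0`,
`∫₀^∞ u(λ+χ)·u(χ) dχ = (u'(0)·u(λ) - u'(λ))/(2λ)`. -/
theorem stmt9
    (u : ℝ → ℝ) (hu_smooth : ContDiff ℝ 2 u)
    (hu_ode : ∀ h : ℝ, deriv (deriv u) h = 2 * h * u h)
    (hu_zero : u 0 = 1)
    (hu'_zero : deriv u 0 = -((6:ℝ) ^ ((1:ℝ)/3) * Real.Gamma (2/3) / Real.Gamma (1/3)))
    (hu_pos : ∀ h : ℝ, 0 ≤ h → 0 < u h)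
    (hu_anti : StrictAntiOn u (Ici 0))
    (hu_lim : Tendsto u atTop (𝓝 0))
    (hu'_lim : Tendsto (deriv u) atTop (𝓝 0)) :
    ∀ l : ℝ, 0 < l →
      IntegrableOn (fun χ => u (l + χ) * u χ) (Ioi 0) ∧
      (∫ χ in Ioi (0:ℝ), u (l + χ) * u χ) = (deriv u 0 * u l - deriv u l) / (2 * l) := by
  intro l hl
  have hd1 : ∀ x, HasDerivAt u (deriv u x) x := fun x =>
    ((hu_smooth.differentiable (by norm_num)) x).hasDerivAt
  have hd2 : ∀ x, HasDerivAt (deriv u) (2 * x * u x) x := by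
    intro x
    have h1 : ContDiff ℝ 1 (deriv u) :=
      ((contDiff_succ_iff_deriv (n := 1)).1 (by simpa [one_add_one_eq_two] using hu_smooth)).2.2
    have h2 := ((h1.differentiable (by norm_num)) x).hasDerivAt
    rwa [hu_ode x] at h2
  have hW : ∀ x, HasDerivAt
      (fun χ => (deriv u (l + χ) * u χ - u (l + χ) * deriv u χ) / (2 * l))
      (u (l + x) * u x) x := by
    intro x
    have a1 := (hd1 (l + x)).comp_const_add l x
    have a2 := (hd2 (l + x)).comp_const_add l x
    have h := ((a2.mul (hd1 x)).sub (a1.mul (hd2 x))).div_const (2 * l)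
    refine h.congr_deriv ?_
    field_simp
    ring
  have hshift : Tendsto (fun χ : ℝ => l + χ) atTop atTop :=
    tendsto_atTop_add_const_left _ _ tendsto_id
  have hlim : Tendsto (fun χ => (deriv u (l + χ) * u χ - u (l + χ) * deriv u χ) / (2 * l))
      atTop (𝓝 0) := by
    have := (((hu'_lim.comp hshift).mul hu_lim).sub
      ((hu_lim.comp hshift).mul hu'_lim)).div_const (2 * l)
    simpa using this
  have hnn : ∀ x ∈ Ioi (0:ℝ), 0 ≤ u (l + x) * u x := by
    intro x hx
    have hx' : (0:ℝ) < x := hx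
    exact (mul_pos (hu_pos _ (by linarith)) (hu_pos _ hx'.le)).le
  refine ⟨integrableOn_Ioi_deriv_of_nonneg (hW 0).continuousAt.continuousWithinAt
    (fun x _ => hW x) hnn hlim, ?_⟩
  rw [integral_Ioi_of_hasDerivAt_of_nonneg (hW 0).continuousAt.continuousWithinAt
    (fun x _ => hW x) hnn hlim]
  simp only [add_zero, hu_zero]
  ring
end
end

section
/- Let u be the normalized Airy function. The set of zeros of the function h ↦ u'(-h) on (0,∞) is infinite and discrete; let 0 < δ'₁ < δ'₂ < ... be its increasing enumeration, so δ'ₖ → ∞. Then u'(z) ≠ 0 for all z ≥ 0, the series below converges absolutely, and for every z ≥ 0: u''(z)/u'(z) = -∑_{k=1}^∞ (1/δ'ₖ)·(z/(δ'ₖ + z)). -/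
open Real MeasureTheory Set Filter Topology
noncomputable section


def airyCoef (b : ℝ) : ℕ → ℝ
  | 0 => 1
  | 1 => b
  | 2 => 0
  | n+3 => 2 * airyCoef b n / ((n+3)*(n+2))

/-- decays faster than every geometric sequence -/
def FastDecay (c : ℕ → ℂ) : Prop := ∀ r : ℝ, 0 < r → ∃ M : ℝ, ∀ n, ‖c n‖ ≤ M * r ^ n

theorem FastDecay.shift {c : ℕ → ℂ} (h : FastDecay c) :
    FastDecay (fun n => (n + 1 : ℂ) * c (n + 1)) := by
  intro r hr
  obtain ⟨M, hM⟩ := h (r / 2) (by positivity)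
  have hM0 : 0 ≤ M := by simpa using (norm_nonneg _).trans (hM 0)
  refine ⟨M * r, fun n => ?_⟩
  have h1 : ‖(n + 1 : ℂ)‖ = (n + 1 : ℝ) := by
    have : (n + 1 : ℂ) = ((n + 1 : ℕ) : ℂ) := by push_cast; rfl
    rw [this, Complex.norm_natCast]; push_cast; rfl
  rw [norm_mul, h1]
  have h2 : (n + 1 : ℝ) ≤ 2 ^ (n + 1) := by
    exact_mod_cast (Nat.lt_two_pow_self (n := n + 1)).le
  calc (n + 1 : ℝ) * ‖c (n + 1)‖ ≤ 2 ^ (n + 1) * (M * (r / 2) ^ (n + 1)) :=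
        mul_le_mul h2 (hM _) (norm_nonneg _) (by positivity)
    _ = M * r * r ^ n := by rw [div_pow]; field_simp; ring

theorem FastDecay.summable {c : ℕ → ℂ} (h : FastDecay c) (z : ℂ) :
    Summable (fun n => c n * z ^ n) := by
  obtain ⟨M, hM⟩ := h (1 / (2 * (‖z‖ + 1))) (by positivity)
  have hM0 : 0 ≤ M := by simpa using (norm_nonneg _).trans (hM 0)
  refine Summable.of_norm_bounded (g := fun n => M * (1 / 2 : ℝ) ^ n)
    (summable_geometric_two.mul_left M) fun n => ?_
  rw [norm_mul, norm_pow]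
  calc ‖c n‖ * ‖z‖ ^ n ≤ (M * (1 / (2 * (‖z‖ + 1))) ^ n) * (‖z‖ + 1) ^ n := by
        gcongr
        · exact hM n
        · linarith
    _ = M * (1 / 2 : ℝ) ^ n := by
        rw [mul_assoc, ← mul_pow]; congr 2; field_simp

theorem FastDecay.hasDerivAt {c : ℕ → ℂ} (h : FastDecay c) (z : ℂ) :
    HasDerivAt (fun z => ∑' n, c n * z ^ n) (∑' n : ℕ, ((n + 1 : ℂ) * c (n + 1)) * z ^ n) z := by
  set R : ℝ := ‖z‖ + 1
  have hR : 0 < R := by positivity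
  obtain ⟨M, hM⟩ := h.shift (1 / (2 * R)) (by positivity)
  have key := hasDerivAt_tsum_of_isPreconnected (𝕜 := ℂ) (t := Metric.ball (0:ℂ) R) (y₀ := 0) (y := z)
    (g := fun n z => c n * z ^ n) (g' := fun n z => c n * (n * z ^ (n - 1)))
    (u := fun n => M * 2 * (1 / 2 : ℝ) ^ n) ?_ Metric.isOpen_ball
    (convex_ball _ _).isPreconnected ?_ ?_ (by simpa using hR) (h.summable 0) (by simp [R])
  · refine key.congr_deriv ?_
    rw [Summable.tsum_eq_zero_add]
    · simp; congr; ext n; ring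
    · rw [← summable_nat_add_iff 1]
      refine (h.shift.summable z).congr fun n => ?_
      simp; ring
  · exact summable_geometric_two.mul_left _
  · intro n y _
    exact (hasDerivAt_pow n y).const_mul _
  · intro n y hy
    have hM0 : 0 ≤ M := by simpa using (norm_nonneg _).trans (hM 0)
    cases n with
    | zero => simp; positivity
    | succ n =>
      have := hM n
      have hy' : ‖y‖ ≤ R := by simpa using (mem_ball_zero_iff.1 hy).le
      calc ‖c (n+1) * (((n+1:ℕ):ℂ) * y ^ (n + 1 - 1))‖ = ‖(n + 1 : ℂ) * c (n + 1)‖ * ‖y‖ ^ n := by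
            simp; ring
        _ ≤ (M * (1 / (2 * R)) ^ n) * R ^ n := by gcongr
        _ = M * (1 / 2 : ℝ) ^ n := by
            rw [mul_assoc, ← mul_pow]; congr 2; field_simp
        _ = _ := by ring

theorem airyCoef_fast (b : ℝ) : FastDecay (fun n => (airyCoef b n : ℂ)) := by
  intro r hr
  obtain ⟨N, hN⟩ := exists_nat_gt (2 / r ^ 3)
  have hN' : 2 < N * r ^ 3 := by rwa [div_lt_iff₀ (by positivity)] at hN
  refine ⟨∑ i ∈ Finset.range (N + 3), |airyCoef b i| / r ^ i, fun n => ?_⟩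
  set M := ∑ i ∈ Finset.range (N + 3), |airyCoef b i| / r ^ i
  have hsmall : ∀ n < N + 3, |airyCoef b n| ≤ M * r ^ n := by
    intro n hn
    rw [← div_le_iff₀ (by positivity)]
    exact Finset.single_le_sum (f := fun i => |airyCoef b i| / r ^ i)
      (fun i _ => by positivity) (Finset.mem_range.2 hn)
  have : |airyCoef b n| ≤ M * r ^ n := by
    induction n using Nat.strong_induction_on with
    | _ n ih =>
      by_cases hn : n < N + 3
      · exact hsmall n hn
      · obtain ⟨m, rfl⟩ : ∃ m, n = m + 3 := ⟨n - 3, by omega⟩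
        have hm : (N:ℝ) ≤ m := by exact_mod_cast (by omega : N ≤ m)
        have h1 := ih m (by omega)
        rw [airyCoef, abs_div, abs_mul, abs_of_pos (by positivity : (0:ℝ) < (m+3)*(m+2)),
          div_le_iff₀ (by positivity), abs_two]
        have h2 : 2 ≤ r ^ 3 * (((m:ℝ)+3)*(m+2)) := by
          have : (N:ℝ) * r ^ 3 ≤ r ^ 3 * (((m:ℝ)+3)*(m+2)) := by
            rw [mul_comm]; gcongr; nlinarith [(Nat.cast_nonneg m : (0:ℝ) ≤ m)]
          linarith
        calc 2 * |airyCoef b m| ≤ (r ^ 3 * (((m:ℝ)+3)*(m+2))) * (M * r ^ m) :=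
              mul_le_mul h2 h1 (abs_nonneg _) (by positivity)
          _ = _ := by ring
  simpa using this

theorem exists_airy (b : ℝ) : ∃ U V : ℂ → ℂ, (∀ z, HasDerivAt U (V z) z) ∧
    (∀ z, HasDerivAt V (2 * z * U z) z) ∧ U 0 = 1 ∧ V 0 = b ∧
    (∀ z, U (starRingEnd ℂ z) = starRingEnd ℂ (U z)) ∧
    (∀ z, V (starRingEnd ℂ z) = starRingEnd ℂ (V z)) := by
  have h0 := airyCoef_fast b
  refine ⟨fun z => ∑' n, (airyCoef b n : ℂ) * z ^ n,
    fun z => ∑' n : ℕ, ((n + 1 : ℂ) * (airyCoef b (n + 1) : ℂ)) * z ^ n,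
    h0.hasDerivAt, ?_, ?_, ?_, ?_, ?_⟩
  · intro z
    convert h0.shift.hasDerivAt z using 1
    rw [(h0.shift.shift.summable z).tsum_eq_zero_add, ← tsum_mul_left]
    simp only [airyCoef]
    simp
    congr; ext n
    have : (n:ℂ) + 1 + 1 + 1 ≠ 0 := by exact_mod_cast (by positivity : (n:ℝ)+1+1+1 ≠ 0)
    have : (n:ℂ) + 1 + 1  ≠ 0 := by exact_mod_cast (by positivity : (n:ℝ)+1+1 ≠ 0)
    have : (n:ℂ) + 3 ≠ 0 := by exact_mod_cast (by positivity : (n:ℝ)+3 ≠ 0)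
    have : (n:ℂ) + 2 ≠ 0 := by exact_mod_cast (by positivity : (n:ℝ)+2 ≠ 0)
    field_simp
    ring
  · simp only []
    rw [tsum_eq_single 0 (by intro n hn; simp [hn])]; simp [airyCoef]
  · simp only []
    rw [tsum_eq_single 0 (by intro n hn; simp [hn])]; simp [airyCoef]
  · intro z; simp only []
    rw [Complex.conj_tsum]; simp
  · intro z; simp only []
    rw [Complex.conj_tsum]; simp

theorem airy_real_eq (u : ℝ → ℝ) (hu_smooth : ContDiff ℝ 2 u)
    (hu_ode : ∀ h : ℝ, deriv (deriv u) h = 2 * h * u h) (hu_zero : u 0 = 1)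
    {U V : ℂ → ℂ} (hU : ∀ z, HasDerivAt U (V z) z) (hV : ∀ z, HasDerivAt V (2 * z * U z) z)
    (hU0 : U 0 = 1) (hV0 : V 0 = deriv u 0) (x : ℝ) :
    U x = u x ∧ V x = deriv u x := by
  have hu1 : ∀ x, HasDerivAt u (deriv u x) x := fun x =>
    ((hu_smooth.differentiable (by norm_num)) x).hasDerivAt
  have hu2 : ∀ x, HasDerivAt (deriv u) (2 * x * u x) x := fun x => by
    rw [← hu_ode]
    have : ContDiff ℝ 1 (deriv u) := by
      have := (contDiff_succ_iff_deriv (n := 1) (f := u)).1 (by simpa [one_add_one_eq_two] using hu_smooth)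
      exact this.2.2
    exact ((this.differentiable (by norm_num)) x).hasDerivAt
  set T : ℝ := |x| + 1
  have hT : 0 < T := by positivity
  have hx : x ∈ Ioo (-T) T := by rw [mem_Ioo, ← abs_lt]; simp [T]
  have key := ODE_solution_unique_of_mem_Ioo (E := ℂ × ℂ) (a := -T) (b := T) (t₀ := 0)
    (v := fun t p => (p.2, 2 * (t:ℂ) * p.1)) (s := fun _ => univ) (K := (2 * T + 1).toNNReal)
    (f := fun t => (U t, V t)) (g := fun t => (((u t : ℝ) : ℂ), ((deriv u t : ℝ) : ℂ))) ?_ ?_ ?_ ?_ ?_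
  · have := key hx
    simpa using this
  · intro t ht
    refine LipschitzWith.lipschitzOnWith ?_
    refine LipschitzWith.of_dist_le_mul fun p q => ?_
    rw [Real.coe_toNNReal _ (by positivity), dist_eq_norm, dist_eq_norm, Prod.norm_def]
    have ht' : |t| ≤ T := (abs_lt.2 ht).le
    apply max_le
    · simp only [Prod.fst_sub]
      calc ‖p.2 - q.2‖ ≤ ‖p - q‖ := norm_snd_le (p - q)
        _ ≤ _ := by nlinarith [norm_nonneg (p - q)]
    · simp only [Prod.snd_sub]
      rw [← mul_sub, norm_mul, norm_mul, Complex.norm_real, Real.norm_eq_abs, Complex.norm_ofNat]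
      have := norm_fst_le (p - q)
      calc 2 * |t| * ‖p.1 - q.1‖ ≤ 2 * T * ‖p - q‖ := by gcongr; exact this
        _ ≤ _ := by nlinarith [norm_nonneg (p - q)]
  · simp [hT]
  · intro t _
    exact ⟨((hU t).comp_ofReal).prodMk (hV t).comp_ofReal, mem_univ _⟩
  · intro t _
    refine ⟨?_, mem_univ _⟩
    have h1 := (hu1 t).ofReal_comp
    have h2 := (hu2 t).ofReal_comp
    push_cast at h2
    exact h1.prodMk h2
  · simp [hU0, hV0, hu_zero]

theorem exists_hasDeriv2 (u : ℝ → ℝ) (hu_smooth : ContDiff ℝ 2 u)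
    (hu_ode : ∀ h : ℝ, deriv (deriv u) h = 2 * h * u h) :
    (∀ x, HasDerivAt u (deriv u x) x) ∧ (∀ x, HasDerivAt (deriv u) (2 * x * u x) x) := by
  constructor
  · exact fun x => ((hu_smooth.differentiable (by norm_num)) x).hasDerivAt
  · intro x
    rw [← hu_ode]
    have : ContDiff ℝ 1 (deriv u) := by
      have := (contDiff_succ_iff_deriv (n := 1) (f := u)).1 (by simpa [one_add_one_eq_two] using hu_smooth)
      exact this.2.2
    exact ((this.differentiable (by norm_num)) x).hasDerivAt

section real
variable {u v : ℝ → ℝ} (hu1 : ∀ x, HasDerivAt u (v x) x)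
  (hu2 : ∀ x, HasDerivAt v (2 * x * u x) x)
  (hpos : ∀ h : ℝ, 0 ≤ h → 0 < u h)
  (hanti : StrictAntiOn u (Ici 0)) (hlim : Tendsto u atTop (𝓝 0))

include hu2 hpos in
theorem v_mono : MonotoneOn v (Ici 0) := by
  apply monotoneOn_of_deriv_nonneg (convex_Ici 0)
  · exact fun x _ => (hu2 x).continuousAt.continuousWithinAt
  · exact fun x _ => (hu2 x).differentiableAt.differentiableWithinAt
  · intro x hx
    rw [interior_Ici] at hx
    rw [(hu2 x).deriv]
    have := hpos x hx.le
    have : 0 < x := hx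
    positivity

include hu1 hu2 hpos in
theorem v_lower {x : ℝ} (hx : 1 ≤ x) : -u (x - 1) ≤ v x := by
  obtain ⟨c, hc, hc'⟩ := exists_hasDerivAt_eq_slope u v (by linarith : x - 1 < x)
    (fun x _ => (hu1 x).continuousAt.continuousWithinAt) (fun x _ => hu1 x)
  have h1 := v_mono hu2 hpos (a := c) (b := x) (by simp; linarith [hc.1]) (by simp; linarith) hc.2.le
  have h2 := hpos x (by linarith)
  rw [hc', sub_sub_cancel, div_one] at h1
  linarith

include hu1 hanti in
theorem v_nonpos {x : ℝ} (hx : 0 ≤ x) : v x ≤ 0 := by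
  have h := (hu1 x).hasDerivWithinAt (s := Ioi x)
  rw [hasDerivWithinAt_iff_tendsto_slope' self_notMem_Ioi] at h
  refine le_of_tendsto h ?_
  filter_upwards [self_mem_nhdsWithin] with y hy
  have hy' : x < y := hy
  have := hanti (a := x) (b := y) hx (by simp; linarith) hy'
  rw [slope_def_field]
  exact div_nonpos_of_nonpos_of_nonneg (by linarith) (by linarith)

include hu1 hu2 hpos hanti hlim in
theorem v_lim : Tendsto v atTop (𝓝 0) := by
  refine tendsto_of_tendsto_of_tendsto_of_le_of_le' (g := fun x => -u (x - 1)) (h := fun _ => 0)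
    ?_ tendsto_const_nhds ?_ ?_
  · simpa [sub_eq_add_neg] using (hlim.comp (tendsto_atTop_add_const_right _ (-1) tendsto_id)).neg
  · filter_upwards [eventually_ge_atTop 1] with x hx using v_lower hu1 hu2 hpos hx
  · filter_upwards [eventually_ge_atTop 0] with x hx using v_nonpos hu1 hanti hx

include hu1 hu2 hpos hanti hlim in
theorem v_le {a x : ℝ} (ha : 0 < a) (hx : a ^ 2 ≤ 2 * x) : v x ≤ -a * u x := by
  by_contra hcon
  push Not at hcon
  have hx0 : 0 ≤ x := by nlinarith
  have hmono : MonotoneOn (fun t => (v t + a * u t) * Real.exp (-(a * t))) (Ici x) := by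
    have hd : ∀ t, HasDerivAt (fun t => (v t + a * u t) * Real.exp (-(a * t)))
        ((2 * t * u t + a * v t) * Real.exp (-(a * t)) + (v t + a * u t) *
          (Real.exp (-(a * t)) * (-(a * 1)))) t := fun t =>
      ((hu2 t).add ((hu1 t).const_mul a)).mul (((hasDerivAt_id t).const_mul a).neg.exp)
    apply monotoneOn_of_deriv_nonneg (convex_Ici x)
    · exact fun t _ => (hd t).continuousAt.continuousWithinAt
    · exact fun t _ => (hd t).differentiableAt.differentiableWithinAt
    · intro t ht
      rw [interior_Ici] at ht
      have ht' : x < t := ht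
      rw [(hd t).deriv]
      have h1 := hpos t (by linarith)
      have : (2 * t * u t + a * v t) * Real.exp (-(a * t)) + (v t + a * u t) *
          (Real.exp (-(a * t)) * (-(a * 1))) = (2 * t - a ^ 2) * u t * Real.exp (-(a * t)) := by ring
      rw [this]
      have : 0 ≤ 2 * t - a ^ 2 := by linarith
      positivity
  have hp : 0 < v x + a * u x := by linarith
  have hge : ∀ t, x ≤ t → v x + a * u x ≤ v t + a * u t := by
    intro t ht
    have h1 := hmono (a := x) (b := t) (by simp) ht ht
    simp only at h1
    have h2 : Real.exp (-(a * t)) ≤ Real.exp (-(a * x)) := by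
      apply Real.exp_le_exp.2; nlinarith
    have h3 := Real.exp_pos (-(a * x))
    have h4 : 0 ≤ v t + a * u t := by
      by_contra h
      push Not at h
      have : 0 < (v x + a * u x) * Real.exp (-(a * x)) := by positivity
      nlinarith [mul_neg_of_neg_of_pos h (Real.exp_pos (-(a*t)))]
    have h5 : (v x + a * u x) * Real.exp (-(a * x)) ≤ (v t + a * u t) * Real.exp (-(a * x)) :=
      h1.trans (by gcongr)
    exact le_of_mul_le_mul_right h5 h3
  have hl : Tendsto (fun t => v t + a * u t) atTop (𝓝 0) := by
    simpa using (v_lim hu1 hu2 hpos hanti hlim).add (hlim.const_mul a)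
  have := ge_of_tendsto hl (by filter_upwards [eventually_ge_atTop x] with t ht using hge t ht)
  linarith

include hu1 hu2 hpos hanti hlim in
theorem u_decay {x : ℝ} (hx : 2 ≤ x) : u x ≤ (u 2 * Real.exp 4) * Real.exp (-(2 * x)) := by
  have hd : ∀ t, HasDerivAt (fun t => u t * Real.exp (2 * t))
        (v t * Real.exp (2 * t) + u t * (Real.exp (2 * t) * (2 * 1))) t := fun t =>
      (hu1 t).mul (((hasDerivAt_id t).const_mul 2).exp)
  have hmono : AntitoneOn (fun t => u t * Real.exp (2 * t)) (Ici 2) := by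
    apply antitoneOn_of_deriv_nonpos (convex_Ici 2)
    · exact fun t _ => (hd t).continuousAt.continuousWithinAt
    · exact fun t _ => (hd t).differentiableAt.differentiableWithinAt
    · intro t ht
      rw [interior_Ici] at ht
      have ht' : 2 < t := ht
      rw [(hd t).deriv]
      have h1 := v_le hu1 hu2 hpos hanti hlim (a := 2) (x := t) (by norm_num) (by nlinarith)
      nlinarith [Real.exp_pos (2 * t)]
  have h1 := hmono (a := 2) (b := x) (by simp) hx hx
  simp only at h1
  rw [Real.exp_neg, ← div_eq_mul_inv, le_div_iff₀ (Real.exp_pos _)]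
  convert h1 using 3
  norm_num

include hu1 hu2 hpos hanti hlim in
/-- the energy decays exponentially -/
theorem energy_decay : ∃ C : ℝ, 0 ≤ C ∧ ∀ x, 3 ≤ x →
    2 * x * u x ^ 2 + v x ^ 2 ≤ (C * Real.exp (-x)) ^ 2 := by
  set D := u 2 * Real.exp 4
  have hD : 0 < D := mul_pos (hpos 2 (by norm_num)) (Real.exp_pos _)
  refine ⟨D * (2 + Real.exp 2), by positivity, fun x hx => ?_⟩
  have h1 := u_decay hu1 hu2 hpos hanti hlim (x := x) (by linarith)
  have h2 := u_decay hu1 hu2 hpos hanti hlim (x := x - 1) (by linarith)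
  have h3 := v_lower hu1 hu2 hpos (x := x) (by linarith)
  have h4 := v_nonpos hu1 hanti (x := x) (by linarith)
  have h5 := hpos x (by linarith)
  change u x ≤ D * _ at h1
  change _ ≤ D * _ at h2
  have e1 : Real.exp (-(2 * x)) = Real.exp (-x) * Real.exp (-x) := by rw [← Real.exp_add]; ring_nf
  have e2 : Real.exp (-(2 * (x - 1))) = Real.exp 2 * (Real.exp (-x) * Real.exp (-x)) := by
    rw [← Real.exp_add, ← Real.exp_add]; ring_nf
  rw [e1] at h1
  rw [e2] at h2
  have h6 : x * Real.exp (-x) ≤ 1 := by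
    rw [Real.exp_neg, ← div_eq_mul_inv, div_le_one (Real.exp_pos _)]
    linarith [Real.add_one_le_exp x]
  set E := Real.exp (-x)
  have hE : 0 < E := Real.exp_pos _
  have hE1 : E ≤ 1 := by nlinarith
  have h7 : 2 * x * u x ^ 2 ≤ 2 * (D * E) ^ 2 := by
    calc 2 * x * u x ^ 2 ≤ 2 * x * (D * (E * E)) ^ 2 := by gcongr
      _ = 2 * (D * E) ^ 2 * ((x * E) * E) := by ring
      _ ≤ 2 * (D * E) ^ 2 * (1 * 1) := by gcongr
      _ = _ := by ring
  have h8 : v x ^ 2 ≤ (D * Real.exp 2 * E) ^ 2 := by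
    apply sq_le_sq'
    · have : D * (Real.exp 2 * (E * E)) ≤ D * Real.exp 2 * E := by
        have : 0 < D * Real.exp 2 * E := by positivity
        nlinarith
      linarith
    · have : 0 < D * Real.exp 2 * E := by positivity
      linarith
  have h9 : 0 < D * E * (D * Real.exp 2 * E) := by positivity
  nlinarith
end real

section cplx
variable {u v : ℝ → ℝ} (hu1 : ∀ x, HasDerivAt u (v x) x)
  (hu2 : ∀ x, HasDerivAt v (2 * x * u x) x)
  (hpos : ∀ h : ℝ, 0 ≤ h → 0 < u h)
  (hanti : StrictAntiOn u (Ici 0)) (hlim : Tendsto u atTop (𝓝 0))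
  {U V : ℂ → ℂ} (hU : ∀ z, HasDerivAt U (V z) z) (hV : ∀ z, HasDerivAt V (2 * z * U z) z)
  (hUu : ∀ x : ℝ, U x = u x) (hVv : ∀ x : ℝ, V x = v x)

include hU hV in
/-- vertical Gronwall estimate, `s ∈ [0,1]` along the direction `y` -/
theorem vertical {x y : ℝ} (hx : 1 ≤ x) :
    2 * x * ‖U (x + y * Complex.I)‖ ^ 2 + ‖V (x + y * Complex.I)‖ ^ 2 ≤
    (2 * x * ‖U x‖ ^ 2 + ‖V x‖ ^ 2) * Real.exp (2 * y ^ 2) := by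
  set w : ℝ → ℂ := fun s => x + (s * y : ℝ) * Complex.I
  have hw : ∀ s, HasDerivAt w (y * Complex.I) s := by
    intro s
    have h1 : HasDerivAt (fun s : ℝ => ((s * y : ℝ) : ℂ)) ((1 * y : ℝ) : ℂ) s :=
      HasDerivAt.ofReal_comp ((hasDerivAt_id s).mul_const y)
    exact ((h1.mul_const Complex.I).const_add (x:ℂ)).congr_deriv (by simp)
  have hUw : ∀ s, HasDerivAt (fun s => U (w s)) (V (w s) * (y * Complex.I)) s := fun s =>
    (hU (w s)).comp s (hw s)
  have hVw : ∀ s, HasDerivAt (fun s => V (w s)) (2 * w s * U (w s) * (y * Complex.I)) s := fun s =>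
    (hV (w s)).comp s (hw s)
  have re' : ∀ {f : ℝ → ℂ} {f' : ℂ} {s : ℝ}, HasDerivAt f f' s → HasDerivAt (fun s => (f s).re) f'.re s :=
    fun h => Complex.reCLM.hasFDerivAt.comp_hasDerivAt _ h
  have im' : ∀ {f : ℝ → ℂ} {f' : ℂ} {s : ℝ}, HasDerivAt f f' s → HasDerivAt (fun s => (f s).im) f'.im s :=
    fun h => Complex.imCLM.hasFDerivAt.comp_hasDerivAt _ h
  set q : ℝ → ℝ := fun s => 2 * x * ((U (w s)).re ^ 2 + (U (w s)).im ^ 2) +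
    ((V (w s)).re ^ 2 + (V (w s)).im ^ 2) with hq
  set q' : ℝ → ℝ := fun s => -4 * s * y ^ 2 * ((U (w s)).re * (V (w s)).re + (U (w s)).im * (V (w s)).im)
  have hqd : ∀ s, HasDerivAt q (q' s) s := by
    intro s
    have := ((((re' (hUw s)).pow 2).add ((im' (hUw s)).pow 2)).const_mul (2 * x)).add
      (((re' (hVw s)).pow 2).add ((im' (hVw s)).pow 2))
    refine this.congr_deriv ?_
    simp [q', w]
    ring
  have hqnn : ∀ s, 0 ≤ q s := fun s => by positivity
  have hbound : ∀ s ∈ Ico (0:ℝ) 1, ‖q' s‖ ≤ (2 * y ^ 2) * ‖q s‖ + 0 := by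
    intro s hs
    rw [add_zero, Real.norm_of_nonneg (hqnn s), Real.norm_eq_abs]
    simp only [q', q]
    generalize (U (w s)).re = a
    generalize (U (w s)).im = b
    generalize (V (w s)).re = c
    generalize (V (w s)).im = d
    have h1 : |a * c + b * d| ≤ (x * (a^2+b^2) + (c^2+d^2)/2) := by
      rw [abs_le]
      constructor <;> nlinarith [sq_nonneg (a+c), sq_nonneg (a-c), sq_nonneg (b+d), sq_nonneg (b-d), sq_nonneg a, sq_nonneg b]
    rw [abs_mul]
    have h2 : |-4 * s * y ^ 2| ≤ 4 * y ^ 2 := by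
      rw [abs_mul, abs_mul, abs_of_nonneg (sq_nonneg y), abs_of_nonneg hs.1]
      norm_num
      nlinarith [sq_nonneg y, hs.2]
    calc _ ≤ 4 * y ^ 2 * (x * (a^2+b^2) + (c^2+d^2)/2) := by gcongr
      _ = _ := by ring
  have := norm_le_gronwallBound_of_norm_deriv_right_le (f := q) (f' := q') (δ := q 0) (K := 2 * y ^ 2)
    (ε := 0) (a := 0) (b := 1) (fun s _ => (hqd s).continuousAt.continuousWithinAt)
    (fun s _ => (hqd s).hasDerivWithinAt) (by rw [Real.norm_of_nonneg (hqnn 0)]) hbound 1 (by simp)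
  rw [gronwallBound_ε0, Real.norm_of_nonneg (hqnn 1)] at this
  have nsq : ∀ z : ℂ, ‖z‖ ^ 2 = z.re ^ 2 + z.im ^ 2 := fun z => by
    rw [Complex.sq_norm, Complex.normSq_apply]; ring
  simpa [q, w, nsq] using this

include hu1 hu2 hpos hanti hlim hU hV hUu hVv in
theorem UV_isBigO (z : ℂ) :
    ((fun t : ℝ => U (t + z)) =O[atTop] fun t => Real.exp (-t)) ∧
    ((fun t : ℝ => V (t + z)) =O[atTop] fun t => Real.exp (-t)) := by
  obtain ⟨C, hC, hCx⟩ := energy_decay hu1 hu2 hpos hanti hlim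
  set K : ℝ := C * Real.exp (-z.re) * Real.exp (z.im ^ 2)
  have hK : 0 ≤ K := by positivity
  have main : ∀ t : ℝ, 3 - z.re ≤ t → ‖U (t + z)‖ ^ 2 + ‖V (t + z)‖ ^ 2 ≤ (K * Real.exp (-t)) ^ 2 := by
    intro t ht
    have hx : 3 ≤ t + z.re := by linarith
    have h1 := vertical hU hV (x := t + z.re) (y := z.im) (by linarith)
    have e : ((t + z.re : ℝ) : ℂ) + z.im * Complex.I = t + z := by
      apply Complex.ext <;> simp
    rw [e, hUu, hVv, Complex.norm_real, Complex.norm_real, Real.norm_eq_abs, Real.norm_eq_abs, sq_abs, sq_abs] at h1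
    have h2 := hCx _ hx
    calc ‖U (t + z)‖ ^ 2 + ‖V (t + z)‖ ^ 2 ≤ 2 * (t + z.re) * ‖U (t + z)‖ ^ 2 + ‖V (t + z)‖ ^ 2 := by
          nlinarith [sq_nonneg ‖U (t + z)‖]
      _ ≤ _ := h1
      _ ≤ (C * Real.exp (-(t + z.re))) ^ 2 * Real.exp (2 * z.im ^ 2) := by gcongr
      _ = (K * Real.exp (-t)) ^ 2 := by
        have e1 : Real.exp (2 * z.im ^ 2) = Real.exp (z.im ^ 2) ^ 2 := by
          rw [← Real.exp_nat_mul]; norm_num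
        have e2 : Real.exp (-(t + z.re)) = Real.exp (-t) * Real.exp (-z.re) := by
          rw [← Real.exp_add]; ring_nf
        rw [e1, e2]; simp only [K]; ring
  constructor
  · refine Asymptotics.IsBigO.of_bound K ?_
    filter_upwards [eventually_ge_atTop (3 - z.re)] with t ht
    rw [Real.norm_of_nonneg (Real.exp_pos _).le]
    refine le_of_sq_le_sq ?_ (by positivity)
    have := main t ht
    nlinarith [sq_nonneg ‖V (t + z)‖]
  · refine Asymptotics.IsBigO.of_bound K ?_
    filter_upwards [eventually_ge_atTop (3 - z.re)] with t ht
    rw [Real.norm_of_nonneg (Real.exp_pos _).le]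
    refine le_of_sq_le_sq ?_ (by positivity)
    have := main t ht
    nlinarith [sq_nonneg ‖U (t + z)‖]
end cplx

theorem abs_sin_nat_mul_le' (n : ℕ) (θ : ℝ) : |Real.sin (n * θ)| ≤ n * |Real.sin θ| := by
  induction n with
  | zero => simp
  | succ n ih =>
    have : ((n + 1 : ℕ) : ℝ) * θ = n * θ + θ := by push_cast; ring
    rw [this, Real.sin_add]
    calc _ ≤ |Real.sin (n * θ) * Real.cos θ| + |Real.cos (n * θ) * Real.sin θ| := abs_add_le _ _
      _ ≤ |Real.sin (n * θ)| * 1 + 1 * |Real.sin θ| := by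
        rw [abs_mul, abs_mul]
        gcongr
        · exact Real.abs_cos_le_one _
        · exact Real.abs_cos_le_one _
      _ ≤ _ := by push_cast; linarith

theorem coef_formula {f : ℂ → ℂ} {r : ℝ} (hr : 0 < r)
    (hf : DifferentiableOn ℂ f (Metric.closedBall 0 r)) (n : ℕ) (hn : 1 ≤ n) :
    (cauchyPowerSeries f 0 r n fun _ => (1:ℂ)).re * r ^ n =
      π⁻¹ * ∫ θ in (0:ℝ)..2 * π, Real.sin (n * θ) * (f (circleMap 0 r θ)).im := by
  have hcont : Continuous fun θ => f (circleMap 0 r θ) := by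
    apply hf.continuousOn.comp_continuous (continuous_circleMap 0 r)
    intro θ; exact circleMap_mem_closedBall 0 hr.le θ
  have hc1 : Continuous fun θ : ℝ => Complex.exp (n * θ * Complex.I) := by fun_prop
  have hc2 : Continuous fun θ : ℝ => Complex.exp (-(n * θ * Complex.I)) := by fun_prop
  have h1 : (∮ z in C(0, r), z ^ (n - 1) * f z) = 0 := by
    apply Complex.circleIntegral_eq_zero_of_differentiable_on_off_countable hr.le countable_empty
    · exact (continuous_pow _).continuousOn.mul hf.continuousOn
    · intro z hz
      have : f =ᶠ[𝓝 z] f := EventuallyEq.rfl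
      refine (differentiableAt_pow _).mul (hf.differentiableAt ?_)
      exact mem_of_superset (Metric.isOpen_ball.mem_nhds hz.1) Metric.ball_subset_closedBall
  have h2 := cauchyPowerSeries_apply f 0 r n 1
  rw [circleIntegral] at h1 h2
  have hr' : (r:ℂ) ≠ 0 := by exact_mod_cast hr.ne'
  have e1 : ∀ θ : ℝ, deriv (circleMap 0 r) θ • ((circleMap 0 r θ) ^ (n-1) * f (circleMap 0 r θ))
      = (Complex.I * r ^ n) * (Complex.exp (n * θ * Complex.I) * f (circleMap 0 r θ)) := by
    intro θ
    obtain ⟨m, rfl⟩ : ∃ m, n = m + 1 := ⟨n - 1, by omega⟩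
    have : Complex.exp (((m+1:ℕ):ℂ) * θ * Complex.I) = Complex.exp (θ * Complex.I) ^ (m+1) := by
      rw [← Complex.exp_nat_mul]; congr 1; ring
    rw [this, deriv_circleMap]
    simp only [circleMap, smul_eq_mul, Nat.add_sub_cancel, zero_add]
    ring
  have e2 : ∀ θ : ℝ, deriv (circleMap 0 r) θ • ((1 / (circleMap 0 r θ - 0)) ^ n •
      (circleMap 0 r θ - 0)⁻¹ • f (circleMap 0 r θ))
      = (Complex.I * ((r:ℂ) ^ n)⁻¹) * (Complex.exp (-(n * θ * Complex.I)) * f (circleMap 0 r θ)) := by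
    intro θ
    have : Complex.exp (-(n * θ * Complex.I)) = (Complex.exp (θ * Complex.I) ^ n)⁻¹ := by
      rw [← Complex.exp_nat_mul, ← Complex.exp_neg]; congr 1; ring
    rw [this, deriv_circleMap]
    simp only [circleMap, smul_eq_mul, zero_add, sub_zero]
    have := Complex.exp_ne_zero (θ * Complex.I)
    rw [one_div, inv_pow, mul_pow]
    field_simp
  simp only [e1] at h1
  simp only [e2] at h2
  rw [intervalIntegral.integral_const_mul] at h1 h2
  have h1' : ∫ θ in (0:ℝ)..2 * π, Complex.exp (n * θ * Complex.I) * f (circleMap 0 r θ) = 0 := by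
    rcases mul_eq_zero.1 h1 with h | h
    · simp [hr'] at h
    · exact h
  have h3 : (∫ θ in (0:ℝ)..2 * π, (Complex.exp (-(n * θ * Complex.I)) * f (circleMap 0 r θ)
      - Complex.exp (n * θ * Complex.I) * f (circleMap 0 r θ))) =
      2 * π * r ^ n * (cauchyPowerSeries f 0 r n fun _ => (1:ℂ)) := by
    rw [intervalIntegral.integral_sub, h1', h2]
    · have : (π:ℂ) ≠ 0 := by exact_mod_cast pi_ne_zero
      simp only [smul_eq_mul]
      generalize (∫ θ in (0:ℝ)..2 * π, Complex.exp (-(n * θ * Complex.I)) * f (circleMap 0 r θ)) = J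
      field_simp
      simp
    · exact (hc2.mul hcont).intervalIntegrable _ _
    · exact (hc1.mul hcont).intervalIntegrable _ _
  have h4 := congrArg Complex.re h3
  have h5 := Complex.reCLM.intervalIntegral_comp_comm (a := 0) (b := 2 * π) (μ := volume)
    (f := fun θ : ℝ => (Complex.exp (-(n * θ * Complex.I)) * f (circleMap 0 r θ)
      - Complex.exp (n * θ * Complex.I) * f (circleMap 0 r θ)))
    (((hc2.mul hcont).sub (hc1.mul hcont)).intervalIntegrable _ _)
  simp only [Complex.reCLM_apply] at h5
  rw [← h5] at h4
  have e3 : ∀ θ : ℝ, (Complex.exp (-(n * θ * Complex.I)) * f (circleMap 0 r θ)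
      - Complex.exp (n * θ * Complex.I) * f (circleMap 0 r θ)).re =
      2 * (Real.sin (n * θ) * (f (circleMap 0 r θ)).im) := by
    intro θ
    have a1 : Complex.exp (n * θ * Complex.I) = Real.cos (n * θ) + Real.sin (n * θ) * Complex.I := by
      rw [Complex.exp_mul_I]; push_cast; rfl
    have a2 : Complex.exp (-(n * θ * Complex.I)) = Real.cos (n * θ) - Real.sin (n * θ) * Complex.I := by
      rw [← neg_mul, Complex.exp_mul_I, Complex.cos_neg, Complex.sin_neg]; push_cast; ring
    rw [a1, a2, ← sub_mul]
    simp [-Complex.ofReal_cos, -Complex.ofReal_sin]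
    ring
  simp only [e3] at h4
  rw [intervalIntegral.integral_const_mul] at h4
  have e4 : (2 * π * r ^ n * (cauchyPowerSeries f 0 r n fun _ => (1:ℂ)) : ℂ).re
     = 2 * π * r ^ n * (cauchyPowerSeries f 0 r n fun _ => (1:ℂ)).re := by
    have : (2 * π * r ^ n : ℂ) = ((2 * π * r ^ n : ℝ) : ℂ) := by push_cast; rfl
    rw [this, Complex.re_ofReal_mul]
  rw [e4] at h4
  have := pi_pos
  generalize (∫ θ in (0:ℝ)..2 * π, Real.sin (n * θ) * (f (circleMap 0 r θ)).im) = J at *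
  field_simp
  linarith

theorem coef_bound {f : ℂ → ℂ} {r : ℝ} (hr : 0 < r)
    (hf : DifferentiableOn ℂ f (Metric.closedBall 0 r))
    (him : ∀ z, ‖z‖ = r → (f z).im * z.im ≤ 0) (n : ℕ) (hn : 1 ≤ n) :
    |(cauchyPowerSeries f 0 r n fun _ => (1:ℂ)).re| * r ^ n ≤
      n * (|(cauchyPowerSeries f 0 r 1 fun _ => (1:ℂ)).re| * r) := by
  have hcont : Continuous fun θ => f (circleMap 0 r θ) := by
    apply hf.continuousOn.comp_continuous (continuous_circleMap 0 r)
    intro θ; exact circleMap_mem_closedBall 0 hr.le θ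
  have h1 := coef_formula hr hf n hn
  have h2 := coef_formula hr hf 1 le_rfl
  have h1' : |(cauchyPowerSeries f 0 r n fun _ => (1:ℂ)).re| * r ^ n = |(cauchyPowerSeries f 0 r n fun _ => (1:ℂ)).re * r ^ n| := by
    rw [abs_mul, abs_of_pos (pow_pos hr n)]
  have h2' : |(cauchyPowerSeries f 0 r 1 fun _ => (1:ℂ)).re| * r = |(cauchyPowerSeries f 0 r 1 fun _ => (1:ℂ)).re * r ^ 1| := by
    rw [abs_mul, pow_one, abs_of_pos hr]
  rw [h1', h2', h1, h2, abs_mul, abs_mul, abs_of_pos (inv_pos.2 pi_pos)]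
  have h2pi : (0:ℝ) ≤ 2 * π := by positivity
  have hsign : ∀ θ : ℝ, Real.sin θ * (f (circleMap 0 r θ)).im ≤ 0 := by
    intro θ
    have := him (circleMap 0 r θ) (by simp [abs_of_pos hr])
    have e : (circleMap 0 r θ).im = r * Real.sin θ := by
      simp [circleMap, Complex.exp_im]
    rw [e] at this
    have : r * (Real.sin θ * (f (circleMap 0 r θ)).im) ≤ 0 := by linarith
    by_contra h
    push Not at h
    nlinarith [mul_pos hr h]
  have hle : |∫ θ in (0:ℝ)..2 * π, Real.sin (n * θ) * (f (circleMap 0 r θ)).im| ≤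
      ∫ θ in (0:ℝ)..2 * π, n * (-(Real.sin ((1:ℕ) * θ) * (f (circleMap 0 r θ)).im)) := by
    refine (intervalIntegral.abs_integral_le_integral_abs h2pi).trans ?_
    apply intervalIntegral.integral_mono_on h2pi
    · apply Continuous.intervalIntegrable
      exact ((by fun_prop : Continuous fun θ : ℝ => Real.sin (n * θ)).mul
        (Complex.continuous_im.comp hcont)).abs
    · apply Continuous.intervalIntegrable
      exact continuous_const.mul ((by fun_prop : Continuous fun θ : ℝ => Real.sin ((1:ℕ) * θ)).mul
        (Complex.continuous_im.comp hcont)).neg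
    · intro θ _
      rw [abs_mul]
      have := abs_of_nonpos (hsign θ)
      rw [abs_mul] at this
      simp only [Nat.cast_one, one_mul]
      rw [← this, ← mul_assoc]
      gcongr
      exact abs_sin_nat_mul_le' n θ
  rw [intervalIntegral.integral_const_mul, intervalIntegral.integral_neg] at hle
  calc π⁻¹ * _ ≤ π⁻¹ * (n * |∫ θ in (0:ℝ)..2 * π, Real.sin ((1:ℕ) * θ) * (f (circleMap 0 r θ)).im|) := by
        gcongr
        refine hle.trans ?_
        gcongr
        exact neg_le_abs _
    _ = _ := by ring

theorem nearly_linear : ∃ K : ℝ, 0 ≤ K ∧ ∀ (f : ℂ → ℂ) (r : ℝ), 0 < r →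
    DifferentiableOn ℂ f (Metric.closedBall 0 r) →
    (∀ z, ‖z‖ = r → (f z).im * z.im ≤ 0) → ∀ x : ℝ, 0 ≤ x → 2 * x ≤ r →
    |(f x).re - (f 0).re - (deriv f 0).re * x| ≤ K * |(deriv f 0).re| * x ^ 2 / r := by
  have hs : Summable fun n : ℕ => ((n:ℝ) + 2) * (1 / 2 : ℝ) ^ n := by
    have h1 := summable_pow_mul_geometric_of_norm_lt_one (R := ℝ) 1 (r := 1/2) (by norm_num)
    have h2 := summable_geometric_two.mul_left 2
    refine (h1.add h2).congr fun n => ?_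
    simp; ring
  refine ⟨∑' n : ℕ, ((n:ℝ) + 2) * (1 / 2 : ℝ) ^ n, tsum_nonneg fun n => by positivity, ?_⟩
  intro f r hr hf him x hx hxr
  have hfp := DifferentiableOn.hasFPowerSeriesOnBall (R := r.toNNReal) (by rwa [Real.coe_toNNReal r hr.le]) (by simpa using hr)
  rw [Real.coe_toNNReal r hr.le] at hfp
  set p := cauchyPowerSeries f 0 r
  have hxm : (x:ℂ) ∈ Metric.eball (0:ℂ) (r.toNNReal : ENNReal) := by
    rw [Metric.eball_coe, mem_ball_zero_iff, Complex.norm_real, Real.norm_eq_abs, abs_of_nonneg hx]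
    rw [Real.coe_toNNReal r hr.le]
    linarith
  have h1 := hfp.hasSum hxm
  have hd : deriv f 0 = p 1 fun _ => 1 := hfp.hasFPowerSeriesAt.deriv
  have h0 : p 0 (fun _ => 1) = f 0 := hfp.coeff_zero _
  have hterm : ∀ n, p n (fun _ => (x:ℂ)) = (x:ℂ) ^ n * p n (fun _ => 1) := by
    intro n
    have := (p n).map_smul_univ (fun _ => (x:ℂ)) (fun _ => 1)
    simpa using this
  simp only [hterm, zero_add] at h1
  have h2 := Complex.hasSum_re h1
  have hre : ∀ n, ((x:ℂ) ^ n * p n (fun _ => 1)).re = x ^ n * (p n (fun _ => 1)).re := by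
    intro n; rw [← Complex.ofReal_pow, Complex.re_ofReal_mul]
  simp only [hre] at h2
  have h3 := (hasSum_nat_add_iff' 2).2 h2
  simp only [Finset.sum_range_succ, Finset.sum_range_zero, h0, zero_add, pow_zero, pow_one, one_mul,
    ← hd] at h3
  have h4 : (f x).re - ((f 0).re + x * (deriv f 0).re) = (f x).re - (f 0).re - (deriv f 0).re * x := by ring
  rw [h4] at h3
  rw [← h3.tsum_eq, ← Real.norm_eq_abs]
  have hb : ∀ n : ℕ, ‖x ^ (n+2) * (p (n+2) (fun _ => 1)).re‖ ≤
      (|(deriv f 0).re| * x ^ 2 / r) * (((n:ℝ) + 2) * (1 / 2 : ℝ) ^ n) := by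
    intro n
    have := coef_bound hr hf him (n+2) (by omega)
    change |(p (n+2) _).re| * _ ≤ _ * (|(p 1 _).re| * r) at this
    rw [← hd] at this
    rw [norm_mul, Real.norm_eq_abs, Real.norm_eq_abs, abs_of_nonneg (by positivity)]
    have hx2 : x ^ n ≤ (r * (1/2)) ^ n := by gcongr; linarith
    have h5 : |(p (n+2) (fun _ => 1)).re| ≤ ((n:ℝ)+2) * (|(deriv f 0).re| * r) / r ^ (n+2) := by
      rw [le_div_iff₀ (by positivity)]; push_cast at this; exact this
    calc x ^ (n+2) * |(p (n+2) (fun _ => 1)).re|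
        ≤ ((r * (1/2)) ^ n * x ^ 2) * (((n:ℝ)+2) * (|(deriv f 0).re| * r) / r ^ (n+2)) := by
          rw [pow_add]; gcongr
      _ = _ := by rw [mul_pow]; field_simp; ring
  have := tsum_of_norm_bounded (hs.hasSum.mul_left (|(deriv f 0).re| * x ^ 2 / r)) hb
  refine this.trans (le_of_eq (by ring))

/-- removable singularities -/
def patch (f : ℂ → ℂ) (z : ℂ) : ℂ := limUnder (𝓝[≠] z) f

theorem patch_eq {f H : ℂ → ℂ} {z : ℂ} (hH : ContinuousAt H z) (h : f =ᶠ[𝓝[≠] z] H) :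
    patch f z = H z := by
  apply Tendsto.limUnder_eq
  exact (hH.tendsto.mono_left nhdsWithin_le_nhds).congr' h.symm

theorem patch_eventuallyEq {f H : ℂ → ℂ} {z : ℂ} (hH : AnalyticAt ℂ H z) (h : f =ᶠ[𝓝[≠] z] H) :
    patch f =ᶠ[𝓝 z] H := by
  have h1 : ∀ᶠ w in 𝓝 z, ∀ᶠ y in 𝓝[≠] w, f y = H y := by
    rw [EventuallyEq, eventually_nhdsWithin_iff] at h
    filter_upwards [h.eventually_nhds] with w hw
    by_cases hwz : w = z
    · subst hwz; rw [eventually_nhdsWithin_iff]; exact hw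
    · have : ∀ᶠ y in 𝓝 w, y ≠ z := isOpen_ne.mem_nhds hwz
      exact nhdsWithin_le_nhds (by filter_upwards [hw, this] with y h1 h2 using h1 h2)
  filter_upwards [h1, hH.eventually_analyticAt] with w hw hw2
  exact patch_eq hw2.continuousAt hw

section bessel
variable {U V : ℂ → ℂ} (hU : ∀ z, HasDerivAt U (V z) z) (hV : ∀ z, HasDerivAt V (2 * z * U z) z)
  (hO : ∀ z : ℂ, ((fun t : ℝ => U (t + z)) =O[atTop] fun t => Real.exp (-t)) ∧
    ((fun t : ℝ => V (t + z)) =O[atTop] fun t => Real.exp (-t)))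
  (hUc : ∀ z, U (starRingEnd ℂ z) = starRingEnd ℂ (U z))
  (hVc : ∀ z, V (starRingEnd ℂ z) = starRingEnd ℂ (V z)) (hU0 : U 0 = 1)

def airyJ (U : ℂ → ℂ) (a b : ℂ) : ℂ := ∫ t in Ioi (0:ℝ), U (t + a) * U (t + b)

theorem hasDerivAt_shift {F : ℂ → ℂ} {F' : ℂ} {a : ℂ} {t : ℝ} (h : HasDerivAt F F' (t + a)) :
    HasDerivAt (fun t : ℝ => F (t + a)) F' t := by
  have := (h.comp_add_const (t:ℂ) a).comp_ofReal
  exact this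

include hU in
theorem U_cont_shift (a : ℂ) : Continuous fun t : ℝ => U (t + a) := by
  have : Continuous U := continuous_iff_continuousAt.2 fun z => (hU z).continuousAt
  fun_prop

theorem exp2_isBigO {f g : ℝ → ℂ} (hf : f =O[atTop] fun t => Real.exp (-t))
    (hg : g =O[atTop] fun t => Real.exp (-t)) :
    (fun t => f t * g t) =O[atTop] fun t => Real.exp (-2 * t) := by
  refine (hf.mul hg).congr_right fun t => ?_
  rw [← Real.exp_add]; ring_nf

theorem exp2_tendsto {f : ℝ → ℂ} (hf : f =O[atTop] fun t => Real.exp (-2 * t)) :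
    Tendsto f atTop (𝓝 0) := by
  refine hf.trans_tendsto ?_
  exact Real.tendsto_exp_atBot.comp (tendsto_id.const_mul_atTop_of_neg (by norm_num))

include hU hO in
theorem prod_integrable (a b : ℂ) :
    IntegrableOn (fun t : ℝ => U (t + a) * U (t + b)) (Ioi 0) := by
  have hc : Continuous fun t : ℝ => U (t + a) * U (t + b) := (U_cont_shift hU a).mul (U_cont_shift hU b)
  rw [IntegrableOn, ← integrable_norm_iff hc.aestronglyMeasurable]
  exact integrable_of_isBigO_exp_neg (b := 2) (by norm_num) hc.norm.continuousOn
    (exp2_isBigO (hO a).1 (hO b).1).norm_left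

include hU hV hO in
theorem airyJ_ne (a b : ℂ) : 2 * (a - b) * airyJ U a b = U a * V b - V a * U b := by
  have hd : ∀ t : ℝ, HasDerivAt (fun t : ℝ => V (t + a) * U (t + b) - U (t + a) * V (t + b))
      (2 * (a - b) * (U (t + a) * U (t + b))) t := by
    intro t
    have := ((hasDerivAt_shift (hV (t + a))).mul (hasDerivAt_shift (hU (t + b)))).sub
      ((hasDerivAt_shift (hU (t + a))).mul (hasDerivAt_shift (hV (t + b))))
    refine this.congr_deriv (by ring)
  have := integral_Ioi_of_hasDerivAt_of_tendsto (a := 0) (m := 0) (hd 0).continuousAt.continuousWithinAt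
    (fun t _ => hd t) ((prod_integrable hU hO a b).const_mul _) (by
      simpa using (exp2_tendsto (exp2_isBigO (hO a).2 (hO b).1)).sub
        (exp2_tendsto (exp2_isBigO (hO a).1 (hO b).2)))
  rw [integral_const_mul] at this
  rw [airyJ, this]
  simp

include hU hV hO in
theorem airyJ_self (a : ℂ) : airyJ U a a = V a ^ 2 / 2 - a * U a ^ 2 := by
  have hd : ∀ t : ℝ, HasDerivAt (fun t : ℝ => (t + a) * (U (t + a) * U (t + a)) - 2⁻¹ * (V (t + a) * V (t + a)))
      (U (t + a) * U (t + a)) t := by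
    intro t
    have h1 := hasDerivAt_shift (hU (t + a))
    have h2 := hasDerivAt_shift (hV (t + a))
    have h3 : HasDerivAt (fun t : ℝ => (t + a : ℂ)) 1 t := hasDerivAt_shift (F := fun z => z) (hasDerivAt_id _)
    have := (h3.mul (h1.mul h1)).sub ((h2.mul h2).const_mul 2⁻¹)
    refine this.congr_deriv ?_
    simp only [Pi.mul_apply]
    ring
  have hlim1 : Tendsto (fun t : ℝ => (t + a) * (U (t + a) * U (t + a))) atTop (𝓝 0) := by
    have h1 : (fun t : ℝ => (t + a : ℂ)) =O[atTop] fun t => Real.exp t := by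
      refine Asymptotics.IsBigO.of_bound (1 + ‖a‖) ?_
      filter_upwards [eventually_ge_atTop 0] with t ht
      have := Real.add_one_le_exp t
      rw [Real.norm_of_nonneg (Real.exp_pos _).le]
      calc ‖(t + a : ℂ)‖ ≤ ‖(t:ℂ)‖ + ‖a‖ := norm_add_le _ _
        _ = t + ‖a‖ := by rw [Complex.norm_real, Real.norm_of_nonneg ht]
        _ ≤ _ := by nlinarith [norm_nonneg a]
    have h2 := h1.mul (exp2_isBigO (hO a).1 (hO a).1)
    refine h2.trans_tendsto ?_
    have : (fun t : ℝ => Real.exp t * Real.exp (-2 * t)) = fun t => Real.exp (-t) := by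
      ext t; rw [← Real.exp_add]; ring_nf
    rw [this]
    exact Real.tendsto_exp_neg_atTop_nhds_zero
  have := integral_Ioi_of_hasDerivAt_of_tendsto (a := 0) (m := 0) (hd 0).continuousAt.continuousWithinAt
    (fun t _ => hd t) (prod_integrable hU hO a a) (by
      simpa using hlim1.sub ((exp2_tendsto (exp2_isBigO (hO a).2 (hO a).2)).const_mul 2⁻¹))
  rw [airyJ, this]
  simp
  ring

include hU hO in
theorem U_memLp (z : ℂ) : MemLp (fun t : ℝ => U (t + z)) 2 (volume.restrict (Ioi 0)) := by
  rw [memLp_two_iff_integrable_sq_norm (U_cont_shift hU z).aestronglyMeasurable]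
  refine (prod_integrable hU hO z z).norm.congr (ae_of_all _ fun t => ?_)
  simp [sq]

def airyPsi (z : ℂ) : Lp ℂ 2 (volume.restrict (Ioi (0:ℝ))) := (U_memLp hU hO z).toLp

include hUc in
theorem inner_psi (w z : ℂ) :
    inner ℂ (airyPsi hU hO w) (airyPsi hU hO z) = airyJ U (starRingEnd ℂ w) z := by
  rw [L2.inner_def, airyJ]
  apply integral_congr_ae
  filter_upwards [(U_memLp hU hO w).coeFn_toLp, (U_memLp hU hO z).coeFn_toLp] with t h1 h2
  rw [airyPsi, airyPsi, h1, h2, RCLike.inner_apply]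
  have : (t:ℂ) + starRingEnd ℂ w = starRingEnd ℂ (t + w) := by simp
  rw [this, hUc, mul_comm]

include hU0 in
theorem psi_ne_zero (z : ℂ) : airyPsi hU hO z ≠ 0 := by
  intro h
  have h1 := (U_memLp hU hO z).coeFn_toLp
  have h2 : (fun t : ℝ => U (t + z)) =ᵐ[volume.restrict (Ioi 0)] fun _ => 0 := by
    rw [airyPsi] at h
    rw [h] at h1
    exact h1.symm.trans (Lp.coeFn_zero _ _ _)
  have h3 := Measure.eqOn_open_of_ae_eq h2 isOpen_Ioi (U_cont_shift hU z).continuousOn continuousOn_const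
  have hd : Differentiable ℂ U := fun z => (hU z).differentiableAt
  have han : AnalyticOnNhd ℂ U univ := fun z _ => hd.analyticAt z
  have := han.eq_of_frequently_eq (g := fun _ => 0) (z₀ := 1 + z) analyticOnNhd_const ?_
  · rw [this] at hU0; simp at hU0
  · have ht : Tendsto (fun t : ℝ => (t:ℂ) + z) (𝓝[>] 1) (𝓝[≠] (1 + z)) := by
      apply tendsto_nhdsWithin_of_tendsto_nhds_of_eventually_within
      · have : Continuous fun t : ℝ => (t:ℂ) + z := by fun_prop
        simpa using (this.tendsto 1).mono_left nhdsWithin_le_nhds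
      · filter_upwards [self_mem_nhdsWithin] with t ht
        have ht' : (1:ℝ) < t := ht
        simp
        exact_mod_cast ht'.ne'
    apply ht.frequently
    apply Eventually.frequently
    filter_upwards [self_mem_nhdsWithin] with t ht
    have ht' : (1:ℝ) < t := ht
    exact h3 (by simp; linarith : t ∈ Ioi (0:ℝ))

include hU hO hUc hU0 in
theorem airyJ_pos (z : ℂ) : airyJ U (starRingEnd ℂ z) z ≠ 0 := by
  rw [← inner_psi hU hO hUc]
  exact inner_self_ne_zero.2 (psi_ne_zero hU hO hU0 z)

include hU hV hO hUc hVc hU0 in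
theorem V_ne_zero_of_im {z : ℂ} (hz : z.im ≠ 0) : V z ≠ 0 := by
  intro h
  have h1 := airyJ_ne hU hV hO (starRingEnd ℂ z) z
  rw [hVc, h] at h1
  simp [airyJ_pos hU hO hUc hU0 z] at h1
  have := congrArg Complex.im h1
  simp at this
  apply hz; linarith

include hU hV hO hUc hU0 in
theorem U_ne_zero_of_V {x : ℝ} (hx : V x = 0) : U x ≠ 0 := by
  intro h
  have h1 := airyJ_self hU hV hO x
  have h2 := airyJ_pos hU hO hUc hU0 x
  rw [Complex.conj_ofReal, h1, hx, h] at h2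
  simp at h2

include hU hV hO hUc hU0 in
theorem bessel {δ : ℕ → ℝ} (hδ : Function.Injective δ) (hδ0 : ∀ k, 0 < δ k)
    (hδV : ∀ k, V (-(δ k)) = 0) (N : ℕ) {z : ℂ} (hz : V z ≠ 0) :
    ∑ k ∈ Finset.range N, ‖V z‖ ^ 2 / (4 * δ k * ‖z + δ k‖ ^ 2) ≤
      (airyJ U (starRingEnd ℂ z) z).re := by
  set Ψ := airyPsi hU hO
  have hconj : ∀ k, starRingEnd ℂ (-(δ k : ℂ)) = -(δ k : ℂ) := fun k => by simp
  have hne : ∀ k, Ψ (-(δ k)) ≠ 0 := fun k => psi_ne_zero hU hO hU0 _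
  have hUne : ∀ k, U (-(δ k)) ≠ 0 := fun k => by
    have := U_ne_zero_of_V hU hV hO hUc hU0 (x := -(δ k)) (by push_cast; exact hδV k)
    push_cast at this; exact this
  have hzne : ∀ k, z + δ k ≠ 0 := fun k h => hz (by rw [eq_neg_of_add_eq_zero_left h]; exact hδV k)
  have hsq : ∀ k, ‖Ψ (-(δ k))‖ ^ 2 = δ k * ‖U (-(δ k))‖ ^ 2 := by
    intro k
    have h1 := inner_psi hU hO hUc (-(δ k)) (-(δ k))
    rw [hconj, airyJ_self hU hV hO, hδV, inner_self_eq_norm_sq_to_K] at h1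
    have h2 := congrArg norm h1
    simpa [abs_of_pos (hδ0 k)] using h2
  have hon : Orthonormal ℂ (fun k => ((‖Ψ (-(δ k))‖ : ℂ)⁻¹) • Ψ (-(δ k))) := by
    constructor
    · intro k
      rw [norm_smul]
      simp [hne k]
    · intro i j hij
      simp only [inner_smul_left, inner_smul_right]
      have h1 := airyJ_ne hU hV hO (-(δ i)) (-(δ j))
      rw [hδV, hδV] at h1
      have h2 : (-(δ i : ℂ)) - (-(δ j)) ≠ 0 := by
        intro h
        have : (δ j : ℂ) = δ i := by linear_combination h
        exact hij (hδ (by exact_mod_cast this.symm))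
      have h3 : airyJ U (-(δ i)) (-(δ j)) = 0 := by
        simp only [mul_zero, zero_mul, sub_zero] at h1
        exact (mul_eq_zero.1 h1).resolve_left (mul_ne_zero two_ne_zero h2)
      rw [inner_psi hU hO hUc, hconj, h3]
      simp
  have h := hon.sum_inner_products_le (Ψ z) (s := Finset.range N)
  have e1 : (airyJ U (starRingEnd ℂ z) z).re = ‖Ψ z‖ ^ 2 := by
    rw [← inner_psi hU hO hUc, inner_self_eq_norm_sq_to_K]
    norm_cast
  rw [e1]
  refine le_trans (le_of_eq ?_) h
  apply Finset.sum_congr rfl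
  intro k _
  have h1 := airyJ_ne hU hV hO (-(δ k)) z
  rw [hδV] at h1
  have h2 : 2 * ‖z + δ k‖ * ‖airyJ U (-(δ k)) z‖ = ‖U (-(δ k))‖ * ‖V z‖ := by
    have := congrArg norm h1
    rw [show (2 * (-(δ k : ℂ) - z)) = -(2 * (z + δ k)) by ring] at this
    simpa using this
  rw [inner_smul_left, norm_mul, inner_psi hU hO hUc, hconj, mul_pow]
  have h3 : ‖(starRingEnd ℂ) ((‖Ψ (-(δ k))‖ : ℂ)⁻¹)‖ ^ 2 = (δ k * ‖U (-(δ k))‖ ^ 2)⁻¹ := by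
    rw [← hsq]; simp
  rw [h3]
  have h4 : 0 < ‖z + δ k‖ := norm_pos_iff.2 (hzne k)
  have h5 : 0 < ‖U (-(δ k))‖ := norm_pos_iff.2 (hUne k)
  have h6 := hδ0 k
  have h7 : ‖airyJ U (-(δ k)) z‖ = ‖U (-(δ k))‖ * ‖V z‖ / (2 * ‖z + δ k‖) := by
    rw [eq_div_iff (by positivity)]; linarith
  rw [h7]
  field_simp
  norm_num

end bessel

section final

theorem pole_removal {U V : ℂ → ℂ} (hU : ∀ z, HasDerivAt U (V z) z)
    (hV : ∀ z, HasDerivAt V (2 * z * U z) z) {d : ℝ} (hd : 0 < d) (hVd : V (-d) = 0)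
    (hUd : U (-d) ≠ 0) :
    ∃ H : ℂ → ℂ, AnalyticAt ℂ H (-d) ∧
      (fun z => -2 * U z / V z - 1 / (d * (d + z))) =ᶠ[𝓝[≠] (-(d:ℂ))] H := by
  have hd' : (d:ℂ) ≠ 0 := by exact_mod_cast hd.ne'
  have hUdiff : Differentiable ℂ U := fun z => (hU z).differentiableAt
  have hVdiff : Differentiable ℂ V := fun z => (hV z).differentiableAt
  have hdsl : ∀ {f : ℂ → ℂ}, Differentiable ℂ f → Differentiable ℂ (dslope f (-(d:ℂ))) := by
    intro f hf
    rw [← differentiableOn_univ] at hf ⊢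
    exact (Complex.differentiableOn_dslope univ_mem).2 hf
  set g := dslope V (-(d:ℂ)) with hg
  have hgdiff : Differentiable ℂ g := hdsl hVdiff
  have hVg : ∀ z, V z = (z + d) * g z := by
    intro z
    have := sub_smul_dslope V (-(d:ℂ)) z
    rw [hVd, sub_zero, smul_eq_mul, sub_neg_eq_add] at this
    exact this.symm
  have hgd : g (-d) = -2 * d * U (-d) := by
    rw [hg, dslope_same, (hV _).deriv]; ring
  have hgne : g (-d) ≠ 0 := by
    rw [hgd]; exact mul_ne_zero (mul_ne_zero (by norm_num) hd') hUd
  set n : ℂ → ℂ := fun z => -2 * d * U z - g z with hn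
  have hndiff : Differentiable ℂ n := by fun_prop
  have hnd : n (-d) = 0 := by simp only [hn]; rw [hgd]; ring
  set m := dslope n (-(d:ℂ)) with hm
  have hmdiff : Differentiable ℂ m := hdsl hndiff
  have hnm : ∀ z, n z = (z + d) * m z := by
    intro z
    have := sub_smul_dslope n (-(d:ℂ)) z
    rw [hnd, sub_zero, smul_eq_mul, sub_neg_eq_add] at this
    exact this.symm
  refine ⟨fun z => m z / (d * g z), ?_, ?_⟩
  · exact (hmdiff.analyticAt _).div (analyticAt_const.mul (hgdiff.analyticAt _)) (mul_ne_zero hd' hgne)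
  · have h1 : ∀ᶠ z in 𝓝[≠] (-(d:ℂ)), g z ≠ 0 :=
      nhdsWithin_le_nhds (hgdiff.continuous.continuousAt.eventually_ne hgne)
    filter_upwards [h1, self_mem_nhdsWithin] with z hz hzd
    have hzd' : z + d ≠ 0 := fun h => hzd (eq_neg_of_add_eq_zero_left h)
    have h2 := hnm z
    simp only [hn] at h2
    rw [hVg z, add_comm (d:ℂ) z]
    field_simp
    linear_combination h2

def airyF (U V : ℂ → ℂ) (δ : ℕ → ℝ) (N : ℕ) (z : ℂ) : ℂ :=
  -2 * U z / V z - ∑ k ∈ Finset.range N, 1 / ((δ k : ℂ) * (δ k + z))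

def airyG (u v : ℝ → ℝ) (δ : ℕ → ℝ) (N : ℕ) (x : ℝ) : ℝ :=
  -2 * u x / v x - ∑ k ∈ Finset.range N, 1 / (δ k * (δ k + x))

variable {u v : ℝ → ℝ} (hu1 : ∀ x, HasDerivAt u (v x) x)
  (hu2 : ∀ x, HasDerivAt v (2 * x * u x) x)
  (hpos : ∀ h : ℝ, 0 ≤ h → 0 < u h)
  (hvneg : ∀ h : ℝ, 0 ≤ h → v h < 0)
  (hvle : ∀ a x : ℝ, 0 < a → a ^ 2 ≤ 2 * x → v x ≤ -a * u x)
  {U V : ℂ → ℂ} (hU : ∀ z, HasDerivAt U (V z) z) (hV : ∀ z, HasDerivAt V (2 * z * U z) z)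
  (hO : ∀ z : ℂ, ((fun t : ℝ => U (t + z)) =O[atTop] fun t => Real.exp (-t)) ∧
    ((fun t : ℝ => V (t + z)) =O[atTop] fun t => Real.exp (-t)))
  (hUc : ∀ z, U (starRingEnd ℂ z) = starRingEnd ℂ (U z))
  (hVc : ∀ z, V (starRingEnd ℂ z) = starRingEnd ℂ (V z)) (hU0 : U 0 = 1)
  (hUu : ∀ x : ℝ, U x = u x) (hVv : ∀ x : ℝ, V x = v x)
  {δ : ℕ → ℝ} (hδ : StrictMono δ) (hδ0 : ∀ k, 0 < δ k) (hδV : ∀ k, V (-(δ k)) = 0)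
  (hδall : ∀ x : ℝ, 0 < x → v (-x) = 0 → ∃ k, δ k = x)

include hUu hVv in
theorem airyF_real (N : ℕ) (x : ℝ) : airyF U V δ N x = airyG u v δ N x := by
  simp [airyF, airyG, hUu, hVv]

include hU hV hO hUc hVc hU0 hδ hδ0 hδV in
theorem airyF_im (N : ℕ) {z : ℂ} (hz : z.im ≠ 0) : (airyF U V δ N z).im * z.im ≤ 0 := by
  have hVz := V_ne_zero_of_im hU hV hO hUc hVc hU0 hz
  have hB := bessel hU hV hO hUc hU0 hδ.injective hδ0 hδV N hVz
  have hJ := airyJ_ne hU hV hO (starRingEnd ℂ z) z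
  rw [hUc, hVc] at hJ
  have hJ' := congrArg Complex.im hJ
  have e1 : (-2 * U z / V z).im = -4 * z.im * (airyJ U (starRingEnd ℂ z) z).re / ‖V z‖ ^ 2 := by
    rw [Complex.div_im, Complex.sq_norm]
    simp at hJ' ⊢
    rw [← sub_div]
    congr 1
    linarith
  have e2 : ∀ k, (1 / ((δ k : ℂ) * (δ k + z))).im = -z.im * (1 / (δ k * ‖z + δ k‖ ^ 2)) := by
    intro k
    have h1 := hδ0 k
    rw [one_div, mul_inv, ← Complex.ofReal_inv, Complex.im_ofReal_mul, Complex.inv_im, add_comm (δ k : ℂ),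
      Complex.sq_norm]
    simp
    field_simp
  have e3 : (airyF U V δ N z).im * z.im = z.im ^ 2 * (4 / ‖V z‖ ^ 2) *
      (∑ k ∈ Finset.range N, ‖V z‖ ^ 2 / (4 * δ k * ‖z + δ k‖ ^ 2) -
      (airyJ U (starRingEnd ℂ z) z).re) := by
    have hn : ‖V z‖ ≠ 0 := norm_ne_zero_iff.2 hVz
    have e4 : ∑ k ∈ Finset.range N, ‖V z‖ ^ 2 / (4 * δ k * ‖z + δ k‖ ^ 2) =
        ‖V z‖ ^ 2 / 4 * ∑ k ∈ Finset.range N, 1 / (δ k * ‖z + δ k‖ ^ 2) := by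
      rw [Finset.mul_sum]
      apply Finset.sum_congr rfl
      intro k _
      rw [div_mul_div_comm, mul_one, mul_assoc]
    rw [airyF, Complex.sub_im, Complex.im_sum, e1]
    simp only [e2]
    rw [← Finset.mul_sum, e4]
    field_simp
    ring
  rw [e3]
  exact mul_nonpos_of_nonneg_of_nonpos (by positivity) (by linarith)

include hu1 hu2 hvneg hδ0 in
theorem airyG_deriv (N : ℕ) {x : ℝ} (hx : 0 ≤ x) : HasDerivAt (airyG u v δ N)
    (-2 + 4 * x * u x ^ 2 / v x ^ 2 + ∑ k ∈ Finset.range N, 1 / (δ k * (δ k + x) ^ 2)) x := by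
  have hv := (hvneg x hx).ne
  have h1 := (((hu1 x).const_mul (-2)).div (hu2 x) hv)
  have h2 : HasDerivAt (fun x => ∑ k ∈ Finset.range N, 1 / (δ k * (δ k + x)))
      (∑ k ∈ Finset.range N, -(1 / (δ k * (δ k + x) ^ 2))) x := by
    apply HasDerivAt.fun_sum
    intro k _
    have hk := hδ0 k
    have hkx : δ k + x ≠ 0 := by positivity
    have := (((hasDerivAt_id x).const_add (δ k)).const_mul (δ k)).fun_inv (mul_ne_zero hk.ne' hkx)
    simp only [one_div]
    refine this.congr_deriv ?_
    simp
    field_simp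
  refine (h1.sub h2).congr_deriv ?_
  rw [Finset.sum_neg_distrib]
  field_simp
  ring

include hvneg hU hV hO hUc hU0 hUu hVv hδ hδ0 hδV in
theorem airyG_deriv_nonpos (N : ℕ) {x : ℝ} (hx : 0 ≤ x) :
    (-2 + 4 * x * u x ^ 2 / v x ^ 2 + ∑ k ∈ Finset.range N, 1 / (δ k * (δ k + x) ^ 2)) ≤ 0 := by
  have hv := hvneg x hx
  have hVx : V x ≠ 0 := by rw [hVv]; exact_mod_cast hv.ne
  have hB := bessel hU hV hO hUc hU0 hδ.injective hδ0 hδV N hVx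
  rw [Complex.conj_ofReal, airyJ_self hU hV hO, hUu, hVv] at hB
  have e1 : ((v x : ℂ) ^ 2 / 2 - x * (u x : ℂ) ^ 2).re = v x ^ 2 / 2 - x * u x ^ 2 := by
    norm_cast
  have e2 : ∑ k ∈ Finset.range N, ‖(v x : ℂ)‖ ^ 2 / (4 * δ k * ‖(x : ℂ) + δ k‖ ^ 2) =
      v x ^ 2 / 4 * ∑ k ∈ Finset.range N, 1 / (δ k * (δ k + x) ^ 2) := by
    rw [Finset.mul_sum]
    apply Finset.sum_congr rfl
    intro k _
    rw [← Complex.ofReal_add, Complex.norm_real, Complex.norm_real, Real.norm_eq_abs, Real.norm_eq_abs,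
      sq_abs, sq_abs, div_mul_div_comm, mul_one, mul_assoc, add_comm x]
  rw [e1, e2] at hB
  generalize (∑ k ∈ Finset.range N, 1 / (δ k * (δ k + x) ^ 2)) = S at *
  have hv0 : v x ≠ 0 := hv.ne
  have hv2 : 0 < v x ^ 2 := by positivity
  have : -2 + 4 * x * u x ^ 2 / v x ^ 2 + S = (4 / v x ^ 2) * (v x ^ 2 / 4 * S - (v x ^ 2 / 2 - x * u x ^ 2)) := by
    field_simp
    ring
  rw [this]
  exact mul_nonpos_of_nonneg_of_nonpos (by positivity) (by linarith)

include hpos hvneg hvle in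
theorem R_lim : Tendsto (fun x => -2 * u x / v x) atTop (𝓝 0) := by
  have h1 : Tendsto (fun x : ℝ => 2 / √(2 * x)) atTop (𝓝 0) := by
    apply Tendsto.const_div_atTop
    exact Real.tendsto_sqrt_atTop.comp (tendsto_id.const_mul_atTop (by norm_num))
  refine tendsto_of_tendsto_of_tendsto_of_le_of_le' tendsto_const_nhds h1 ?_ ?_
  · filter_upwards [eventually_ge_atTop 0] with x hx
    exact div_nonneg_of_nonpos (by linarith [hpos x hx]) (hvneg x hx).le
  · filter_upwards [eventually_gt_atTop 0] with x hx
    have h2 : 0 < √(2 * x) := Real.sqrt_pos.2 (by linarith)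
    have h3 := hvle _ x h2 (by rw [Real.sq_sqrt (by linarith)])
    have h4 := hvneg x hx.le
    rw [div_le_iff_of_neg h4, div_mul_eq_mul_div, div_le_iff₀ h2]
    linarith

include hpos hvneg hvle in
theorem airyG_lim (N : ℕ) : Tendsto (airyG u v δ N) atTop (𝓝 0) := by
  have h2 : Tendsto (fun x => ∑ k ∈ Finset.range N, 1 / (δ k * (δ k + x))) atTop (𝓝 0) := by
    have : (0:ℝ) = ∑ k ∈ Finset.range N, (δ k)⁻¹ * 0 := by simp
    rw [this]
    apply tendsto_finset_sum
    intro k _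
    have h3 : Tendsto (fun x => (δ k + x)⁻¹) atTop (𝓝 0) :=
      tendsto_inv_atTop_zero.comp (tendsto_atTop_add_const_left _ _ tendsto_id)
    refine (h3.const_mul (δ k)⁻¹).congr fun x => ?_
    rw [one_div, mul_inv]
  have h := (R_lim hpos hvneg hvle).sub h2
  rw [sub_zero] at h
  exact h

include hu1 hu2 hpos hvneg hvle hU hV hO hUc hU0 hUu hVv hδ hδ0 hδV in
theorem airyG_nonneg (N : ℕ) {x : ℝ} (hx : 0 ≤ x) : 0 ≤ airyG u v δ N x := by
  have hanti : AntitoneOn (airyG u v δ N) (Ici 0) := by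
    apply antitoneOn_of_deriv_nonpos (convex_Ici 0)
    · exact fun t ht => (airyG_deriv hu1 hu2 hvneg hδ0 N ht).continuousAt.continuousWithinAt
    · rw [interior_Ici]
      exact fun t ht => (airyG_deriv hu1 hu2 hvneg hδ0 N (le_of_lt ht)).differentiableAt.differentiableWithinAt
    · intro t ht
      rw [interior_Ici] at ht
      rw [(airyG_deriv hu1 hu2 hvneg hδ0 N (le_of_lt ht)).deriv]
      exact airyG_deriv_nonpos hvneg hU hV hO hUc hU0 hUu hVv hδ hδ0 hδV N (le_of_lt ht)
  refine le_of_tendsto (airyG_lim hpos hvneg hvle (δ := δ) N) ?_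
  filter_upwards [eventually_ge_atTop x] with t ht
  exact hanti hx (hx.trans ht) ht

include hvneg hU hV hO hUc hVc hU0 hVv hδall in
theorem V_zero {z : ℂ} (hz : V z = 0) : ∃ k, z = -(δ k) := by
  have him : z.im = 0 := by
    by_contra h
    exact V_ne_zero_of_im hU hV hO hUc hVc hU0 h hz
  have hzx : z = (z.re : ℂ) := by apply Complex.ext <;> simp [him]
  rw [hzx, hVv] at hz
  have hz' : v z.re = 0 := by exact_mod_cast hz
  have hneg : z.re < 0 := by
    by_contra h
    push Not at h
    exact (hvneg _ h).ne hz'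
  obtain ⟨k, hk⟩ := hδall (-z.re) (by linarith) (by simpa using hz')
  refine ⟨k, ?_⟩
  rw [hk, hzx]; simp

include hU hV hδV in
theorem airyF_analytic (N : ℕ) {z : ℂ} (hz : V z ≠ 0) (hδ0 : ∀ k, 0 < δ k) :
    AnalyticAt ℂ (airyF U V δ N) z := by
  have hUdiff : Differentiable ℂ U := fun z => (hU z).differentiableAt
  have hVdiff : Differentiable ℂ V := fun z => (hV z).differentiableAt
  refine ((analyticAt_const.mul (hUdiff.analyticAt z)).div (hVdiff.analyticAt z) hz).sub ?_
  apply Finset.analyticAt_fun_sum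
  intro k _
  refine analyticAt_const.div (analyticAt_const.mul (analyticAt_const.add analyticAt_id)) ?_
  refine mul_ne_zero (by exact_mod_cast (hδ0 k).ne') ?_
  intro h
  apply hz
  have : z = -(δ k) := by
    have h' : (δ k : ℂ) + z = 0 := h
    linear_combination h'
  rw [this, hδV]

include hvneg hU hV hO hUc hVc hU0 hVv hδ hδ0 hδV hδall in
theorem airyF_local (N : ℕ) {z : ℂ} (hz : ‖z‖ < δ N) :
    ∃ H, AnalyticAt ℂ H z ∧ airyF U V δ N =ᶠ[𝓝[≠] z] H := by
  by_cases hVz : V z = 0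
  · obtain ⟨k, rfl⟩ := V_zero hvneg hU hV hO hUc hVc hU0 hVv hδall hVz
    have hk : k < N := by
      rw [norm_neg, Complex.norm_real, Real.norm_of_nonneg (hδ0 k).le] at hz
      exact hδ.lt_iff_lt.1 hz
    have hUne : U (-(δ k)) ≠ 0 := by
      have := U_ne_zero_of_V hU hV hO hUc hU0 (x := -(δ k)) (by push_cast; exact hδV k)
      push_cast at this; exact this
    obtain ⟨H, hH, hHe⟩ := pole_removal hU hV (hδ0 k) hVz hUne
    refine ⟨fun z => H z - ∑ j ∈ (Finset.range N).erase k, 1 / ((δ j : ℂ) * (δ j + z)), ?_, ?_⟩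
    · refine hH.sub ?_
      apply Finset.analyticAt_fun_sum
      intro j hj
      refine analyticAt_const.div (analyticAt_const.mul (analyticAt_const.add analyticAt_id)) ?_
      refine mul_ne_zero (by exact_mod_cast (hδ0 j).ne') ?_
      intro h
      have h' : (δ j : ℂ) = δ k := by
        have h' : (δ j : ℂ) + (-(δ k)) = 0 := h
        linear_combination h'
      exact (Finset.ne_of_mem_erase hj) (hδ.injective (by exact_mod_cast h'))
    · filter_upwards [hHe] with w hw
      rw [← hw, airyF, ← Finset.add_sum_erase _ _ (Finset.mem_range.2 hk)]
      ring
  · exact ⟨_, airyF_analytic hU hV hδV N hVz hδ0, EventuallyEq.rfl⟩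

include hu1 hu2 hvneg hU hV hO hUc hVc hU0 hUu hVv hδ hδ0 hδV hδall in
theorem airyG_nearly_linear : ∃ K : ℝ, 0 ≤ K ∧ ∀ (N : ℕ) (x : ℝ), 0 ≤ x → 2 * x ≤ δ N / 2 →
    |airyG u v δ N x - airyG u v δ N 0 -
      (-2 + ∑ k ∈ Finset.range N, 1 / (δ k * δ k ^ 2)) * x| ≤ K * 2 * x ^ 2 / (δ N / 2) := by
  obtain ⟨K, hK, h⟩ := nearly_linear
  refine ⟨K, hK, fun N x hx hxN => ?_⟩
  have hN := hδ0 N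
  have hVx : ∀ x : ℝ, 0 ≤ x → V x ≠ 0 := fun x hx => by
    rw [hVv]; exact_mod_cast (hvneg x hx).ne
  have hev : ∀ {z : ℂ}, V z ≠ 0 → patch (airyF U V δ N) =ᶠ[𝓝 z] airyF U V δ N := fun hz =>
    patch_eventuallyEq (airyF_analytic hU hV hδV N hz hδ0) EventuallyEq.rfl
  have h1 := h (patch (airyF U V δ N)) (δ N / 2) (by linarith) ?_ ?_ x hx hxN
  · have hV0 : V 0 ≠ 0 := by simpa using hVx 0 le_rfl
    have hd0 := airyG_deriv hu1 hu2 hvneg hδ0 N (le_refl (0:ℝ))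
    have hnp := airyG_deriv_nonpos hvneg hU hV hO hUc hU0 hUu hVv hδ hδ0 hδV N (le_refl (0:ℝ))
    simp only [mul_zero, zero_mul, zero_div, add_zero] at hd0 hnp
    have e0 : airyF U V δ N 0 = airyG u v δ N 0 := by
      simpa using airyF_real hUu hVv N 0
    have hderiv : (deriv (airyF U V δ N) 0).re = -2 + ∑ k ∈ Finset.range N, 1 / (δ k * δ k ^ 2) := by
      have hF := (airyF_analytic hU hV hδV N hV0 hδ0).differentiableAt.hasDerivAt
      have hF' : HasDerivAt (airyF U V δ N) (deriv (airyF U V δ N) 0) ((0:ℝ):ℂ) := by simpa using hF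
      have h2 := hF'.comp_ofReal
      have h3 : HasDerivAt (fun y : ℝ => (airyF U V δ N y).re) (deriv (airyF U V δ N) 0).re 0 :=
        Complex.reCLM.hasFDerivAt.comp_hasDerivAt _ h2
      have h4 : (fun y : ℝ => (airyF U V δ N y).re) = airyG u v δ N := by
        ext y; rw [airyF_real hUu hVv]; simp
      rw [h4] at h3
      exact h3.unique hd0
    rw [(hev hV0).deriv_eq, (hev hV0).eq_of_nhds, (hev (hVx x hx)).eq_of_nhds, e0, hderiv,
      airyF_real hUu hVv, Complex.ofReal_re, Complex.ofReal_re] at h1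
    refine h1.trans ?_
    have hs : 0 ≤ ∑ k ∈ Finset.range N, 1 / (δ k * δ k ^ 2) :=
      Finset.sum_nonneg fun k _ => by have := hδ0 k; positivity
    have : |-2 + ∑ k ∈ Finset.range N, 1 / (δ k * δ k ^ 2)| ≤ 2 := by
      rw [abs_le]; constructor <;> linarith
    gcongr
  · intro z hz
    rw [mem_closedBall_zero_iff] at hz
    obtain ⟨H, hH, hHe⟩ := airyF_local hvneg hU hV hO hUc hVc hU0 hVv hδ hδ0 hδV hδall N
      (z := z) (by linarith)
    exact (hH.differentiableAt.congr_of_eventuallyEq (patch_eventuallyEq hH hHe)).differentiableWithinAt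
  · intro z _
    by_cases hz : z.im = 0
    · simp [hz]
    · rw [(hev (V_ne_zero_of_im hU hV hO hUc hVc hU0 hz)).eq_of_nhds]
      exact airyF_im hU hV hO hUc hVc hU0 hδ hδ0 hδV N hz

include hu1 hu2 hpos hvneg hvle hU hV hO hUc hVc hU0 hUu hVv hδ hδ0 hδV hδall in
theorem airy_main : Tendsto δ atTop atTop ∧ ∀ x : ℝ, 0 ≤ x →
    HasSum (fun k => 1 / (δ k * (δ k + x))) (-2 * u x / v x) := by
  have hGnn : ∀ N x, 0 ≤ x → 0 ≤ airyG u v δ N x := fun N x hx =>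
    airyG_nonneg hu1 hu2 hpos hvneg hvle hU hV hO hUc hU0 hUu hVv hδ hδ0 hδV N hx
  have hsum : ∀ x : ℝ, 0 ≤ x → Summable (fun k => 1 / (δ k * (δ k + x))) := by
    intro x hx
    refine summable_of_sum_range_le (c := -2 * u x / v x) (fun k => ?_) fun N => ?_
    · have := hδ0 k; positivity
    · have := hGnn N x hx
      rw [airyG] at this; linarith
  have htend : Tendsto δ atTop atTop := by
    apply tendsto_atTop_atTop_of_monotone hδ.monotone
    intro b
    by_contra hcon
    push Not at hcon
    have h1 := (hsum 0 le_rfl).tendsto_atTop_zero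
    have hb : 0 < b := (hδ0 0).trans (hcon 0)
    have h2 : ∀ k, 1 / (b * b) ≤ 1 / (δ k * (δ k + 0)) := fun k => by
      have := hδ0 k
      have := (hcon k).le
      rw [add_zero]
      gcongr
    have h3 := ge_of_tendsto' h1 h2
    have : 0 < 1 / (b * b) := by positivity
    linarith
  refine ⟨htend, ?_⟩
  have hsum3 : Summable (fun k => 1 / (δ k * δ k ^ 2)) := by
    refine summable_of_sum_range_le (c := 2) (fun k => ?_) fun N => ?_
    · have := hδ0 k; positivity
    · have hnp := airyG_deriv_nonpos hvneg hU hV hO hUc hU0 hUu hVv hδ hδ0 hδV N (le_refl (0:ℝ))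
      simp only [mul_zero, zero_mul, zero_div, add_zero] at hnp
      linarith
  set g : ℝ → ℝ := fun x => -2 * u x / v x - ∑' k, 1 / (δ k * (δ k + x)) with hg
  set D : ℝ := -2 + ∑' k, 1 / (δ k * δ k ^ 2)
  have hgl : ∀ x, 0 ≤ x → Tendsto (fun N => airyG u v δ N x) atTop (𝓝 (g x)) := fun x hx =>
    tendsto_const_nhds.sub (hsum x hx).hasSum.tendsto_sum_nat
  have hlin : ∀ x, 0 ≤ x → g x = g 0 + D * x := by
    intro x hx
    obtain ⟨K, hK, hKN⟩ := airyG_nearly_linear hu1 hu2 hvneg hU hV hO hUc hVc hU0 hUu hVv hδ hδ0 hδV hδall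
    have h1 : Tendsto (fun N => airyG u v δ N x - airyG u v δ N 0 -
      (-2 + ∑ k ∈ Finset.range N, 1 / (δ k * δ k ^ 2)) * x) atTop (𝓝 (g x - g 0 - D * x)) :=
      ((hgl x hx).sub (hgl 0 le_rfl)).sub
        ((tendsto_const_nhds.add hsum3.hasSum.tendsto_sum_nat).mul_const x)
    have h2 : Tendsto (fun N => K * 2 * x ^ 2 / (δ N / 2)) atTop (𝓝 0) :=
      Tendsto.const_div_atTop (htend.atTop_div_const (by norm_num)) _
    have h3 := squeeze_zero_norm' (f := fun N => airyG u v δ N x - airyG u v δ N 0 -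
      (-2 + ∑ k ∈ Finset.range N, 1 / (δ k * δ k ^ 2)) * x) (by
        filter_upwards [htend.eventually_ge_atTop (4 * x)] with N hN
        exact hKN N x hx (by linarith)) h2
    have := tendsto_nhds_unique h1 h3
    linarith
  have hg0 : Tendsto g atTop (𝓝 0) := by
    refine tendsto_of_tendsto_of_tendsto_of_le_of_le' tendsto_const_nhds
      (R_lim hpos hvneg hvle) ?_ ?_
    · filter_upwards [eventually_ge_atTop 0] with x hx
      exact ge_of_tendsto' (hgl x hx) fun N => hGnn N x hx
    · filter_upwards [eventually_ge_atTop 0] with x hx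
      have : 0 ≤ ∑' k, 1 / (δ k * (δ k + x)) := tsum_nonneg fun k => by
        have := hδ0 k; positivity
      simp only [hg]; linarith
  have hg1 : Tendsto (fun x => g (x + 1)) atTop (𝓝 0) :=
    hg0.comp (tendsto_atTop_add_const_right _ 1 tendsto_id)
  have hD : D = 0 := by
    have h1 : Tendsto (fun x => g (x + 1) - g x) atTop (𝓝 D) := by
      refine tendsto_const_nhds.congr' ?_
      filter_upwards [eventually_ge_atTop 0] with x hx
      rw [hlin x hx, hlin (x + 1) (by linarith)]; ring
    have := tendsto_nhds_unique h1 (hg1.sub hg0)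
    simpa using this
  have hA : g 0 = 0 := by
    have h1 : Tendsto g atTop (𝓝 (g 0)) := by
      refine tendsto_const_nhds.congr' ?_
      filter_upwards [eventually_ge_atTop 0] with x hx
      rw [hlin x hx, hD]; ring
    exact tendsto_nhds_unique h1 hg0
  intro x hx
  have h1 : g x = 0 := by rw [hlin x hx, hD, hA]; ring
  have h2 : -2 * u x / v x = ∑' k, 1 / (δ k * (δ k + x)) := by
    simp only [hg] at h1; linarith
  rw [h2]
  exact (hsum x hx).hasSum

end final

/-- the zero set of `h ↦ u'(-h)` on `(0,∞)` is infinite; its increasing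
enumeration `δ k` (here `δ k` stands for `δ'_{k+1}`) tends to `∞`; `u' ≠ 0` on `[0,∞)`;
and the key identity `u''(z)/u'(z) = -∑ₖ (1/δₖ)·z/(δₖ+z)` holds for `z ≥ 0`, the series
being absolutely convergent. -/
theorem stmt10
    (u : ℝ → ℝ) (hu_smooth : ContDiff ℝ 2 u)
    (hu_ode : ∀ h : ℝ, deriv (deriv u) h = 2 * h * u h)
    (hu_zero : u 0 = 1)
    (hu'_zero : deriv u 0 = -((6:ℝ) ^ ((1:ℝ)/3) * Real.Gamma (2/3) / Real.Gamma (1/3)))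
    (hu_pos : ∀ h : ℝ, 0 ≤ h → 0 < u h)
    (hu_anti : StrictAntiOn u (Ici 0))
    (hu_lim : Tendsto u atTop (𝓝 0))
    (δ : ℕ → ℝ) (hδ_pos : ∀ k, 0 < δ k) (hδ_mono : StrictMono δ)
    (hδ_zero : ∀ k, deriv u (-(δ k)) = 0)
    (hδ_all : ∀ x : ℝ, 0 < x → deriv u (-x) = 0 → ∃ k, δ k = x) :
    {x : ℝ | 0 < x ∧ deriv u (-x) = 0}.Infinite ∧
    Tendsto δ atTop atTop ∧
    (∀ z : ℝ, 0 ≤ z → deriv u z ≠ 0) ∧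
    (∀ z : ℝ, 0 ≤ z →
      Summable (fun k : ℕ => |(1 / δ k) * (z / (δ k + z))|) ∧
      deriv (deriv u) z / deriv u z = -∑' k : ℕ, (1 / δ k) * (z / (δ k + z))) := by
  obtain ⟨hu1, hu2⟩ := exists_hasDeriv2 u hu_smooth hu_ode
  obtain ⟨U, V, hU, hV, hU0, hV0, hUc, hVc⟩ := exists_airy (deriv u 0)
  have hreal := airy_real_eq u hu_smooth hu_ode hu_zero hU hV hU0 hV0
  have hUu : ∀ x : ℝ, U x = u x := fun x => (hreal x).1
  have hVv : ∀ x : ℝ, V x = deriv u x := fun x => (hreal x).2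
  have hvle : ∀ a x : ℝ, 0 < a → a ^ 2 ≤ 2 * x → deriv u x ≤ -a * u x := fun a x ha hx =>
    v_le hu1 hu2 hu_pos hu_anti hu_lim ha hx
  have hO := UV_isBigO hu1 hu2 hu_pos hu_anti hu_lim hU hV hUu hVv
  have hvneg : ∀ x : ℝ, 0 ≤ x → deriv u x < 0 := by
    intro x hx
    rcases hx.eq_or_lt with rfl | hx
    · rw [hu'_zero, neg_lt_zero]
      have h1 := Real.Gamma_pos_of_pos (by norm_num : (0:ℝ) < 2 / 3)
      have h2 := Real.Gamma_pos_of_pos (by norm_num : (0:ℝ) < 1 / 3)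
      positivity
    · have h2 : 0 < √(2 * x) := Real.sqrt_pos.2 (by linarith)
      have h3 := hvle _ x h2 (by rw [Real.sq_sqrt (by linarith)])
      have h4 := mul_pos h2 (hu_pos x hx.le)
      linarith
  have hδV : ∀ k, V (-(δ k)) = 0 := fun k => by
    have := hVv (-(δ k))
    rw [hδ_zero] at this
    simpa using this
  obtain ⟨htend, hmain⟩ := airy_main hu1 hu2 hu_pos hvneg hvle hU hV hO hUc hVc hU0 hUu hVv
    hδ_mono hδ_pos hδV hδ_all
  refine ⟨?_, htend, fun z hz => (hvneg z hz).ne, fun z hz => ?_⟩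
  · exact Set.infinite_of_injective_forall_mem hδ_mono.injective fun k => ⟨hδ_pos k, hδ_zero k⟩
  · have h1 := (hmain z hz).mul_left z
    have h2 : ∀ k, z * (1 / (δ k * (δ k + z))) = (1 / δ k) * (z / (δ k + z)) := fun k => by
      rw [div_mul_div_comm, one_mul, mul_one_div]
    simp only [h2] at h1
    refine ⟨h1.summable.abs, ?_⟩
    rw [h1.tsum_eq, hu_ode]
    ring
end
end
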